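/- There exists a constant δ > 0 such that P(N = ∞) ≥ δ, where N = lim_{H→∞} N_H = Σ_{h=1}^∞ Σ_{k∈I_h∩ℤ} Σ_{x=1}^∞ 1_{A_{x,h}^{(k)}}. -/

import Mathlib

open MeasureTheory ProbabilityTheory
open scoped Classical ENNReal

/-!
Let `E_h` be the event that three consecutive sites are the favorite ones, at an inverse upcrossing
time of the first of them, with local time `h` and with an upcrossing number in `I_h`. The `E_h`
occur infinitely often with positive probability by the second moment method: for constants
`c, C > 0` and levels `h < h'`, `P(E_h) ≥ c / h` and `P(E_h ∩ E_{h'}) ≤ P(E_h) C / (h' - h)`.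

* Upper bound. By the strong Markov property it is enough to start a walk from arbitrary local times
  at most `h` and to show that it makes a triple favorite with local time `h' = h + m` with
  probability at most `C / m`. The walk reads its steps from independent stacks of fair bits at the
  sites. By the least action principle of abelian networks, resampling the stacks at two sites of a
  favorite triple at `a` gives a walk for which the first site with local time `h'` still lies in
  the triple at `a`. These events are disjoint for distant `a`. The bits that have to be resampled
  are binomial, so a favorite triple costs a factor `m ^ (-1 / 2)` at each of the two sites.
* Lower bound. The numbers of crossings of the successive edges form, on both sides of the favorite
  triple, a critical geometric branching process, with one immigrant per generation between `0` and
  the triple (Ray–Knight). For one upcrossing number in `I_h`, the exact local times `h` of the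
  triple cost a factor `h ^ (-1 / 2)` at each of its sites, the process on the right dies out below
  `h / 2` with probability of order `h ^ (-1 / 2)`, and the expected number of locations of the
  triple for which the process on the left does so is of order `h ^ (1 / 2)`. The sum over the
  approximately `h ^ (1 / 2) / 2` upcrossing numbers in `I_h` is of order `1 / h`.
-/

namespace FavoriteSites

/-! ### Walks driven by bits, and stacks of bits -/

section Walks

/-- The step of a walk encoded by a bit: `true` is up, `false` is down. -/
def step (c : Bool) : ℤ := if c then 1 else -1

/-- The position at time `t` of the walk from `x` whose step at time `s` is encoded by `b s`. -/
def position (x : ℤ) (b : ℕ → Bool) : ℕ → ℤ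
  | 0 => x
  | t + 1 => position x b t + step (b t)

/-- The number of steps out of `y` in direction `c` before time `t`. -/
def exits (c : Bool) (x : ℤ) (b : ℕ → Bool) (t : ℕ) (y : ℤ) : ℕ :=
  Nat.count (fun s => position x b s = y ∧ b s = c) t

/-- The number of departures from `y` before time `t` (the odometer of abelian networks). -/
def odometer (x : ℤ) (b : ℕ → Bool) (t : ℕ) (y : ℤ) : ℕ :=
  Nat.count (fun s => position x b s = y) t

/-- The number of arrivals at `y` up to time `t`; the start does not count as a visit. -/
def localTime (x : ℤ) (b : ℕ → Bool) (t : ℕ) (y : ℤ) : ℕ :=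
  Nat.count (fun s => position x b (s + 1) = y) t

/-- The number of occurrences of `c` among the first `n` entries of `f`. -/
def tally (c : Bool) (f : ℕ → Bool) (n : ℕ) : ℕ := Nat.count (fun k => f k = c) n

/-- The stack at the site `y` of a configuration of stacks `η`: its `n`-th entry prescribes the
direction of the `n`-th departure from `y`. -/
def stack (η : ℤ × ℕ → Bool) (y : ℤ) : ℕ → Bool := fun n => η (y, n)

/-- Up to time `t`, the departures of the walk from `y` are those prescribed by the stack at
`y`. -/
def FollowsAt (η : ℤ × ℕ → Bool) (x : ℤ) (b : ℕ → Bool) (t : ℕ) (y : ℤ) : Prop :=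
  ∀ s < t, position x b s = y → b s = η (y, odometer x b s y)

/-- Up to time `t`, the walk reads all its steps from the stacks `η`. -/
def Follows (η : ℤ × ℕ → Bool) (x : ℤ) (b : ℕ → Bool) (t : ℕ) : Prop :=
  ∀ y, FollowsAt η x b t y

variable {η η' : ℤ × ℕ → Bool} {x y : ℤ} {b b' : ℕ → Bool} {s t : ℕ} {c : Bool}

theorem step_true : step true = 1 := rfl

theorem step_false : step false = -1 := rfl

theorem tally_true_add_false (f : ℕ → Bool) (n : ℕ) : tally true f n + tally false f n = n := by
  induction n with
  | zero => rfl
  | succ n ih => simp only [tally, Nat.count_succ] at *; cases h : f n <;> simp <;> omega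

theorem tally_mono (c : Bool) (f : ℕ → Bool) : Monotone (tally c f) := Nat.count_monotone _

theorem odometer_mono (x : ℤ) (b : ℕ → Bool) (y : ℤ) : Monotone (odometer x b · y) :=
  Nat.count_monotone _

theorem localTime_mono (x : ℤ) (b : ℕ → Bool) (y : ℤ) : Monotone (localTime x b · y) :=
  Nat.count_monotone _

theorem exits_mono (c : Bool) (x : ℤ) (b : ℕ → Bool) (y : ℤ) : Monotone (exits c x b · y) :=
  Nat.count_monotone _

theorem odometer_succ (x : ℤ) (b : ℕ → Bool) (t : ℕ) (y : ℤ) :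
    odometer x b (t + 1) y = odometer x b t y + if position x b t = y then 1 else 0 :=
  Nat.count_succ _ _

theorem localTime_succ (x : ℤ) (b : ℕ → Bool) (t : ℕ) (y : ℤ) :
    localTime x b (t + 1) y = localTime x b t y + if position x b (t + 1) = y then 1 else 0 :=
  Nat.count_succ _ _

theorem exits_succ (c : Bool) (x : ℤ) (b : ℕ → Bool) (t : ℕ) (y : ℤ) :
    exits c x b (t + 1) y =
      exits c x b t y + if position x b t = y ∧ b t = c then 1 else 0 := by
  unfold exits
  rw [Nat.count_succ]

theorem tally_succ (c : Bool) (f : ℕ → Bool) (n : ℕ) :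
    tally c f (n + 1) = tally c f n + if f n = c then 1 else 0 :=
  Nat.count_succ _ _

theorem odometer_add_ite_position (x : ℤ) (b : ℕ → Bool) (t : ℕ) (y : ℤ) :
    odometer x b t y + (if position x b t = y then 1 else 0) =
      localTime x b t y + (if x = y then 1 else 0) := by
  induction t with
  | zero => rfl
  | succ t ih => rw [odometer_succ, localTime_succ]; omega

theorem exits_true_add_false (x : ℤ) (b : ℕ → Bool) (t : ℕ) (y : ℤ) :
    exits true x b t y + exits false x b t y = odometer x b t y := by
  induction t with
  | zero => rfl
  | succ t ih =>
    simp only [odometer_succ, exits_succ]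
    cases h : b t <;> by_cases h' : position x b t = y <;> simp [h'] <;> omega

/-- The edge from `y` to `y + 1` is crossed alternately in both directions. -/
theorem exits_true_add_ite_start (x : ℤ) (b : ℕ → Bool) (t : ℕ) (y : ℤ) :
    exits true x b t y + (if y + 1 ≤ x then 1 else 0) =
      exits false x b t (y + 1) + (if y + 1 ≤ position x b t then 1 else 0) := by
  induction t with
  | zero => rfl
  | succ t ih =>
    simp only [exits_succ, position]
    rcases Bool.eq_false_or_eq_true (b t) with h | h
    · simp only [h, step_true]; split_ifs at * <;> simp_all <;> omega
    · simp only [h, step_false]; split_ifs at * <;> simp_all <;> omega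

theorem localTime_eq_exits (x : ℤ) (b : ℕ → Bool) (t : ℕ) (y : ℤ) :
    localTime x b t y = exits true x b t (y - 1) + exits false x b t (y + 1) := by
  induction t with
  | zero => rfl
  | succ t ih =>
    simp only [localTime_succ, exits_succ, position]
    rcases Bool.eq_false_or_eq_true (b t) with h | h
    · simp only [h, step_true]; split_ifs at * <;> simp_all <;> omega
    · simp only [h, step_false]; split_ifs at * <;> simp_all <;> omega

theorem FollowsAt.mono (h : FollowsAt η x b t y) (hs : s ≤ t) : FollowsAt η x b s y :=
  fun r hr => h r (hr.trans_le hs)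

theorem Follows.mono (h : Follows η x b t) (hs : s ≤ t) : Follows η x b s :=
  fun y => (h y).mono hs

theorem FollowsAt.exits_eq (h : FollowsAt η x b t y) :
    exits c x b t y = tally c (stack η y) (odometer x b t y) := by
  induction t with
  | zero => rfl
  | succ t ih =>
    rw [exits_succ, odometer_succ, ih (h.mono t.le_succ)]
    by_cases hy : position x b t = y
    · simp only [hy, true_and, if_true, tally_succ, stack, ← h t t.lt_succ_self hy]
    · simp [hy]

theorem Follows.exits_eq (h : Follows η x b t) (y : ℤ) :
    exits c x b t y = tally c (stack η y) (odometer x b t y) :=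
  (h y).exits_eq

/-- The least action principle: a function `N` that is stable on `Y` and dominates the final
odometer off `Y` dominates the odometer everywhere. -/
theorem Follows.odometer_le_of_stable (h : Follows η x b t) {N : ℤ → ℕ} {Y : Set ℤ}
    (hY : ∀ y ∈ Y, (if x = y then 1 else 0) + tally true (stack η (y - 1)) (N (y - 1)) +
      tally false (stack η (y + 1)) (N (y + 1)) ≤ N y)
    (hN : ∀ z ∉ Y, odometer x b t z ≤ N z) (hs : s ≤ t) :
    (∀ z, odometer x b s z ≤ N z) ∧
      ∀ y ∈ Y, odometer x b s y + (if position x b s = y then 1 else 0) ≤ N y := by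
  induction s with
  | zero =>
    refine ⟨fun z => Nat.zero_le _, fun y hy => ?_⟩
    have hstart : odometer x b 0 y + (if position x b 0 = y then 1 else 0) =
        if x = y then 1 else 0 := Nat.zero_add _
    have := hY y hy
    omega
  | succ s ih =>
    obtain ⟨-, hlt⟩ := ih (by omega)
    have hle : ∀ z, odometer x b (s + 1) z ≤ N z := fun z => by
      by_cases hz : z ∈ Y
      · simpa only [odometer_succ] using hlt z hz
      · exact (odometer_mono x b z hs).trans (hN z hz)
    refine ⟨hle, fun y hy => ?_⟩
    rw [odometer_add_ite_position, localTime_eq_exits, (h.mono hs).exits_eq,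
      (h.mono hs).exits_eq]
    have := hY y hy
    have := tally_mono true (stack η (y - 1)) (hle (y - 1))
    have := tally_mono false (stack η (y + 1)) (hle (y + 1))
    omega

/-- Position and odometer at time `t` of the walk that reads its steps from the stacks `η`. -/
def stackState (η : ℤ × ℕ → Bool) (x : ℤ) : ℕ → ℤ × (ℤ → ℕ)
  | 0 => (x, fun _ => 0)
  | t + 1 =>
    let (z, m) := stackState η x t
    (z + step (η (z, m z)), fun y => m y + if z = y then 1 else 0)

/-- The bits of the walk from `x` that reads all its steps from the stacks `η`. -/
def stackWalk (η : ℤ × ℕ → Bool) (x : ℤ) (t : ℕ) : Bool :=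
  η ((stackState η x t).1, (stackState η x t).2 (stackState η x t).1)

theorem stackState_eq (η : ℤ × ℕ → Bool) (x : ℤ) (t : ℕ) :
    stackState η x t = (position x (stackWalk η x) t, odometer x (stackWalk η x) t) := by
  induction t with
  | zero => rfl
  | succ t ih =>
    have hbit : stackWalk η x t = η (position x (stackWalk η x) t,
        odometer x (stackWalk η x) t (position x (stackWalk η x) t)) := by
      conv_lhs => rw [stackWalk, ih]
    refine Prod.ext ?_ (funext fun y => ?_)
    · simp only [stackState, ih, position, ← hbit]
    · simp only [stackState, ih, odometer_succ]

theorem follows_stackWalk (η : ℤ × ℕ → Bool) (x : ℤ) (t : ℕ) :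
    Follows η x (stackWalk η x) t := by
  rintro y s - rfl
  conv_lhs => rw [stackWalk, stackState_eq]

theorem position_congr (h : ∀ s < t, b s = b' s) : position x b t = position x b' t := by
  induction t with
  | zero => rfl
  | succ t ih =>
    rw [position, position, ih fun s hs => h s (hs.trans t.lt_succ_self), h t t.lt_succ_self]

theorem odometer_congr (h : ∀ s < t, b s = b' s) : odometer x b t y = odometer x b' t y := by
  induction t with
  | zero => rfl
  | succ t ih =>
    have h' : ∀ s < t, b s = b' s := fun s hs => h s (hs.trans t.lt_succ_self)
    rw [odometer_succ, odometer_succ, ih h', position_congr h']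

theorem exits_congr (h : ∀ s < t, b s = b' s) : exits c x b t y = exits c x b' t y := by
  induction t with
  | zero => rfl
  | succ t ih =>
    have h' : ∀ s < t, b s = b' s := fun s hs => h s (hs.trans t.lt_succ_self)
    rw [exits_succ, exits_succ, ih h', position_congr h', h t t.lt_succ_self]

theorem localTime_congr (h : ∀ s < t, b s = b' s) : localTime x b t y = localTime x b' t y := by
  rw [localTime_eq_exits, localTime_eq_exits, exits_congr h, exits_congr h]

theorem tally_congr {f f' : ℕ → Bool} {n : ℕ} (h : ∀ k < n, f k = f' k) :
    tally c f n = tally c f' n := by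
  induction n with
  | zero => rfl
  | succ n ih =>
    rw [tally_succ, tally_succ, ih fun k hk => h k (hk.trans n.lt_succ_self), h n n.lt_succ_self]

theorem Follows.eq_stackWalk (h : Follows η x b t) (hs : s < t) : b s = stackWalk η x s := by
  induction s using Nat.strong_induction_on with
  | _ s ih =>
    have hpast : ∀ r < s, b r = stackWalk η x r := fun r hr => ih r hr (hr.trans hs)
    rw [h _ s hs rfl, follows_stackWalk η x (s + 1) _ s s.lt_succ_self rfl,
      position_congr hpast, odometer_congr hpast]

theorem FollowsAt.congr (h : FollowsAt η x b t y) (hb : ∀ s < t, b s = b' s)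
    (hη : ∀ s < t, position x b s = y → η (y, odometer x b s y) = η' (y, odometer x b s y)) :
    FollowsAt η' x b' t y := by
  intro s hs hy
  have hpast : ∀ r < s, b r = b' r := fun r hr => hb r (hr.trans hs)
  rw [← position_congr hpast] at hy
  rw [← hb s hs, h s hs hy, hη s hs hy, odometer_congr hpast]

end Walks

/-! ### Independent fair bits -/

section FairBits

/-- The law of a fair bit. -/
noncomputable def fairCoin : Measure Bool := (PMF.uniformOfFintype Bool).toMeasure

instance : IsProbabilityMeasure fairCoin := inferInstanceAs (IsProbabilityMeasure (PMF.toMeasure _))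

/-- The law of a family of independent fair bits. -/
noncomputable def fairBits (ι : Type*) : Measure (ι → Bool) := Measure.infinitePi fun _ => fairCoin

instance (ι : Type*) : IsProbabilityMeasure (fairBits ι) :=
  inferInstanceAs (IsProbabilityMeasure (Measure.infinitePi _))

/-- The event that the bits with indices in `s` are those of `w`. -/
def bitCylinder {ι : Type*} (s : Finset ι) (w : ι → Bool) : Set (ι → Bool) :=
  {η | ∀ i ∈ s, η i = w i}

variable {ι κ : Type*} {S T : Set ι} {E F : Set (ι → Bool)}

theorem fairCoin_singleton (c : Bool) : fairCoin {c} = 2⁻¹ := by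
  simp [fairCoin]

theorem bitCylinder_eq_pi (s : Finset ι) (w : ι → Bool) :
    bitCylinder s w = (s : Set ι).pi fun i => {w i} := by
  ext η; simp [bitCylinder, Set.mem_pi]

theorem measurableSet_bitCylinder (s : Finset ι) (w : ι → Bool) :
    MeasurableSet (bitCylinder s w) := by
  rw [bitCylinder_eq_pi]
  exact MeasurableSet.pi s.countable_toSet fun i _ => measurableSet_singleton _

theorem fairBits_bitCylinder (s : Finset ι) (w : ι → Bool) :
    fairBits ι (bitCylinder s w) = 2⁻¹ ^ s.card := by
  rw [bitCylinder_eq_pi, fairBits, Measure.infinitePi_pi _ fun i _ => measurableSet_singleton _]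
  simp [fairCoin_singleton]

theorem fairBits_real_bitCylinder (s : Finset ι) (w : ι → Bool) :
    (fairBits ι).real (bitCylinder s w) = (1 / 2 : ℝ) ^ s.card := by
  simp [Measure.real, fairBits_bitCylinder]

theorem fairBits_real_eval (i : ι) (c : Bool) : (fairBits ι).real {f | f i = c} = 1 / 2 := by
  have : {f : ι → Bool | f i = c} = bitCylinder {i} fun _ => c := by ext f; simp [bitCylinder]
  rw [this, fairBits_real_bitCylinder, Finset.card_singleton, pow_one]

theorem dependsOn_mem_of_imp (h : ∀ η η' : ι → Bool, (∀ i ∈ S, η i = η' i) → η ∈ E → η' ∈ E) :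
    DependsOn (· ∈ E) S :=
  fun η η' hη => propext ⟨h η η' hη, h η' η fun i hi => (hη i hi).symm⟩

theorem dependsOn_mem_inter (hE : DependsOn (· ∈ E) S) (hF : DependsOn (· ∈ F) S) :
    DependsOn (· ∈ E ∩ F) S :=
  fun _ _ h => congrArg₂ And (hE h) (hF h)

theorem measurableSet_of_dependsOn_finite (hS : S.Finite) (hE : DependsOn (· ∈ E) S) :
    MeasurableSet E := by
  obtain ⟨g, hg⟩ := dependsOn_iff_exists_comp.1 hE
  have : Finite S := hS
  have hpre : E = S.domRestrict ⁻¹' {u | g u} := Set.ext fun η => iff_of_eq (congrFun hg η)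
  rw [hpre]
  exact measurable_pi_lambda _ (fun i => measurable_pi_apply _) (Set.toFinite _).measurableSet

theorem measurableSet_iSup_comap_eval_of_dependsOn (hE : DependsOn (· ∈ E) S)
    (mE : MeasurableSet E) :
    MeasurableSet[⨆ i ∈ S, MeasurableSpace.comap (fun η : ι → Bool => η i) inferInstance] E := by
  let g : (ι → Bool) → ι → Bool := fun η i => if i ∈ S then η i else false
  have hpre : E = g ⁻¹' E := Set.ext fun η => iff_of_eq (hE fun i hi => by simp [g, hi])
  rw [hpre]
  refine @measurable_pi_lambda _ _ _ (_) _ g (fun i => ?_) E mE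
  by_cases hi : i ∈ S
  · simp only [g, hi, if_true]
    exact Measurable.mono (comap_measurable _) (le_iSup₂_of_le i hi le_rfl) le_rfl
  · simp only [g, hi, if_false]
    exact measurable_const

theorem fairBits_real_inter (hST : Disjoint S T) (hE : DependsOn (· ∈ E) S)
    (hF : DependsOn (· ∈ F) T) (mE : MeasurableSet E) (mF : MeasurableSet F) :
    (fairBits ι).real (E ∩ F) = (fairBits ι).real E * (fairBits ι).real F := by
  have hind : iIndepFun (fun i (η : ι → Bool) => η i) (fairBits ι) :=
    iIndepFun_infinitePi fun _ => measurable_id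
  have := (indep_iSup_of_disjoint (fun i => (measurable_pi_apply i).comap_le) hind.iIndep hST)
  rw [Measure.real, (Indep_iff _ _ _).1 this E F
    (measurableSet_iSup_comap_eval_of_dependsOn hE mE)
    (measurableSet_iSup_comap_eval_of_dependsOn hF mF), ENNReal.toReal_mul]
  rfl

theorem measurePreserving_comp_injective {f : κ → ι} (hf : Function.Injective f) :
    MeasurePreserving (fun (η : ι → Bool) k => η (f k)) (fairBits ι) (fairBits κ) :=
  ⟨measurable_pi_lambda _ fun _ => measurable_pi_apply _,
    Measure.map_infinitePi_infinitePi_of_inj hf⟩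

theorem fairCoin_map_not : fairCoin.map not = fairCoin := by
  refine Measure.ext_of_singleton fun c => ?_
  rw [Measure.map_apply (measurable_of_finite _) (measurableSet_singleton _), fairCoin_singleton]
  have : not ⁻¹' {c} = {!c} := by ext d; cases c <;> cases d <;> simp
  rw [this, fairCoin_singleton]

theorem measurePreserving_not :
    MeasurePreserving (fun (η : ι → Bool) k => !(η k)) (fairBits ι) (fairBits ι) := by
  have hnot : Measurable not := measurable_of_finite _
  refine ⟨measurable_pi_lambda _ fun k => hnot.comp (measurable_pi_apply k), ?_⟩
  rw [fairBits, Measure.infinitePi_map_pi _ fun _ => hnot, fairCoin_map_not]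

theorem fairBits_real_not_preimage (mE : MeasurableSet E) :
    (fairBits ι).real {η | (fun k => !(η k)) ∈ E} = (fairBits ι).real E :=
  measurePreserving_not.measureReal_preimage mE.nullMeasurableSet

theorem eq_fairBits_of_forall_bitCylinder (ν : Measure (ℕ → Bool))
    (h : ∀ n w, ν (bitCylinder (Finset.range n) w) = 2⁻¹ ^ n) : ν = fairBits ℕ := by
  refine Measure.eq_infinitePi _ fun s t ht => ?_
  obtain ⟨n, hn⟩ := s.exists_nat_subset_range
  let r : (ℕ → Bool) → (Fin n → Bool) := fun b i => b i
  have hr : Measurable r := measurable_pi_lambda _ fun i => measurable_pi_apply _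
  have hmap : ν.map r = (fairBits ℕ).map r := by
    refine Measure.ext_of_singleton fun u => ?_
    have hu : r ⁻¹' {u} =
        bitCylinder (Finset.range n) fun i => if hi : i < n then u ⟨i, hi⟩ else false := by
      ext b
      simp only [Set.mem_preimage, Set.mem_singleton_iff, bitCylinder, Set.mem_ofPred_eq,
        Finset.mem_range]
      constructor
      · rintro rfl i hi; simp [hi, r]
      · intro hb; ext i; simpa [r] using hb i i.2
    rw [Measure.map_apply hr (measurableSet_singleton _),
      Measure.map_apply hr (measurableSet_singleton _), hu, h, fairBits_bitCylinder,
      Finset.card_range]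
  have hpre : (s : Set ℕ).pi t = r ⁻¹' {u | ∀ i : Fin n, (i : ℕ) ∈ s → u i ∈ t i} := by
    ext b
    exact ⟨fun hb i hi => hb i hi, fun hb i hi => hb ⟨i, Finset.mem_range.1 (hn hi)⟩ hi⟩
  rw [← Measure.infinitePi_pi _ fun i _ => ht i, ← fairBits, hpre,
    ← Measure.map_apply hr (Set.toFinite _).measurableSet, hmap,
    Measure.map_apply hr (Set.toFinite _).measurableSet]

/-- The Markov property at a deterministic time, with the past prescribed. -/
theorem fairBits_real_prefix_inter_shift (t : ℕ) (w : ℕ → Bool) {F : Set (ℕ → Bool)}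
    (mF : MeasurableSet F) :
    (fairBits ℕ).real (bitCylinder (Finset.range t) w ∩ {b | (fun i => b (t + i)) ∈ F}) =
      (fairBits ℕ).real (bitCylinder (Finset.range t) w) * (fairBits ℕ).real F := by
  have hshift := measurePreserving_comp_injective (add_right_injective t)
  rw [← hshift.measureReal_preimage mF.nullMeasurableSet]
  refine fairBits_real_inter (Set.Iio_disjoint_Ici le_rfl : Disjoint (Set.Iio t) (Set.Ici t))
    ?_ ?_ (measurableSet_bitCylinder _ _) (hshift.measurable mF)
  · exact dependsOn_mem_of_imp fun b b' h hb i hi =>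
      (h i (Finset.mem_range.1 hi)).symm.trans (hb i hi)
  · intro b b' h
    have : (fun i => b (t + i)) = fun i => b' (t + i) := funext fun i => h _ (Nat.le_add_right t i)
    exact congrArg (· ∈ F) this

end FairBits

/-! ### The walk reading its steps from random stacks is a simple random walk -/

section StackWalk

variable {x : ℤ} {b : ℕ → Bool}

/-- The entry of the stacks read by the walk at time `s`. -/
def stackIndex (x : ℤ) (b : ℕ → Bool) (s : ℕ) : ℤ × ℕ :=
  (position x b s, odometer x b s (position x b s))

theorem stackIndex_injective (x : ℤ) (b : ℕ → Bool) : Function.Injective (stackIndex x b) := by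
  have hne : ∀ s s', s < s' → stackIndex x b s ≠ stackIndex x b s' := fun s s' hs h => by
    simp only [stackIndex, Prod.mk.injEq] at h
    have hmono := odometer_mono x b (position x b s) (Nat.succ_le_of_lt hs)
    simp only [Nat.succ_eq_add_one, odometer_succ, if_true] at hmono
    rw [← h.1] at h
    omega
  intro s s' h
  by_contra hs
  rcases Nat.lt_or_gt_of_ne hs with hs | hs
  exacts [hne _ _ hs h, hne _ _ hs h.symm]

theorem setOf_follows_eq_bitCylinder (x : ℤ) (b : ℕ → Bool) (t : ℕ) :
    {η | Follows η x b t} = bitCylinder ((Finset.range t).image (stackIndex x b))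
      (Function.extend (stackIndex x b) b fun _ => false) := by
  ext η
  simp only [Set.mem_ofPred_eq, bitCylinder, Finset.mem_image, Finset.mem_range]
  constructor
  · rintro h i ⟨s, hs, rfl⟩
    rw [(stackIndex_injective x b).extend_apply, h _ s hs rfl, stackIndex]
  · rintro h y s hs rfl
    rw [← (stackIndex_injective x b).extend_apply b (fun _ => false) s, ← h _ ⟨s, hs, rfl⟩,
      stackIndex]

theorem measurableSet_follows (x : ℤ) (b : ℕ → Bool) (t : ℕ) :
    MeasurableSet {η | Follows η x b t} := by
  rw [setOf_follows_eq_bitCylinder]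
  exact measurableSet_bitCylinder _ _

theorem fairBits_follows (x : ℤ) (b : ℕ → Bool) (t : ℕ) :
    fairBits (ℤ × ℕ) {η | Follows η x b t} = 2⁻¹ ^ t := by
  rw [setOf_follows_eq_bitCylinder, fairBits_bitCylinder,
    Finset.card_image_of_injective _ (stackIndex_injective x b), Finset.card_range]

theorem follows_iff_stackWalk_mem_bitCylinder {η : ℤ × ℕ → Bool} {n : ℕ} :
    Follows η x b n ↔ stackWalk η x ∈ bitCylinder (Finset.range n) b := by
  constructor
  · exact fun h s hs => (h.eq_stackWalk (Finset.mem_range.1 hs)).symm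
  · exact fun h y => (follows_stackWalk η x n y).congr
      (fun s hs => h s (Finset.mem_range.2 hs)) fun s _ _ => rfl

theorem measurable_stackWalk (x : ℤ) : Measurable fun η => stackWalk η x := by
  refine measurable_pi_lambda _ fun t => measurable_to_countable' fun c => ?_
  have : (fun η => stackWalk η x t) ⁻¹' {c} =
      ⋃ u : {u : Fin (t + 1) → Bool // u (Fin.last t) = c},
        {η | Follows η x (fun i => if hi : i < t + 1 then u.1 ⟨i, hi⟩ else false) (t + 1)} := by
    ext η
    simp only [Set.mem_preimage, Set.mem_singleton_iff, Set.mem_iUnion, Set.mem_ofPred_eq]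
    constructor
    · intro h
      refine ⟨⟨fun i => stackWalk η x i, h⟩, follows_iff_stackWalk_mem_bitCylinder.2 fun s hs => ?_⟩
      simp [Finset.mem_range.1 hs]
    · rintro ⟨⟨u, rfl⟩, hu⟩
      simp [← hu.eq_stackWalk t.lt_succ_self, Fin.last]
  rw [this]
  exact MeasurableSet.iUnion fun u => measurableSet_follows _ _ _

theorem measurePreserving_stackWalk (x : ℤ) :
    MeasurePreserving (fun η => stackWalk η x) (fairBits (ℤ × ℕ)) (fairBits ℕ) := by
  refine ⟨measurable_stackWalk x, eq_fairBits_of_forall_bitCylinder _ fun n w => ?_⟩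
  rw [Measure.map_apply (measurable_stackWalk x) (measurableSet_bitCylinder _ _),
    ← fairBits_follows x w n]
  exact congrArg _ (Set.ext fun η => follows_iff_stackWalk_mem_bitCylinder.symm)

theorem measurePreserving_stack (y : ℤ) :
    MeasurePreserving (fun η => stack η y) (fairBits (ℤ × ℕ)) (fairBits ℕ) :=
  measurePreserving_comp_injective (Prod.mk_right_injective y)

theorem dependsOn_stack_mem (y : ℤ) (E : Set (ℕ → Bool)) :
    DependsOn (· ∈ {η : ℤ × ℕ → Bool | stack η y ∈ E}) {p | p.1 = y} := fun η η' h => by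
  have : stack η y = stack η' y := funext fun n => h (y, n) rfl
  simp only [Set.mem_ofPred_eq, this]

end StackWalk

/-! ### The number of heads -/

section Tally

/-- The probability of `i` heads in `n` tosses of a fair coin. -/
noncomputable def fairBinomial (n i : ℕ) : ℝ := n.choose i / 2 ^ n

theorem fairBinomial_nonneg (n i : ℕ) : 0 ≤ fairBinomial n i := by
  unfold fairBinomial; positivity

theorem fairBinomial_succ_succ (n i : ℕ) :
    fairBinomial (n + 1) (i + 1) = (fairBinomial n i + fairBinomial n (i + 1)) / 2 := by
  simp only [fairBinomial, Nat.choose_succ_succ, pow_succ]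
  push_cast
  ring

theorem dependsOn_tally_eq (c : Bool) (n i : ℕ) :
    DependsOn (· ∈ {f : ℕ → Bool | tally c f n = i}) (Set.Iio n) :=
  fun _ _ h => congrArg (· = i) (tally_congr h)

theorem measurableSet_of_dependsOn_Iio {n : ℕ} {E : Set (ℕ → Bool)}
    (hE : DependsOn (· ∈ E) (Set.Iio n)) : MeasurableSet E :=
  measurableSet_of_dependsOn_finite (Set.finite_Iio n) hE

theorem measurableSet_eval_eq (n : ℕ) (c : Bool) : MeasurableSet {f : ℕ → Bool | f n = c} :=
  measurableSet_eq_fun (measurable_pi_apply n) measurable_const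

theorem fairBits_real_inter_eval {n : ℕ} (c : Bool) {E : Set (ℕ → Bool)}
    (hE : DependsOn (· ∈ E) (Set.Iio n)) :
    (fairBits ℕ).real (E ∩ {f | f n = c}) = (fairBits ℕ).real E / 2 := by
  have hn : DependsOn (· ∈ {f : ℕ → Bool | f n = c}) {n} := fun _ _ h => congrArg (· = c) (h n rfl)
  rw [fairBits_real_inter (by simp) hE hn (measurableSet_of_dependsOn_Iio hE)
    (measurableSet_eval_eq n c), fairBits_real_eval]
  ring

theorem fairBits_real_tally_eq (c : Bool) (n i : ℕ) :
    (fairBits ℕ).real {f | tally c f n = i} = fairBinomial n i := by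
  induction n generalizing i with
  | zero => cases i <;> simp [tally, fairBinomial]
  | succ n ih =>
    cases i with
    | zero =>
      have : {f : ℕ → Bool | tally c f (n + 1) = 0} = {f | tally c f n = 0} ∩ {f | f n = !c} := by
        ext f
        simp only [tally_succ, Set.mem_ofPred_eq, Set.mem_inter_iff]
        cases f n <;> cases c <;> simp
      rw [this, fairBits_real_inter_eval _ (dependsOn_tally_eq c n 0), ih]
      simp [fairBinomial, pow_succ]
      ring
    | succ i =>
      have : {f : ℕ → Bool | tally c f (n + 1) = i + 1} =
          ({f | tally c f n = i} ∩ {f | f n = c}) ∪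
            ({f | tally c f n = i + 1} ∩ {f | f n = !c}) := by
        ext f
        simp only [tally_succ, Set.mem_ofPred_eq, Set.mem_inter_iff, Set.mem_union]
        cases f n <;> cases c <;> simp
      have hdisj : Disjoint ({f : ℕ → Bool | tally c f n = i} ∩ {f | f n = c})
          ({f | tally c f n = i + 1} ∩ {f | f n = !c}) := by
        refine Set.disjoint_left.2 fun f h h' => ?_
        have := h.1.symm.trans h'.1
        omega
      rw [this, measureReal_union hdisj ((measurableSet_of_dependsOn_Iio
        (dependsOn_tally_eq c n _)).inter (measurableSet_eval_eq n _)),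
        fairBits_real_inter_eval _ (dependsOn_tally_eq c n _),
        fairBits_real_inter_eval _ (dependsOn_tally_eq c n _), ih, ih, fairBinomial_succ_succ]
      ring

end Tally

/-! ### Favorite triples, and the first site to reach a level -/

section Levels

/-- Three consecutive sites. -/
def triple (a : ℤ) : Set ℤ := {a, a + 1, a + 2}

/-- Starting from local times `l`, at time `t` the walk is in the triple at `a`, whose sites have
local time `h` while all other sites have local time less than `h`. -/
def IsFavoriteTriple (x : ℤ) (l : ℤ → ℕ) (h : ℕ) (b : ℕ → Bool) (t : ℕ) (a : ℤ) : Prop :=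
  position x b t ∈ triple a ∧ (∀ y ∈ triple a, l y + localTime x b t y = h) ∧
    ∀ y ∉ triple a, l y + localTime x b t y < h

/-- Starting from local times `l`, the site `y` is the first one whose local time reaches `h`. -/
def ReachesFirst (x : ℤ) (l : ℤ → ℕ) (h : ℕ) (b : ℕ → Bool) (y : ℤ) : Prop :=
  ∃ t, (∀ s < t, ∀ z, l z + localTime x b s z < h) ∧ h ≤ l y + localTime x b t y

variable {η : ℤ × ℕ → Bool} {x a y y' : ℤ} {l : ℤ → ℕ} {h : ℕ} {b w : ℕ → Bool} {s t : ℕ}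

theorem mem_triple : y ∈ triple a ↔ y = a ∨ y = a + 1 ∨ y = a + 2 := Iff.rfl

theorem position_eq_of_reaches (hl : ∀ z, l z < h)
    (hbelow : ∀ s < t, ∀ z, l z + localTime x b s z < h) (hy : h ≤ l y + localTime x b t y) :
    position x b t = y ∧ ∀ z ≠ y, l z + localTime x b t z < h := by
  cases t with
  | zero => exact absurd hy (hl y).not_ge
  | succ t =>
    have hprev := hbelow t t.lt_succ_self
    have hpos : position x b (t + 1) = y := by
      by_contra hne
      rw [localTime_succ, if_neg hne] at hy
      exact absurd hy (hprev y).not_ge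
    refine ⟨hpos, fun z hz => ?_⟩
    rw [localTime_succ, if_neg (hpos.trans_ne hz.symm)]
    exact hprev z

theorem ReachesFirst.unique (hl : ∀ z, l z < h) (hy : ReachesFirst x l h b y)
    (hy' : ReachesFirst x l h b y') : y = y' := by
  obtain ⟨t, hbelow, hreach⟩ := hy
  obtain ⟨t', hbelow', hreach'⟩ := hy'
  obtain rfl : t = t' := by
    rcases Nat.lt_trichotomy t t' with htt | htt | htt
    · exact absurd hreach (hbelow' t htt y).not_ge
    · exact htt
    · exact absurd hreach' (hbelow t' htt y').not_ge
  rw [← (position_eq_of_reaches hl hbelow hreach).1,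
    ← (position_eq_of_reaches hl hbelow' hreach').1]

theorem odometer_eq_zero_of_notMem {z : ℤ} (hz : z ∉ (Finset.range t).image (position x b)) :
    odometer x b t z = 0 := by
  simp only [Finset.mem_image, Finset.mem_range, not_exists, not_and] at hz
  rw [odometer, Nat.count_eq_card_filter_range, Finset.card_eq_zero, Finset.filter_eq_empty_iff]
  exact fun s hs => hz s (Finset.mem_range.1 hs)

theorem sum_odometer {F : Finset ℤ} (hF : ∀ s < t, position x b s ∈ F) :
    ∑ z ∈ F, odometer x b t z = t := by
  simp only [odometer, Nat.count_eq_card_filter_range]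
  rw [← Finset.card_eq_sum_card_fiberwise fun s hs => hF s (Finset.mem_range.1 hs),
    Finset.card_range]

theorem exists_lt_odometer {N : ℤ → ℕ} (hN : N.support.Finite) : ∃ t z, N z < odometer x b t z := by
  by_contra! hle
  have hmem : ∀ s, position x b s ∈ hN.toFinset := fun s => by
    have := hle (s + 1) (position x b s)
    rw [odometer_succ, if_pos rfl] at this
    simp only [Set.Finite.mem_toFinset, Function.mem_support]
    omega
  have hsum := sum_odometer (t := ∑ z ∈ hN.toFinset, N z + 1) fun s _ => hmem s
  have := hsum.symm.trans_le (Finset.sum_le_sum fun z _ => hle _ z)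
  omega

/-- The least action principle keeps the odometer below `N` as long as `a` has not reached the
level `h`; hence some site of `R` must be the first one to reach it. -/
theorem exists_reachesFirst_of_stable (hl : ∀ z, l z < h) (hb : ∀ t, Follows η x b t)
    {N : ℤ → ℕ} {R : Set ℤ} (hfin : N.support.Finite) (haR : a ∈ R)
    (hstable : ∀ y ≠ a, (if x = y then 1 else 0) + tally true (stack η (y - 1)) (N (y - 1)) +
      tally false (stack η (y + 1)) (N (y + 1)) ≤ N y)
    (ha : h + (if x = a then 1 else 0) ≤ l a + N a + 1)
    (hR : ∀ y ∉ R, l y + N y < h + (if x = y then 1 else 0)) :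
    ∃ y ∈ R, ReachesFirst x l h b y := by
  have hle : ∀ T, l a + localTime x b T a < h → (∀ z, odometer x b T z ≤ N z) ∧
      ∀ y ≠ a, odometer x b T y + (if position x b T = y then 1 else 0) ≤ N y := fun T hT => by
    refine (hb T).odometer_le_of_stable (Y := {a}ᶜ) hstable (fun z hz => ?_) le_rfl
    obtain rfl : z = a := by simpa using hz
    have := odometer_add_ite_position x b T z
    omega
  have hreach : ∃ T z, h ≤ l z + localTime x b T z := by
    by_contra! hbelow
    obtain ⟨T, z, hz⟩ := exists_lt_odometer (x := x) (b := b) hfin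
    exact absurd ((hle T (hbelow T a)).1 z) hz.not_ge
  have hbelow : ∀ s < Nat.find hreach, ∀ z, l z + localTime x b s z < h := fun s hs => by
    simpa using Nat.find_min hreach hs
  obtain ⟨y, hy⟩ := Nat.find_spec hreach
  refine ⟨y, by_contra fun hyR => ?_, _, hbelow, hy⟩
  have hya : y ≠ a := fun h => hyR (h ▸ haR)
  have hNy := (hle _ ((position_eq_of_reaches hl hbelow hy).2 a hya.symm)).2 y hya
  rw [odometer_add_ite_position] at hNy
  have := hR y hyR
  omega

theorem exists_count_eq_of_lt {p : ℕ → Prop} [DecidablePred p] {u : ℕ} (hu : u < t.count p) :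
    ∃ s < t, p s ∧ s.count p = u :=
  have hfin (hf : (Set.ofPred p).Finite) : u < hf.toFinset.card :=
    hu.trans_le (Nat.count_le_card hf t)
  ⟨Nat.nth p u, Nat.nth_lt_of_lt_count hu, Nat.nth_mem u hfin, Nat.count_nth hfin⟩

theorem exists_exits_eq {c : Bool} {R : Set ℤ} {u : ℕ} (hy : y ∈ R) (hR : position x w t ∈ R)
    (hu : u ≤ exits c x w t y) : ∃ s ≤ t, position x w s ∈ R ∧ exits c x w s y = u := by
  rcases hu.eq_or_lt with rfl | hu
  · exact ⟨t, le_rfl, hR, rfl⟩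
  · obtain ⟨s, hst, ⟨rfl, -⟩, hs⟩ := exists_count_eq_of_lt hu
    exact ⟨s, hst.le, hy, hs⟩

theorem exists_tally_eq {c : Bool} {f : ℕ → Bool} {n q : ℕ} (hq : q ≤ tally c f n) :
    ∃ k ≤ n, tally c f k = q := by
  rcases hq.eq_or_lt with rfl | hq
  · exact ⟨n, le_rfl, rfl⟩
  · obtain ⟨k, hkn, -, hk⟩ := exists_count_eq_of_lt hq
    exact ⟨k, hkn.le, hk⟩

/-- The odometer of `w` at time `t` up to `a`, its odometer at time `s` beyond `a + 2`, and
prescribed values `m`, `n` at `a + 1`, `a + 2`: the function to which the least action principle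
is applied. -/
def splicedOdometer (x : ℤ) (w : ℕ → Bool) (s t : ℕ) (a : ℤ) (m n : ℕ) (y : ℤ) : ℕ :=
  if y ≤ a then odometer x w t y
  else if y = a + 1 then m
  else if y = a + 2 then n
  else odometer x w s y

theorem odometer_eq_inflow (hy : position x w t ≠ y) :
    (if x = y then 1 else 0) + exits true x w t (y - 1) + exits false x w t (y + 1) =
      odometer x w t y := by
  have := odometer_add_ite_position x w t y
  rw [if_neg hy, localTime_eq_exits] at this
  omega

section Spliced

variable {m n q : ℕ}

theorem splicedOdometer_of_le (hy : y ≤ a) :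
    splicedOdometer x w s t a m n y = odometer x w t y := if_pos hy

theorem splicedOdometer_add_one : splicedOdometer x w s t a m n (a + 1) = m := by
  simp [splicedOdometer]

theorem splicedOdometer_add_two : splicedOdometer x w s t a m n (a + 2) = n := by
  simp [splicedOdometer]

theorem splicedOdometer_of_ge (hy : a + 3 ≤ y) :
    splicedOdometer x w s t a m n y = odometer x w s y := by
  rw [splicedOdometer, if_neg (by omega), if_neg (by omega), if_neg (by omega)]

theorem finite_support_splicedOdometer : (splicedOdometer x w s t a m n).support.Finite := by
  refine (((Finset.range t).image (position x w) ∪ (Finset.range s).image (position x w) ∪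
    {a + 1, a + 2}).finite_toSet).subset fun y hy => ?_
  contrapose! hy
  simp only [Finset.coe_union, Set.mem_union, Finset.mem_coe, not_or, Finset.mem_insert,
    Finset.mem_singleton] at hy
  rw [Function.notMem_support, splicedOdometer, if_neg hy.2.1, if_neg hy.2.2,
    odometer_eq_zero_of_notMem hy.1.1, odometer_eq_zero_of_notMem hy.1.2, ite_self]

theorem splicedOdometer_stable (hoff : ∀ y ∉ triple a, FollowsAt η x w t y)
    (ht : position x w t ∈ triple a) (hs : position x w s ∈ triple a) (hst : s ≤ t)
    (hup : tally true (stack η a) (odometer x w t a) = exits true x w t a)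
    (hm : m = exits true x w t a + q + if a + 1 ≤ x then 1 else 0)
    (hmq : tally true (stack η (a + 1)) m ≤ q)
    (hn : tally false (stack η (a + 2)) n = q + if a + 2 ≤ x then 1 else 0)
    (hns : tally true (stack η (a + 2)) n = exits true x w s (a + 2)) (hy : y ≠ a) :
    (if x = y then 1 else 0) +
        tally true (stack η (y - 1)) (splicedOdometer x w s t a m n (y - 1)) +
        tally false (stack η (y + 1)) (splicedOdometer x w s t a m n (y + 1)) ≤
      splicedOdometer x w s t a m n y := by
  simp only [mem_triple] at hoff ht hs
  have hoffs : ∀ y, ¬(y = a ∨ y = a + 1 ∨ y = a + 2) → FollowsAt η x w s y :=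
    fun y hy => (hoff y hy).mono hst
  rcases lt_or_gt_of_ne hy with hlt | hgt
  · have hfalse : tally false (stack η (y + 1)) (odometer x w t (y + 1)) =
        exits false x w t (y + 1) := by
      obtain hya | hya := (show y + 1 ≤ a by omega).eq_or_lt
      · have := tally_true_add_false (stack η a) (odometer x w t a)
        have := exits_true_add_false x w t a
        rw [hya]
        omega
      · exact (hoff (y + 1) (by omega)).exits_eq.symm
    rw [splicedOdometer_of_le hlt.le, splicedOdometer_of_le (by omega),
      splicedOdometer_of_le (by omega), ← (hoff (y - 1) (by omega)).exits_eq, hfalse]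
    exact (odometer_eq_inflow (by omega)).le
  · obtain rfl | rfl | hy3 : y = a + 1 ∨ y = a + 2 ∨ a + 3 ≤ y := by omega
    · rw [add_sub_cancel_right, splicedOdometer_of_le le_rfl, hup, splicedOdometer_add_one, hm,
        add_assoc a, one_add_one_eq_two, splicedOdometer_add_two, hn]
      split_ifs <;> omega
    · have hcross := exits_true_add_ite_start x w s (a + 2)
      rw [show a + 2 + 1 = a + 3 by ring, if_neg (show ¬a + 3 ≤ position x w s by omega),
        ← hns] at hcross
      have := tally_true_add_false (stack η (a + 2)) n
      rw [show a + 2 - 1 = a + 1 by ring, show a + 2 + 1 = a + 3 by ring,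
        splicedOdometer_add_one, splicedOdometer_add_two, splicedOdometer_of_ge le_rfl,
        ← (hoffs (a + 3) (by omega)).exits_eq]
      split_ifs at * <;> omega
    · have htrue : tally true (stack η (y - 1)) (splicedOdometer x w s t a m n (y - 1)) =
          exits true x w s (y - 1) := by
        obtain rfl | hy3 := hy3.eq_or_lt
        · rw [show a + 3 - 1 = a + 2 by ring, splicedOdometer_add_two, hns]
        · rw [splicedOdometer_of_ge (by omega), (hoffs (y - 1) (by omega)).exits_eq]
      rw [htrue, splicedOdometer_of_ge hy3, splicedOdometer_of_ge (by omega),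
        ← (hoffs (y + 1) (by omega)).exits_eq]
      exact (odometer_eq_inflow (by omega)).le

/-- After resampling, `splicedOdometer` is stable off `a`, so the least action principle applies. -/
theorem IsFavoriteTriple.exists_reachesFirst (hw : IsFavoriteTriple x l h w t a)
    (hl : ∀ z, l z < h) (hb : ∀ t, Follows η x b t)
    (hoff : ∀ y ∉ triple a, FollowsAt η x w t y)
    (hup : tally true (stack η a) (odometer x w t a) = exits true x w t a)
    (hq₁ : tally true (stack η (a + 1)) (exits true x w t a + q + if a + 1 ≤ x then 1 else 0) ≤ q)
    (hq₂ : tally true (stack η (a + 2)) (q + (if a + 2 ≤ x then 1 else 0) +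
      exits true x w t (a + 2)) ≤ exits true x w t (a + 2)) :
    ∃ y ∈ triple a, ReachesFirst x l h b y := by
  obtain ⟨hpos, hin, hout⟩ := hw
  obtain ⟨n, hle, hn⟩ := exists_tally_eq (c := false) (f := stack η (a + 2))
    (n := q + (if a + 2 ≤ x then 1 else 0) + exits true x w t (a + 2))
    (q := q + if a + 2 ≤ x then 1 else 0) (by
      have := tally_true_add_false (stack η (a + 2))
        (q + (if a + 2 ≤ x then 1 else 0) + exits true x w t (a + 2))
      omega)
  have hnt := (tally_mono true (stack η (a + 2)) hle).trans hq₂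
  obtain ⟨s, hst, hs, hns⟩ := exists_exits_eq (mem_triple.2 (.inr (.inr rfl))) hpos hnt
  refine exists_reachesFirst_of_stable hl hb finite_support_splicedOdometer
    (mem_triple.2 (.inl rfl))
    (fun y hy => splicedOdometer_stable hoff hpos hs hst hup rfl hq₁ hn hns.symm hy) ?_
    fun y hy => ?_
  · have := odometer_add_ite_position x w t a
    have := hin a (mem_triple.2 (.inl rfl))
    have : (if position x w t = a then 1 else 0) ≤ 1 := by split_ifs <;> omega
    rw [splicedOdometer_of_le le_rfl]
    omega
  · have hle : splicedOdometer x w s t a (exits true x w t a + q + if a + 1 ≤ x then 1 else 0) n y ≤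
        odometer x w t y := by
      rw [mem_triple] at hy
      rcases le_or_gt y a with hya | hya
      · rw [splicedOdometer_of_le hya]
      · rw [splicedOdometer_of_ge (by omega)]
        exact odometer_mono x w y hst
    have := odometer_add_ite_position x w t y
    rw [if_neg (ne_of_mem_of_not_mem hpos hy)] at this
    have := hout y hy
    omega

end Spliced

end Levels

/-! ### Binomial estimates -/

section Binomial

theorem fairBinomial_central_succ (n : ℕ) :
    fairBinomial (2 * (n + 1)) (n + 1) =
      fairBinomial (2 * n) n * (2 * n + 1) / (2 * n + 2) := by
  have h : ((n : ℝ) + 1) * ((2 * (n + 1)).choose (n + 1) : ℝ) =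
      2 * (2 * n + 1) * ((2 * n).choose n : ℝ) := by
    exact_mod_cast Nat.succ_mul_centralBinom_succ n
  rw [eq_div_iff (by positivity), fairBinomial, fairBinomial,
    show 2 ^ (2 * (n + 1)) = (2 : ℝ) ^ (2 * n) * 4 by rw [mul_add, pow_add]; norm_num]
  field_simp
  linarith

theorem fairBinomial_central_sq_mul_le (n : ℕ) :
    fairBinomial (2 * n) n ^ 2 * (2 * n + 1) ≤ 1 := by
  induction n with
  | zero => simp [fairBinomial]
  | succ n ih =>
    refine le_trans ?_ ih
    rw [fairBinomial_central_succ, div_pow, div_mul_eq_mul_div, div_le_iff₀ (by positivity)]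
    have : ((2 : ℝ) * n + 1) ^ 2 * (2 * (n + 1) + 1) ≤ (2 * n + 1) * (2 * n + 2) ^ 2 := by
      nlinarith [(Nat.cast_nonneg n : (0 : ℝ) ≤ n)]
    push_cast
    nlinarith [sq_nonneg (fairBinomial (2 * n) n)]

theorem one_le_fairBinomial_central_sq_mul {n : ℕ} (hn : 1 ≤ n) :
    1 ≤ fairBinomial (2 * n) n ^ 2 * (4 * n) := by
  induction n, hn using Nat.le_induction with
  | base => norm_num [fairBinomial, Nat.choose]
  | succ n hn ih =>
    refine ih.trans ?_
    rw [fairBinomial_central_succ, div_pow, div_mul_eq_mul_div, le_div_iff₀ (by positivity)]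
    have : (4 * n : ℝ) * (2 * n + 2) ^ 2 ≤ (2 * n + 1) ^ 2 * (4 * (n + 1)) := by
      nlinarith [(Nat.cast_nonneg n : (0 : ℝ) ≤ n)]
    push_cast
    nlinarith [sq_nonneg (fairBinomial (2 * n) n)]

theorem fairBinomial_odd_half (k : ℕ) :
    fairBinomial (2 * k + 1) k = fairBinomial (2 * (k + 1)) (k + 1) := by
  rw [show 2 * (k + 1) = (2 * k + 1) + 1 by ring, fairBinomial_succ_succ, fairBinomial,
    fairBinomial, Nat.choose_symm_half]
  ring

theorem fairBinomial_le_half (n i : ℕ) : fairBinomial n i ≤ fairBinomial n (n / 2) := by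
  unfold fairBinomial
  gcongr
  exact_mod_cast Nat.choose_le_middle i n

theorem fairBinomial_half_sq_mul_le (n : ℕ) : fairBinomial n (n / 2) ^ 2 * (n + 1) ≤ 1 := by
  rcases Nat.even_or_odd' n with ⟨k, rfl | rfl⟩
  · rw [show 2 * k / 2 = k by lia]
    exact_mod_cast fairBinomial_central_sq_mul_le k
  · rw [show (2 * k + 1) / 2 = k by lia, fairBinomial_odd_half]
    have := fairBinomial_central_sq_mul_le (k + 1)
    push_cast at *
    nlinarith [sq_nonneg (fairBinomial (2 * (k + 1)) (k + 1))]

theorem fairBinomial_le_one_div_sqrt (n i : ℕ) :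
    fairBinomial n i ≤ 1 / √((n : ℝ) + 1) := by
  refine (fairBinomial_le_half n i).trans ?_
  rw [le_div_iff₀ (by positivity)]
  refine le_of_sq_le_sq ?_ zero_le_one
  rw [mul_pow, Real.sq_sqrt (by positivity), one_pow]
  exact fairBinomial_half_sq_mul_le n

theorem fairBinomial_mono_left_half {n i k : ℕ} (h : 2 * i ≤ n) (hk : k ≤ i) :
    fairBinomial n k ≤ fairBinomial n i := by
  induction i, hk using Nat.le_induction with
  | base => exact le_rfl
  | succ i _ ih =>
    refine (ih (by lia)).trans ?_
    unfold fairBinomial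
    gcongr
    exact Nat.choose_le_succ_of_lt_half_left (by lia)

theorem fairBinomial_add (n r i : ℕ) :
    fairBinomial (n + r) i =
      ∑ s ∈ Finset.range (i + 1), fairBinomial n (i - s) * fairBinomial r s := by
  rw [← Finset.Nat.sum_antidiagonal_eq_sum_range_succ_mk (fun p : ℕ × ℕ =>
    fairBinomial n p.2 * fairBinomial r p.1), ← Finset.Nat.sum_antidiagonal_swap]
  simp only [fairBinomial, Prod.fst_swap, Prod.snd_swap]
  rw [Nat.add_choose_eq]
  push_cast
  rw [Finset.sum_div]
  refine Finset.sum_congr rfl fun p _ => ?_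
  rw [pow_add, mul_div_mul_comm]

theorem fairBinomial_div_succ (r s : ℕ) :
    fairBinomial r s / (s + 1) = fairBinomial (r + 1) (s + 1) * (2 / (r + 1)) := by
  have h : ((r : ℝ) + 1) * r.choose s = (r + 1).choose (s + 1) * (s + 1) := by
    exact_mod_cast Nat.add_one_mul_choose_eq r s
  simp only [fairBinomial, pow_succ]
  field_simp
  linarith

/-- The distribution function of the number of heads among `n` fair coins. -/
noncomputable def fairBinomialCdf (n i : ℕ) : ℝ :=
  ∑ k ∈ Finset.range (i + 1), fairBinomial n k

theorem dependsOn_tally_le (c : Bool) (n i : ℕ) :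
    DependsOn (· ∈ {f : ℕ → Bool | tally c f n ≤ i}) (Set.Iio n) :=
  fun _ _ h => congrArg (· ≤ i) (tally_congr h)

theorem measurableSet_tally_eq (c : Bool) (n i : ℕ) :
    MeasurableSet {f : ℕ → Bool | tally c f n = i} :=
  measurableSet_of_dependsOn_Iio (dependsOn_tally_eq c n i)

theorem measurableSet_tally_le (c : Bool) (n i : ℕ) :
    MeasurableSet {f : ℕ → Bool | tally c f n ≤ i} :=
  measurableSet_of_dependsOn_Iio (dependsOn_tally_le c n i)

theorem fairBits_real_tally_le (c : Bool) (n i : ℕ) :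
    (fairBits ℕ).real {f | tally c f n ≤ i} = fairBinomialCdf n i := by
  have : {f : ℕ → Bool | tally c f n ≤ i} =
      ⋃ k ∈ Finset.range (i + 1), {f | tally c f n = k} := by
    ext f; simp
  rw [this, measureReal_biUnion_finset]
  · simp only [fairBits_real_tally_eq, fairBinomialCdf]
  · intro k _ k' _ hkk
    exact Set.disjoint_left.2 fun f hk hk' => hkk (hk.symm.trans hk')
  · exact fun k _ => measurableSet_tally_eq c n k

theorem fairBinomialCdf_le_one (n i : ℕ) : fairBinomialCdf n i ≤ 1 := by
  rw [← fairBits_real_tally_le true]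
  exact measureReal_le_one

theorem fairBinomialCdf_nonneg (n i : ℕ) : 0 ≤ fairBinomialCdf n i :=
  Finset.sum_nonneg fun k _ => fairBinomial_nonneg n k

theorem fairBinomialCdf_anti_left {n n' : ℕ} (h : n ≤ n') (i : ℕ) :
    fairBinomialCdf n' i ≤ fairBinomialCdf n i := by
  rw [← fairBits_real_tally_le true, ← fairBits_real_tally_le true]
  exact measureReal_mono fun f hf => (tally_mono true f h).trans hf

theorem half_le_fairBinomialCdf {n i : ℕ} (h : n ≤ 2 * i + 1) :
    1 / 2 ≤ fairBinomialCdf n i := by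
  refine le_trans (le_of_eq ?_) (fairBinomialCdf_anti_left h i)
  have hsum : ∑ k ∈ Finset.range (i + 1), ((2 * i + 1).choose k : ℝ) = 4 ^ i := by
    exact_mod_cast Nat.sum_range_choose_halfway i
  simp only [fairBinomialCdf, fairBinomial]
  rw [← Finset.sum_div, hsum, pow_succ, pow_mul, show (2 : ℝ) ^ 2 = 4 by norm_num]
  field_simp

theorem half_sub_div_sqrt_le_fairBinomialCdf {n i d : ℕ} (h : n ≤ 2 * (i + d) + 1) :
    1 / 2 - d / √((n : ℝ) + 1) ≤ fairBinomialCdf n i := by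
  have hsplit : fairBinomialCdf n (i + d) = fairBinomialCdf n i +
      ∑ k ∈ Finset.range d, fairBinomial n (i + 1 + k) := by
    simp only [fairBinomialCdf]
    rw [show i + d + 1 = (i + 1) + d by ring, Finset.sum_range_add]
  have hrest : ∑ k ∈ Finset.range d, fairBinomial n (i + 1 + k) ≤ d / √((n : ℝ) + 1) := by
    refine (Finset.sum_le_sum fun k _ => fairBinomial_le_one_div_sqrt n (i + 1 + k)).trans_eq ?_
    rw [Finset.sum_const, Finset.card_range, nsmul_eq_mul, mul_one_div]
  linarith [half_le_fairBinomialCdf h]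

theorem fairBinomial_mul_le_fairBinomialCdf {n i s : ℕ} (h : 2 * i ≤ n) (hs : s ≤ i) :
    fairBinomial n (i - s) * (s + 1) ≤ fairBinomialCdf n i := by
  have hsplit : fairBinomialCdf n i = ∑ k ∈ Finset.range (i - s), fairBinomial n k +
      ∑ k ∈ Finset.range (s + 1), fairBinomial n (i - s + k) := by
    rw [← Finset.sum_range_add, fairBinomialCdf]
    congr 2
    lia
  have hhead : 0 ≤ ∑ k ∈ Finset.range (i - s), fairBinomial n k :=
    Finset.sum_nonneg fun k _ => fairBinomial_nonneg n k
  have htail : ∑ _k ∈ Finset.range (s + 1), fairBinomial n (i - s) ≤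
      ∑ k ∈ Finset.range (s + 1), fairBinomial n (i - s + k) :=
    Finset.sum_le_sum fun k hk => fairBinomial_mono_left_half
      (by have := Finset.mem_range.1 hk; lia) (by lia)
  rw [Finset.sum_const, Finset.card_range, nsmul_eq_mul] at htail
  push_cast at htail
  linarith

/-- Tossing `r` further coins while keeping `i ≤ n / 2` heads spreads the mass over `r` sites. -/
theorem fairBinomial_add_le_fairBinomialCdf_mul {n i : ℕ} (r : ℕ) (h : 2 * i ≤ n) :
    fairBinomial (n + r) i ≤ fairBinomialCdf n i * (2 / (r + 1)) := by
  have hterm : ∀ s ∈ Finset.range (i + 1), fairBinomial n (i - s) * fairBinomial r s ≤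
      fairBinomialCdf n i * (2 / (r + 1)) * fairBinomial (r + 1) (s + 1) := fun s hs => by
    have hr := fairBinomial_nonneg r s
    calc fairBinomial n (i - s) * fairBinomial r s
        = fairBinomial n (i - s) * (s + 1) * (fairBinomial r s / (s + 1)) := by field_simp
      _ ≤ fairBinomialCdf n i * (fairBinomial r s / (s + 1)) := by
        gcongr
        exact fairBinomial_mul_le_fairBinomialCdf h (Nat.lt_succ_iff.1 (Finset.mem_range.1 hs))
      _ = _ := by rw [fairBinomial_div_succ]; ring
  have hmass : ∑ s ∈ Finset.range (i + 1), fairBinomial (r + 1) (s + 1) ≤ 1 := by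
    refine le_trans ?_ (fairBinomialCdf_le_one (r + 1) (i + 1))
    rw [fairBinomialCdf, Finset.sum_range_succ' _ (i + 1)]
    linarith [fairBinomial_nonneg (r + 1) 0]
  have hn := fairBinomialCdf_nonneg n i
  rw [fairBinomial_add]
  refine (Finset.sum_le_sum hterm).trans ?_
  rw [← Finset.mul_sum]
  exact mul_le_of_le_one_right (by positivity) hmass

theorem exists_sqrt_scale {m : ℕ} (hm : 64 ≤ m) :
    ∃ r : ℕ, 1 ≤ r ∧ 8 * (r : ℝ) ≤ √m ∧ √m ≤ 16 * r := by
  have h8 : (8 : ℝ) ≤ √m := Real.le_sqrt_of_sq_le (by norm_num; exact_mod_cast hm)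
  have h1 : 1 ≤ ⌊√(m : ℝ) / 8⌋₊ := Nat.le_floor (by norm_num; linarith)
  have hlt := Nat.lt_floor_add_one (√(m : ℝ) / 8)
  have h1' : (1 : ℝ) ≤ ⌊√(m : ℝ) / 8⌋₊ := by exact_mod_cast h1
  exact ⟨_, h1, by linarith [Nat.floor_le (show 0 ≤ √(m : ℝ) / 8 by positivity)], by linarith⟩

theorem fairBinomial_le_one_div_sqrt_of_le {m n : ℕ} (hm : 0 < m) (h : m ≤ n + 1) (i : ℕ) :
    fairBinomial n i ≤ 1 / √(m : ℝ) := by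
  refine (fairBinomial_le_one_div_sqrt n i).trans ?_
  have : (m : ℝ) ≤ n + 1 := by exact_mod_cast h
  have : (0 : ℝ) < m := by exact_mod_cast hm
  gcongr

theorem quarter_le_fairBinomialCdf {m n i r : ℕ} (hr : 8 * (r : ℝ) ≤ √m)
    (hm : m ≤ 2 * n + 2) (hn : n ≤ 2 * i + r + 1) : 1 / 4 ≤ fairBinomialCdf n i := by
  refine le_trans ?_ (half_sub_div_sqrt_le_fairBinomialCdf (d := (r + 1) / 2) (by lia))
  have hd : (((r + 1) / 2 : ℕ) : ℝ) ≤ r := by exact_mod_cast (by lia : (r + 1) / 2 ≤ r)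
  have hm' : (m : ℝ) ≤ 2 * n + 2 := by exact_mod_cast hm
  have hsqrt : √(m : ℝ) / 2 ≤ √((n : ℝ) + 1) := by
    refine Real.le_sqrt_of_sq_le ?_
    rw [div_pow, Real.sq_sqrt (Nat.cast_nonneg m)]
    linarith [(Nat.cast_nonneg n : (0 : ℝ) ≤ n)]
  have : (((r + 1) / 2 : ℕ) : ℝ) / √((n : ℝ) + 1) ≤ 1 / 4 := by
    rw [div_le_iff₀ (by positivity)]
    linarith
  linarith

theorem fairBinomial_le_div_sqrt_mul_fairBinomialCdf {m n i r d : ℕ} (hr₁ : 1 ≤ r)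
    (hr : 8 * (r : ℝ) ≤ √m) (hmr : √(m : ℝ) ≤ 16 * r) (hn : m ≤ n + 1) (hd : d ≤ 1) :
    fairBinomial n i ≤ 64 / √(m : ℝ) * fairBinomialCdf (n + d - r) i := by
  have hr₁' : (1 : ℝ) ≤ r := by exact_mod_cast hr₁
  have hq : 0 < √(m : ℝ) := by linarith
  have hm : 0 < m := by exact_mod_cast Real.sqrt_pos.1 hq
  by_cases hi : 2 * i ≤ n + d - r
  · have hrn : r ≤ n := by
      have : (r : ℝ) < m := by nlinarith [Real.sq_sqrt (Nat.cast_nonneg (α := ℝ) m)]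
      have : r < m := by exact_mod_cast this
      lia
    have htail := fairBinomial_add_le_fairBinomialCdf_mul (r - d) hi
    rw [show n + d - r + (r - d) = n by lia] at htail
    have hrd : (r : ℝ) ≤ ((r - d : ℕ) : ℝ) + 1 := by exact_mod_cast (by lia : r ≤ r - d + 1)
    have hscale : (2 : ℝ) / (((r - d : ℕ) : ℝ) + 1) ≤ 64 / √(m : ℝ) := by
      rw [div_le_div_iff₀ (by linarith) hq]
      linarith
    refine htail.trans ?_
    rw [mul_comm]
    exact mul_le_mul_of_nonneg_right hscale (fairBinomialCdf_nonneg _ _)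
  · have hhalf := half_le_fairBinomialCdf (n := n + d - r) (i := i) (by lia)
    calc fairBinomial n i ≤ 1 / √(m : ℝ) := fairBinomial_le_one_div_sqrt_of_le hm hn i
      _ ≤ 64 / √(m : ℝ) * (1 / 2) := by
        rw [div_mul_div_comm, div_le_div_iff₀ hq (by positivity)]; linarith
      _ ≤ _ := by gcongr

theorem fairBinomial_mul_fairBinomial_le {m j i₁ i₂ n₂ d₁ d₂ r : ℕ} (hr₁ : 1 ≤ r)
    (hr : 8 * (r : ℝ) ≤ √m) (hmr : √(m : ℝ) ≤ 16 * r) (hj : j ≤ i₁) (h₁ : m ≤ j + i₁ + 1)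
    (h₂ : m ≤ n₂ + 1) (hd₁ : d₁ ≤ 1) (hd₂ : d₂ ≤ 1) :
    fairBinomial (j + i₁) i₁ * fairBinomial n₂ i₂ ≤
      256 / m * (fairBinomialCdf (j + d₁ + (i₁ - r)) (i₁ - r) *
        fairBinomialCdf (n₂ + d₂ - r) i₂) := by
  have hr₁' : (1 : ℝ) ≤ r := by exact_mod_cast hr₁
  have hq : 0 < √(m : ℝ) := by linarith
  have hm : 0 < m := by exact_mod_cast Real.sqrt_pos.1 hq
  have hrm : 2 * r ≤ m := by
    have : (2 * r : ℝ) ≤ m := by nlinarith [Real.sq_sqrt (Nat.cast_nonneg (α := ℝ) m)]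
    exact_mod_cast this
  have hquarter : 1 / 4 ≤ fairBinomialCdf (j + d₁ + (i₁ - r)) (i₁ - r) :=
    quarter_le_fairBinomialCdf hr (by lia) (by lia)
  have hcdf := fairBinomialCdf_nonneg (n₂ + d₂ - r) i₂
  calc fairBinomial (j + i₁) i₁ * fairBinomial n₂ i₂
      ≤ 1 / √(m : ℝ) * (64 / √(m : ℝ) * fairBinomialCdf (n₂ + d₂ - r) i₂) :=
        mul_le_mul (fairBinomial_le_one_div_sqrt_of_le hm h₁ i₁)
          (fairBinomial_le_div_sqrt_mul_fairBinomialCdf hr₁ hr hmr h₂ hd₂)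
          (fairBinomial_nonneg _ _) (by positivity)
    _ = 256 / m * (1 / 4 * fairBinomialCdf (n₂ + d₂ - r) i₂) := by
        rw [← mul_assoc, div_mul_div_comm, Real.mul_self_sqrt (Nat.cast_nonneg m)]; ring
    _ ≤ _ := by gcongr

end Binomial

/-! ### Resampling the stacks of a favorite triple -/

section Resampling

variable {x a e y : ℤ} {l : ℤ → ℕ} {h m j t t' : ℕ} {b w w' : ℕ → Bool}

theorem measurableSet_exists_of_dependsOn {P : ℕ → (ℕ → Bool) → Prop}
    (hP : ∀ t, DependsOn (P t) (Set.Iio t)) : MeasurableSet {b | ∃ t, P t b} := by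
  have : {b | ∃ t, P t b} = ⋃ t, {b | P t b} := by ext b; simp
  rw [this]
  exact MeasurableSet.iUnion fun t => measurableSet_of_dependsOn_Iio (hP t)

theorem dependsOn_isFavoriteTriple (x : ℤ) (l : ℤ → ℕ) (h t : ℕ) (a : ℤ) :
    DependsOn (fun b => IsFavoriteTriple x l h b t a) (Set.Iio t) := fun b b' hb => by
  simp only [IsFavoriteTriple, position_congr hb, localTime_congr hb]

theorem measurableSet_reachesFirst (x : ℤ) (l : ℤ → ℕ) (h : ℕ) (y : ℤ) :
    MeasurableSet {b | ReachesFirst x l h b y} := by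
  refine measurableSet_exists_of_dependsOn fun t b b' hb => ?_
  have hpast : ∀ s ≤ t, ∀ z, localTime x b s z = localTime x b' s z := fun s hs z =>
    localTime_congr fun r hr => hb r (hr.trans_le hs)
  rw [hpast t le_rfl y]
  exact congrArg (· ∧ _) (propext (forall₃_congr fun s hs z => by rw [hpast s hs.le z]))

/-- The event that the first site whose local time reaches `h` lies in the triple at `a`. -/
def reachesTriple (x : ℤ) (l : ℤ → ℕ) (h : ℕ) (a : ℤ) : Set (ℕ → Bool) :=
  {b | ∃ y ∈ triple a, ReachesFirst x l h b y}

theorem reachesTriple_eq_union (x : ℤ) (l : ℤ → ℕ) (h : ℕ) (a : ℤ) :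
    reachesTriple x l h a = {b | ReachesFirst x l h b a} ∪
      ({b | ReachesFirst x l h b (a + 1)} ∪ {b | ReachesFirst x l h b (a + 2)}) := by
  ext b
  simp [reachesTriple, triple]

theorem measurableSet_reachesTriple (x : ℤ) (l : ℤ → ℕ) (h : ℕ) (a : ℤ) :
    MeasurableSet (reachesTriple x l h a) := by
  rw [reachesTriple_eq_union]
  exact (measurableSet_reachesFirst x l h a).union
    ((measurableSet_reachesFirst x l h (a + 1)).union (measurableSet_reachesFirst x l h (a + 2)))

/-- At time `t` the triple at `a` is favorite, the walk is at `e`, has left `a` upwards `j` times,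
and has left `a + 1` upwards at least as often as downwards. -/
def IsRisingTriple (x : ℤ) (l : ℤ → ℕ) (h : ℕ) (a e : ℤ) (j t : ℕ) (b : ℕ → Bool) : Prop :=
  IsFavoriteTriple x l h b t a ∧ position x b t = e ∧ exits true x b t a = j ∧
    exits false x b t (a + 1) ≤ exits true x b t (a + 1)

theorem dependsOn_isRisingTriple (x : ℤ) (l : ℤ → ℕ) (h : ℕ) (a e : ℤ) (j t : ℕ) :
    DependsOn (IsRisingTriple x l h a e j t) (Set.Iio t) := fun b b' hb => by
  simp only [IsRisingTriple, (dependsOn_isFavoriteTriple x l h t a hb), position_congr hb,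
    exits_congr hb]

theorem IsRisingTriple.odometer_add (hw : IsRisingTriple x l h a e j t w) (hy : y ∈ triple a) :
    odometer x w t y + l y + (if e = y then 1 else 0) = h + if x = y then 1 else 0 := by
  have hod := odometer_add_ite_position x w t y
  have hfav := hw.1.2.1 y hy
  rw [hw.2.1] at hod
  lia

theorem IsRisingTriple.exits_false_add (hw : IsRisingTriple x l h a e j t w) :
    exits false x w t (a + 1) + (if a + 1 ≤ e then 1 else 0) =
        j + (if a + 1 ≤ x then 1 else 0) ∧
      exits false x w t (a + 2) + (if a + 2 ≤ e then 1 else 0) =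
        exits true x w t (a + 1) + if a + 2 ≤ x then 1 else 0 := by
  have h₁ := exits_true_add_ite_start x w t a
  have h₂ := exits_true_add_ite_start x w t (a + 1)
  rw [hw.2.1, hw.2.2.1] at h₁
  rw [hw.2.1, show a + 1 + 1 = a + 2 by ring] at h₂
  exact ⟨h₁.symm, h₂.symm⟩

theorem IsRisingTriple.eq_on_triple (hw : IsRisingTriple x l h a e j t w)
    (hw' : IsRisingTriple x l h a e j t' w') (hy : y ∈ triple a) :
    odometer x w t y = odometer x w' t' y ∧ exits true x w t y = exits true x w' t' y := by
  have hod : ∀ z ∈ triple a, odometer x w t z = odometer x w' t' z := fun z hz => by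
    have := hw.odometer_add hz
    have := hw'.odometer_add hz
    lia
  refine ⟨hod y hy, ?_⟩
  have hsum := exits_true_add_false x w t
  have hsum' := exits_true_add_false x w' t'
  have hfalse := hw.exits_false_add
  have hfalse' := hw'.exits_false_add
  have h₁ : exits true x w t (a + 1) = exits true x w' t' (a + 1) := by
    have := hod (a + 1) (by simp [triple])
    have := hsum (a + 1)
    have := hsum' (a + 1)
    lia
  rcases hy with rfl | rfl | rfl
  · rw [hw.2.2.1, hw'.2.2.1]
  · exact h₁
  · have := hod (a + 2) (by simp [triple])
    have := hsum (a + 2)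
    have := hsum' (a + 2)
    lia

/-- The event that the stacks off the triple at `a` are compatible with some path which makes it a
rising triple. -/
def compatibleOff (x : ℤ) (l : ℤ → ℕ) (h : ℕ) (a e : ℤ) (j : ℕ) : Set (ℤ × ℕ → Bool) :=
  {η | ∃ t w, IsRisingTriple x l h a e j t w ∧ ∀ y ∉ triple a, FollowsAt η x w t y}

theorem dependsOn_compatibleOff (x : ℤ) (l : ℤ → ℕ) (h : ℕ) (a e : ℤ) (j : ℕ) :
    DependsOn (· ∈ compatibleOff x l h a e j) {p | p.1 ∉ triple a} := by
  refine dependsOn_mem_of_imp fun η η' hη => ?_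
  rintro ⟨t, w, hw, hoff⟩
  exact ⟨t, w, hw, fun y hy s hs hp => (hoff y hy s hs hp).trans (hη (y, _) hy)⟩

theorem abs_position_sub_le (x : ℤ) (b : ℕ → Bool) (t : ℕ) : |position x b t - x| ≤ t := by
  induction t with
  | zero => simp [position]
  | succ t ih =>
    rw [abs_le] at *
    rw [position]
    rcases Bool.eq_false_or_eq_true (b t) with hb | hb <;>
      simp only [hb, step_true, step_false] <;> push_cast <;> lia

theorem measurableSet_compatibleOff (x : ℤ) (l : ℤ → ℕ) (h : ℕ) (a e : ℤ) (j : ℕ) :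
    MeasurableSet (compatibleOff x l h a e j) := by
  have : compatibleOff x l h a e j = ⋃ t, {η | ∃ w, IsRisingTriple x l h a e j t w ∧
      ∀ y ∉ triple a, FollowsAt η x w t y} := by
    ext η; simp [compatibleOff]
  rw [this]
  refine MeasurableSet.iUnion fun t => ?_
  have hfin := (Set.finite_Icc (x - t) (x + t)).prod (Set.finite_Iio t)
  refine measurableSet_of_dependsOn_finite hfin (dependsOn_mem_of_imp fun η η' hη => ?_)
  rintro ⟨w, hw, hoff⟩
  refine ⟨w, hw, fun y hy s hs hp => (hoff y hy s hs hp).trans (hη (y, _) ?_)⟩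
  have hpos := abs_le.1 (abs_position_sub_le x w s)
  have hod : odometer x w s y ≤ s := Nat.count_le _
  rw [hp] at hpos
  exact ⟨⟨by lia, by lia⟩, hod.trans_lt hs⟩

theorem fairBits_real_stack_inter {S : Set (ℤ × ℕ)} {E : Set (ℕ → Bool)} {O : Set (ℤ × ℕ → Bool)}
    (mE : MeasurableSet E) (mO : MeasurableSet O) (hO : DependsOn (· ∈ O) S)
    (hS : ∀ p ∈ S, p.1 ≠ y) :
    (fairBits (ℤ × ℕ)).real ({η | stack η y ∈ E} ∩ O) =
      (fairBits ℕ).real E * (fairBits (ℤ × ℕ)).real O := by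
  rw [fairBits_real_inter (Set.disjoint_left.2 fun p hp hpS => hS p hpS hp)
    (dependsOn_stack_mem y E) hO ((measurePreserving_stack y).measurable mE) mO]
  exact congrArg (· * _) ((measurePreserving_stack y).measureReal_preimage mE.nullMeasurableSet)

theorem fairBits_real_triple_stacks_inter (a : ℤ) {E₀ E₁ E₂ : Set (ℕ → Bool)}
    {O : Set (ℤ × ℕ → Bool)} (m₀ : MeasurableSet E₀) (m₁ : MeasurableSet E₁)
    (m₂ : MeasurableSet E₂) (mO : MeasurableSet O)
    (hO : DependsOn (· ∈ O) {p | p.1 ∉ triple a}) :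
    (fairBits (ℤ × ℕ)).real ({η | stack η a ∈ E₀} ∩
        ({η | stack η (a + 1) ∈ E₁} ∩ ({η | stack η (a + 2) ∈ E₂} ∩ O))) =
      (fairBits ℕ).real E₀ * ((fairBits ℕ).real E₁ *
        ((fairBits ℕ).real E₂ * (fairBits (ℤ × ℕ)).real O)) := by
  have hstack := fun (y : ℤ) (E : Set (ℕ → Bool)) => dependsOn_stack_mem y E
  have d₂ : DependsOn (· ∈ {η | stack η (a + 2) ∈ E₂} ∩ O) {p : ℤ × ℕ | p.1 ≠ a ∧ p.1 ≠ a + 1} := by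
    refine dependsOn_mem_inter ((hstack (a + 2) E₂).mono ?_) (hO.mono ?_) <;> intro p hp <;>
      simp only [mem_triple, Set.mem_ofPred_eq] at * <;> lia
  have d₁ : DependsOn (· ∈ {η | stack η (a + 1) ∈ E₁} ∩ ({η | stack η (a + 2) ∈ E₂} ∩ O))
      {p : ℤ × ℕ | p.1 ≠ a} := by
    refine dependsOn_mem_inter ((hstack (a + 1) E₁).mono ?_) (d₂.mono ?_) <;> intro p hp <;>
      simp only [Set.mem_ofPred_eq] at * <;> lia
  have mS : ∀ (y : ℤ) {E : Set (ℕ → Bool)}, MeasurableSet E → MeasurableSet {η | stack η y ∈ E} :=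
    fun y _ mE => (measurePreserving_stack y).measurable mE
  rw [fairBits_real_stack_inter m₀ ((mS _ m₁).inter ((mS _ m₂).inter mO)) d₁ fun _ hp => hp,
    fairBits_real_stack_inter m₁ ((mS _ m₂).inter mO) d₂ fun _ hp => hp.2,
    fairBits_real_stack_inter m₂ mO hO fun p hp h => hp (by simp [triple, h])]

theorem fairBits_real_rising_le (hw : IsRisingTriple x l h a e j t w) :
    (fairBits ℕ).real {b | ∃ t, IsRisingTriple x l h a e j t b} ≤
      fairBinomial (odometer x w t a) j *
        (fairBinomial (odometer x w t (a + 1)) (exits true x w t (a + 1)) *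
          (fairBinomial (odometer x w t (a + 2)) (exits true x w t (a + 2)) *
            (fairBits (ℤ × ℕ)).real (compatibleOff x l h a e j))) := by
  simp only [← fairBits_real_tally_eq true]
  rw [← fairBits_real_triple_stacks_inter a (measurableSet_tally_eq _ _ _)
    (measurableSet_tally_eq _ _ _) (measurableSet_tally_eq _ _ _)
    (measurableSet_compatibleOff x l h a e j) (dependsOn_compatibleOff x l h a e j),
    ← (measurePreserving_stackWalk x).measureReal_preimage (measurableSet_exists_of_dependsOn
      (dependsOn_isRisingTriple x l h a e j)).nullMeasurableSet]
  refine measureReal_mono ?_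
  rintro η ⟨s, hs⟩
  have hfollows := follows_stackWalk η x s
  have htally : ∀ y ∈ triple a,
      tally true (stack η y) (odometer x w t y) = exits true x w t y := fun y hy => by
    rw [← (hs.eq_on_triple hw hy).1, ← (hs.eq_on_triple hw hy).2, hfollows.exits_eq]
  refine ⟨?_, htally _ (by simp [triple]), htally _ (by simp [triple]),
    ⟨s, _, hs, fun y _ => hfollows y⟩⟩
  exact (htally a (by simp [triple])).trans hw.2.2.1

theorem le_fairBits_real_reachesTriple (hl : ∀ z, l z < h) (hw : IsRisingTriple x l h a e j t w)
    (q : ℕ) :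
    fairBinomial (odometer x w t a) j *
        (fairBinomialCdf (j + q + if a + 1 ≤ x then 1 else 0) q *
          (fairBinomialCdf (q + (if a + 2 ≤ x then 1 else 0) + exits true x w t (a + 2))
            (exits true x w t (a + 2)) *
            (fairBits (ℤ × ℕ)).real (compatibleOff x l h a e j))) ≤
      (fairBits (ℤ × ℕ)).real ({η | tally true (stack η a) (odometer x w t a) = j} ∩
        {η | stackWalk η x ∈ reachesTriple x l h a}) := by
  rw [← fairBits_real_tally_eq true, ← fairBits_real_tally_le true, ← fairBits_real_tally_le true,
    ← fairBits_real_triple_stacks_inter a (measurableSet_tally_eq _ _ _)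
    (measurableSet_tally_le _ _ _) (measurableSet_tally_le _ _ _)
    (measurableSet_compatibleOff x l h a e j) (dependsOn_compatibleOff x l h a e j)]
  refine measureReal_mono ?_
  rintro η ⟨h₀, h₁, h₂, s, v, hv, hoff⟩
  refine ⟨h₀, hv.1.exists_reachesFirst (q := q) hl (fun t => follows_stackWalk η x t) hoff ?_ ?_ ?_⟩
  · rw [(hv.eq_on_triple hw (by simp [triple])).1, hv.2.2.1]
    exact h₀
  · rw [hv.2.2.1]
    exact h₁
  · rw [(hv.eq_on_triple hw (by simp [triple])).2]
    exact h₂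

theorem IsRisingTriple.fairBinomial_mul_le (hm : 64 ≤ m) (hl : ∀ y, l y + m ≤ h)
    (hw : IsRisingTriple x l h a e j t w) :
    ∃ q, fairBinomial (odometer x w t (a + 1)) (exits true x w t (a + 1)) *
        fairBinomial (odometer x w t (a + 2)) (exits true x w t (a + 2)) ≤
      256 / m * (fairBinomialCdf (j + q + if a + 1 ≤ x then 1 else 0) q *
        fairBinomialCdf (q + (if a + 2 ≤ x then 1 else 0) + exits true x w t (a + 2))
          (exits true x w t (a + 2))) := by
  obtain ⟨r, hr₁, hr, hmr⟩ := exists_sqrt_scale hm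
  have hrm : 8 * r ≤ m := by
    have h₁ : (1 : ℝ) ≤ r := by exact_mod_cast hr₁
    have : (8 * r : ℝ) ≤ m := by
      nlinarith [Real.sq_sqrt (Nat.cast_nonneg (α := ℝ) m)]
    exact_mod_cast this
  obtain ⟨hf₁, hf₂⟩ := hw.exits_false_add
  have hs₁ := exits_true_add_false x w t (a + 1)
  have hs₂ := exits_true_add_false x w t (a + 2)
  have ho₁ := hw.odometer_add (y := a + 1) (by simp [triple])
  have ho₂ := hw.odometer_add (y := a + 2) (by simp [triple])
  have hl₁ := hl (a + 1)
  have hl₂ := hl (a + 2)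
  have hhalf := hw.2.2.2
  set i := exits true x w t (a + 1)
  have hbound := fairBinomial_mul_fairBinomial_le (m := m) (j := exits false x w t (a + 1))
    (i₁ := i) (n₂ := odometer x w t (a + 2)) (i₂ := exits true x w t (a + 2))
    (d₁ := if a + 1 ≤ e then 1 else 0) (d₂ := if a + 2 ≤ e then 1 else 0)
    hr₁ hr hmr hhalf (by lia) (by lia) (by split_ifs <;> lia) (by split_ifs <;> lia)
  refine ⟨i - r, ?_⟩
  rw [show exits false x w t (a + 1) + i = odometer x w t (a + 1) by lia, hf₁,
    show odometer x w t (a + 2) + (if a + 2 ≤ e then 1 else 0) - r =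
      i - r + (if a + 2 ≤ x then 1 else 0) + exits true x w t (a + 2) by lia,
    add_right_comm] at hbound
  exact hbound

/-- Resampling the stacks at `a + 1` and `a + 2` turns a rising triple into a walk that reaches
level `h` first on the triple, while keeping the stack at `a`. -/
theorem fairBits_real_rising_le_resampled (hm : 64 ≤ m) (hl : ∀ y, l y + m ≤ h) (a e : ℤ)
    (j : ℕ) :
    (fairBits ℕ).real {b | ∃ t, IsRisingTriple x l h a e j t b} ≤
      256 / m * (fairBits (ℤ × ℕ)).real
        ({η | tally true (stack η a)
          (h - l a + (if x = a then 1 else 0) - (if e = a then 1 else 0)) = j} ∩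
          {η | stackWalk η x ∈ reachesTriple x l h a}) := by
  by_cases hex : ∃ w t, IsRisingTriple x l h a e j t w
  swap
  · have : {b | ∃ t, IsRisingTriple x l h a e j t b} = ∅ :=
      Set.eq_empty_of_forall_notMem fun b hb => hex ⟨b, hb⟩
    rw [this, measureReal_empty]
    positivity
  obtain ⟨w, t, hw⟩ := hex
  obtain ⟨q, hq⟩ := hw.fairBinomial_mul_le hm hl
  have hlow := le_fairBits_real_reachesTriple (fun z => by have := hl z; lia) hw q
  have hod : h - l a + (if x = a then 1 else 0) - (if e = a then 1 else 0) =
      odometer x w t a := by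
    have := hw.odometer_add (y := a) (by simp [triple])
    have := hl a
    lia
  rw [hod]
  set O := (fairBits (ℤ × ℕ)).real (compatibleOff x l h a e j)
  have hcoef : 0 ≤ fairBinomial (odometer x w t a) j * O :=
    mul_nonneg (fairBinomial_nonneg _ _) measureReal_nonneg
  calc _ ≤ fairBinomial (odometer x w t a) j * (_ * (_ * O)) := fairBits_real_rising_le hw
    _ = fairBinomial (odometer x w t a) j * O * (_ * _) := by ring
    _ ≤ fairBinomial (odometer x w t a) j * O * _ := mul_le_mul_of_nonneg_left hq hcoef
    _ = 256 / m * (fairBinomial (odometer x w t a) j * (_ * (_ * O))) := by ring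
    _ ≤ _ := mul_le_mul_of_nonneg_left hlow (by positivity)

end Resampling

/-! ### Favorite triples are rare -/

section TripleBound

variable {x a y : ℤ} {l : ℤ → ℕ} {h m t : ℕ} {b : ℕ → Bool}

/-- The event that the triple at `a` is favorite at some time, when `a + 1` has been left upwards
at least as often as downwards. -/
def risingTriple (x : ℤ) (l : ℤ → ℕ) (h : ℕ) (a : ℤ) : Set (ℕ → Bool) :=
  {b | ∃ t, IsFavoriteTriple x l h b t a ∧ exits false x b t (a + 1) ≤ exits true x b t (a + 1)}

theorem measurableSet_risingTriple (x : ℤ) (l : ℤ → ℕ) (h : ℕ) (a : ℤ) :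
    MeasurableSet (risingTriple x l h a) :=
  measurableSet_exists_of_dependsOn fun t b b' hb => by
    simp only [dependsOn_isFavoriteTriple x l h t a hb, exits_congr hb]

theorem fairBits_real_biUnion_rising_le (hm : 64 ≤ m) (hl : ∀ y, l y + m ≤ h) (a e : ℤ) :
    (fairBits ℕ).real (⋃ j ∈ Finset.range (h + 2), {b | ∃ t, IsRisingTriple x l h a e j t b}) ≤
      256 / m * (fairBits ℕ).real (reachesTriple x l h a) := by
  refine (measureReal_biUnion_finset_le _ _).trans ?_
  refine (Finset.sum_le_sum fun j _ => fairBits_real_rising_le_resampled hm hl a e j).trans ?_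
  rw [← Finset.mul_sum]
  refine mul_le_mul_of_nonneg_left ?_ (by positivity)
  have mR := measurableSet_reachesTriple x l h a
  rw [← measureReal_biUnion_finset]
  · rw [← (measurePreserving_stackWalk x).measureReal_preimage mR.nullMeasurableSet]
    exact measureReal_mono (Set.iUnion₂_subset fun j _ => Set.inter_subset_right)
  · intro i _ i' _ hne
    exact Set.disjoint_left.2 fun η hη hη' => hne (hη.1.symm.trans hη'.1)
  · exact fun j _ => ((measurePreserving_stack a).measurable
      (measurableSet_tally_eq true _ j)).inter (measurable_stackWalk x mR)

theorem risingTriple_subset (x : ℤ) (l : ℤ → ℕ) (h : ℕ) (a : ℤ) :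
    risingTriple x l h a ⊆ ⋃ e ∈ ({a, a + 1, a + 2} : Finset ℤ),
      ⋃ j ∈ Finset.range (h + 2), {b | ∃ t, IsRisingTriple x l h a e j t b} := by
  rintro b ⟨t, hfav, hrise⟩
  have hj : exits true x b t a < h + 2 := by
    have := exits_true_add_false x b t a
    have := odometer_add_ite_position x b t a
    have := hfav.2.1 a (by simp [triple])
    split_ifs at * <;> lia
  simp only [Set.mem_iUnion, Finset.mem_range]
  exact ⟨position x b t, by simpa [triple] using hfav.1, _, hj, t, hfav, rfl, rfl, hrise⟩

theorem fairBits_real_risingTriple_le (hm : 64 ≤ m) (hl : ∀ y, l y + m ≤ h) (a : ℤ) :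
    (fairBits ℕ).real (risingTriple x l h a) ≤
      768 / m * (fairBits ℕ).real (reachesTriple x l h a) := by
  refine (measureReal_mono (risingTriple_subset x l h a) (measure_ne_top _ _)).trans ?_
  refine (measureReal_biUnion_finset_le _ _).trans ?_
  refine (Finset.sum_le_card_nsmul _ _ _ fun e _ =>
    fairBits_real_biUnion_rising_le hm hl a e).trans ?_
  rw [nsmul_eq_mul, ← mul_assoc]
  refine mul_le_mul_of_nonneg_right ?_ measureReal_nonneg
  have hcard : ((({a, a + 1, a + 2} : Finset ℤ).card : ℕ) : ℝ) ≤ 3 := by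
    exact_mod_cast Finset.card_le_three
  calc _ ≤ (3 : ℝ) * (256 / m) := by gcongr
    _ = _ := by ring

theorem position_neg_not (x : ℤ) (b : ℕ → Bool) (t : ℕ) :
    position (-x) (fun k => !(b k)) t = -position x b t := by
  induction t with
  | zero => rfl
  | succ t ih => cases hb : b t <;> simp [position, ih, hb, step] <;> ring

theorem localTime_neg_not (x : ℤ) (b : ℕ → Bool) (t : ℕ) (y : ℤ) :
    localTime (-x) (fun k => !(b k)) t y = localTime x b t (-y) := by
  simp only [localTime, position_neg_not, neg_eq_iff_eq_neg]

theorem exits_neg_not (c : Bool) (x : ℤ) (b : ℕ → Bool) (t : ℕ) (y : ℤ) :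
    exits c (-x) (fun k => !(b k)) t y = exits (!c) x b t (-y) := by
  simp only [exits, position_neg_not, neg_eq_iff_eq_neg, Bool.not_eq_eq_eq_not]

theorem mem_triple_neg : y ∈ triple (-a - 2) ↔ -y ∈ triple a := by
  simp only [mem_triple]
  lia

theorem ReachesFirst.of_neg_not
    (hy : ReachesFirst (-x) (fun z => l (-z)) h (fun k => !(b k)) y) :
    ReachesFirst x l h b (-y) := by
  obtain ⟨t, hbelow, ht⟩ := hy
  simp only [localTime_neg_not] at hbelow ht
  exact ⟨t, fun s hs z => by simpa only [neg_neg] using hbelow s hs (-z), ht⟩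

theorem IsFavoriteTriple.neg_not (hT : IsFavoriteTriple x l h b t a) :
    IsFavoriteTriple (-x) (fun z => l (-z)) h (fun k => !(b k)) t (-a - 2) := by
  obtain ⟨hpos, hin, hout⟩ := hT
  refine ⟨?_, fun y hy => ?_, fun y hy => ?_⟩
  · rwa [position_neg_not, mem_triple_neg, neg_neg]
  · rw [localTime_neg_not]
    exact hin _ (mem_triple_neg.1 hy)
  · rw [localTime_neg_not]
    exact hout _ fun h => hy (mem_triple_neg.2 h)

theorem setOf_favorite_subset_risingTriple_union (x : ℤ) (l : ℤ → ℕ) (h : ℕ) (a : ℤ) :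
    {b | ∃ t, IsFavoriteTriple x l h b t a} ⊆ risingTriple x l h a ∪
      {b | (fun k => !(b k)) ∈ risingTriple (-x) (fun z => l (-z)) h (-a - 2)} := by
  rintro b ⟨t, hT⟩
  rcases le_total (exits false x b t (a + 1)) (exits true x b t (a + 1)) with hc | hc
  · exact Or.inl ⟨t, hT, hc⟩
  · refine Or.inr ⟨t, hT.neg_not, ?_⟩
    rw [exits_neg_not, exits_neg_not, show -(-a - 2 + 1) = a + 1 by ring]
    exact hc

theorem fairBits_real_favorite_le (hm : 64 ≤ m) (hl : ∀ y, l y + m ≤ h) (a : ℤ) :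
    (fairBits ℕ).real {b | ∃ t, IsFavoriteTriple x l h b t a} ≤
      1536 / m * (fairBits ℕ).real (reachesTriple x l h a) := by
  have hrise := fairBits_real_risingTriple_le (x := x) hm hl a
  have hfall := fairBits_real_risingTriple_le (x := -x) (l := fun z => l (-z)) hm
    (fun y => hl (-y)) (-a - 2)
  have hreach : (fairBits ℕ).real (reachesTriple (-x) (fun z => l (-z)) h (-a - 2)) ≤
      (fairBits ℕ).real (reachesTriple x l h a) := by
    rw [← fairBits_real_not_preimage (measurableSet_reachesTriple _ _ _ _)]
    refine measureReal_mono ?_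
    rintro b ⟨y, hy, hb⟩
    exact ⟨-y, mem_triple_neg.1 hy, hb.of_neg_not⟩
  have hunion := (measureReal_mono (μ := fairBits ℕ)
    (setOf_favorite_subset_risingTriple_union x l h a)).trans (measureReal_union_le _ _)
  rw [fairBits_real_not_preimage (measurableSet_risingTriple _ _ _ _)] at hunion
  calc _ ≤ _ := hunion
    _ ≤ 768 / m * (fairBits ℕ).real (reachesTriple x l h a) +
        768 / m * (fairBits ℕ).real (reachesTriple x l h a) := by
      refine add_le_add hrise (hfall.trans ?_)
      gcongr
    _ = _ := by ring

theorem tsum_reachesTriple_le (hl : ∀ y, l y < h) :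
    ∑' a, fairBits ℕ (reachesTriple x l h a) ≤ 3 := by
  have hsum : ∑' y, fairBits ℕ {b | ReachesFirst x l h b y} ≤ 1 := by
    rw [← measure_iUnion _ fun y => measurableSet_reachesFirst x l h y]
    · exact prob_le_one
    · exact fun y y' hne => Set.disjoint_left.2 fun b hy hy' =>
        hne (ReachesFirst.unique hl hy hy')
  have hshift : ∀ c : ℤ, ∑' a, fairBits ℕ {b | ReachesFirst x l h b (a + c)} ≤ 1 := fun c =>
    ((Equiv.addRight c).tsum_eq fun y => fairBits ℕ {b | ReachesFirst x l h b y}).le.trans hsum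
  calc ∑' a, fairBits ℕ (reachesTriple x l h a)
      ≤ ∑' a, (fairBits ℕ {b | ReachesFirst x l h b a} +
          (fairBits ℕ {b | ReachesFirst x l h b (a + 1)} +
            fairBits ℕ {b | ReachesFirst x l h b (a + 2)})) := by
        refine ENNReal.tsum_le_tsum fun a => ?_
        rw [reachesTriple_eq_union]
        exact (measure_union_le _ _).trans (add_le_add le_rfl (measure_union_le _ _))
    _ ≤ 1 + (1 + 1) := by
        rw [ENNReal.tsum_add, ENNReal.tsum_add]
        exact add_le_add hsum (add_le_add (hshift 1) (hshift 2))
    _ = 3 := by norm_num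

theorem fairBits_real_exists_favoriteTriple_le (hm : 1 ≤ m) (hl : ∀ y, l y + m ≤ h) :
    (fairBits ℕ).real {b | ∃ t a, IsFavoriteTriple x l h b t a} ≤ 4608 / m := by
  rcases lt_or_ge m 64 with hm64 | hm64
  · refine measureReal_le_one.trans ?_
    rw [le_div_iff₀ (by exact_mod_cast hm)]
    have : (m : ℝ) < 64 := by exact_mod_cast hm64
    linarith
  have hunion : {b | ∃ t a, IsFavoriteTriple x l h b t a} =
      ⋃ a, {b | ∃ t, IsFavoriteTriple x l h b t a} := by
    ext b
    simp only [Set.mem_iUnion, Set.mem_ofPred_eq]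
    exact exists_comm
  have hstep : ∀ a, fairBits ℕ {b | ∃ t, IsFavoriteTriple x l h b t a} ≤
      ENNReal.ofReal (1536 / m) * fairBits ℕ (reachesTriple x l h a) := fun a => by
    have := ENNReal.ofReal_le_ofReal (fairBits_real_favorite_le (x := x) hm64 hl a)
    rwa [ENNReal.ofReal_mul (by positivity), ofReal_measureReal, ofReal_measureReal] at this
  refine ENNReal.toReal_le_of_le_ofReal (by positivity) ?_
  calc fairBits ℕ {b | ∃ t a, IsFavoriteTriple x l h b t a}
      ≤ ∑' a, fairBits ℕ {b | ∃ t, IsFavoriteTriple x l h b t a} := by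
        rw [hunion]; exact measure_iUnion_le _
    _ ≤ ENNReal.ofReal (1536 / m) * ∑' a, fairBits ℕ (reachesTriple x l h a) := by
        rw [← ENNReal.tsum_mul_left]; exact ENNReal.tsum_le_tsum hstep
    _ ≤ ENNReal.ofReal (1536 / m) * ENNReal.ofReal 3 := by
        gcongr
        refine (tsum_reachesTriple_le fun y => ?_).trans (by norm_num)
        have := hl y
        lia
    _ = ENNReal.ofReal (4608 / m) := by
        rw [← ENNReal.ofReal_mul (by positivity)]; congr 1; ring

end TripleBound

/-! ### Reconstructing a walk from its edge crossings -/

section Profile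

variable {η : ℤ × ℕ → Bool} {o x y : ℤ} {c : Bool} {f : ℕ → Bool} {n j j' m : ℕ}

/-- The `n`-th entry `c` of `f` is preceded by exactly `j` entries other than `c`: the first time
at which the tally of `c` reaches `n` is `n + j`. -/
def FailuresUntil (c : Bool) (f : ℕ → Bool) (n j : ℕ) : Prop :=
  tally c f (n + j) = n ∧ ∀ m < n + j, tally c f m < n

theorem FailuresUntil.eq_of_le_tally (h : FailuresUntil c f n j) (hm : m ≤ n + j)
    (hn : n ≤ tally c f m) : m = n + j :=
  hm.eq_of_not_lt fun hlt => (h.2 m hlt).not_ge hn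

theorem FailuresUntil.unique (h : FailuresUntil c f n j) (h' : FailuresUntil c f n j') :
    j = j' := by
  rcases le_total j j' with hj | hj
  · have := h'.eq_of_le_tally (m := n + j) (by omega) h.1.ge
    omega
  · have := h.eq_of_le_tally (m := n + j') (by omega) h'.1.ge
    omega

theorem failuresUntil_zero_left : FailuresUntil c f 0 j ↔ j = 0 := by
  refine ⟨fun h => by_contra fun hj => absurd (h.2 0 (by omega)) (Nat.not_lt_zero _), ?_⟩
  rintro rfl
  exact ⟨rfl, fun m hm => absurd hm (Nat.not_lt_zero m)⟩

theorem failuresUntil_succ_left :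
    FailuresUntil c f (n + 1) j ↔ tally c f (n + j) = n ∧ f (n + j) = c := by
  have hsucc := tally_succ c f (n + j)
  rw [FailuresUntil, add_right_comm]
  constructor
  · rintro ⟨htally, hbefore⟩
    have := hbefore (n + j) (Nat.lt_succ_self _)
    split_ifs at hsucc with hf
    · exact ⟨by omega, hf⟩
    · omega
  · rintro ⟨htally, hf⟩
    rw [if_pos hf] at hsucc
    refine ⟨by omega, fun m hm => ?_⟩
    have : tally c f m ≤ tally c f (n + j) := tally_mono c f (Nat.le_of_lt_succ hm)
    omega

/-- Numbers `u y` of crossings from `y` to `y + 1` and `d y` of crossings from `y` to `y - 1` that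
are consistent with the stacks `η` and with a walk from `o` that stops on an arrival at `x` from
`x - 1`: the last departure from each site is towards the edge between `x - 1` and `x`. -/
structure IsCrossingProfile (η : ℤ × ℕ → Bool) (o x : ℤ) (u d : ℤ → ℕ) : Prop where
  crossing : ∀ y, u y + (if y + 1 ≤ o then 1 else 0) = d (y + 1) + (if y + 1 ≤ x then 1 else 0)
  finite_support : (fun y => u y + d y).support.Finite
  right : ∀ y, x ≤ y → FailuresUntil false (stack η y) (d y) (u y)
  left : ∀ y < x, FailuresUntil true (stack η y) (u y) (d y)
  one_le : 1 ≤ d x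

namespace IsCrossingProfile

variable {u d : ℤ → ℕ} {b : ℕ → Bool} {s : ℕ}

theorem tally_true (h : IsCrossingProfile η o x u d) (y : ℤ) :
    tally true (stack η y) (u y + d y) = u y := by
  rcases lt_or_ge y x with hy | hy
  · exact (h.left y hy).1
  · have hfalse := (h.right y hy).1
    have := tally_true_add_false (stack η y) (d y + u y)
    rw [add_comm (u y)]
    omega

theorem tally_false (h : IsCrossingProfile η o x u d) (y : ℤ) :
    tally false (stack η y) (u y + d y) = d y := by
  have := tally_true_add_false (stack η y) (u y + d y)
  have := h.tally_true y
  omega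

theorem exits_eq (h : IsCrossingProfile η o x u d) (hb : Follows η o b s)
    (hy : odometer o b s y = u y + d y) : exits true o b s y = u y ∧ exits false o b s y = d y := by
  rw [hb.exits_eq, hb.exits_eq, hy]
  exact ⟨h.tally_true y, h.tally_false y⟩

theorem odometer_eq_of_exits_true (h : IsCrossingProfile η o x u d) (hb : Follows η o b s)
    (hy : y < x) (hle : odometer o b s y ≤ u y + d y) (hu : u y ≤ exits true o b s y) :
    odometer o b s y = u y + d y :=
  (h.left y hy).eq_of_le_tally hle (hb.exits_eq y ▸ hu)

theorem odometer_eq_of_exits_false (h : IsCrossingProfile η o x u d) (hb : Follows η o b s)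
    (hy : x ≤ y) (hle : odometer o b s y ≤ u y + d y) (hd : d y ≤ exits false o b s y) :
    odometer o b s y = u y + d y := by
  rw [add_comm] at hle ⊢
  exact (h.right y hy).eq_of_le_tally hle (hb.exits_eq y ▸ hd)

/-- The profile is stable off `x`, so by the least action principle the first site to be left more
often than the profile prescribes is `x`. -/
theorem exists_odometer_eq_at (h : IsCrossingProfile η o x u d) (hb : ∀ t, Follows η o b t) :
    ∃ s, position o b s = x ∧ odometer o b s x = u x + d x ∧
      ∀ z, odometer o b s z ≤ u z + d z := by
  have hexceeds : ∃ t z, u z + d z < odometer o b t z := exists_lt_odometer h.finite_support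
  obtain ⟨s, hs⟩ : ∃ s, Nat.find hexceeds = s + 1 := by
    refine Nat.exists_eq_succ_of_ne_zero fun h₀ => ?_
    obtain ⟨z, hz⟩ := Nat.find_spec hexceeds
    rw [h₀] at hz
    exact absurd hz (Nat.not_lt_zero _)
  obtain ⟨z, hz⟩ := Nat.find_spec hexceeds
  have hle : ∀ z, odometer o b s z ≤ u z + d z := by
    have := Nat.find_min hexceeds (m := s) (by omega)
    push Not at this
    exact this
  rw [hs, odometer_succ] at hz
  have hpos : position o b s = z := by
    by_contra hne
    rw [if_neg hne] at hz
    exact absurd (hle z) (by omega)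
  obtain rfl : z = x := by
    by_contra hne
    have hleast := (hb s).odometer_le_of_stable (N := fun z => u z + d z) (Y := {x}ᶜ) (s := s)
      (fun y hy => ?_) (fun z _ => hle z) le_rfl
    · exact absurd (hleast.2 z hne) (by simpa using hz)
    · have hyx : y ≠ x := hy
      have hin := h.crossing (y - 1)
      have hout := h.crossing y
      rw [sub_add_cancel] at hin
      rw [h.tally_true, h.tally_false]
      split_ifs at * <;> omega
  rw [if_pos hpos] at hz
  exact ⟨s, hpos, le_antisymm (hle z) (by omega), hle⟩

/-- The stacks determine the departures from each site from the crossings of the edge between it and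
its neighbour closer to `x`, so that the profile spreads from `x` to all sites. -/
theorem odometer_eq (h : IsCrossingProfile η o x u d) (hb : Follows η o b s)
    (hpos : position o b s = x) (hx : odometer o b s x = u x + d x)
    (hle : ∀ z, odometer o b s z ≤ u z + d z) (y : ℤ) : odometer o b s y = u y + d y := by
  rcases le_total x y with hy | hy
  · induction y, hy using Int.leInduction with
    | base => exact hx
    | succ y hy ih =>
      have hu := (h.exits_eq hb ih).1
      have hwalk := exits_true_add_ite_start o b s y
      have hprofile := h.crossing y
      rw [hpos] at hwalk
      exact h.odometer_eq_of_exits_false hb (by omega) (hle _) (by omega)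
  · induction y, hy using Int.leInductionDown with
    | base => exact hx
    | pred y hy ih =>
      have hd := (h.exits_eq hb ih).2
      have hwalk := exits_true_add_ite_start o b s (y - 1)
      have hprofile := h.crossing (y - 1)
      rw [sub_add_cancel] at hwalk hprofile
      rw [hpos] at hwalk
      exact h.odometer_eq_of_exits_true hb (by omega) (hle _) (by omega)

theorem position_le_of_odometer_eq (h : IsCrossingProfile η o x u d) (ho : o ≤ x)
    (hb : ∀ t, Follows η o b t) (hs : odometer o b s x = u x + d x) : position o b s ≤ x := by
  induction s with
  | zero => exact ho
  | succ s ih =>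
    rw [odometer_succ] at hs
    by_cases hpos : position o b s = x
    · rw [if_pos hpos] at hs
      obtain ⟨n, hn⟩ : ∃ n, d x = n + 1 :=
        Nat.exists_eq_succ_of_ne_zero (by have := h.one_le; omega)
      have hlast := (failuresUntil_succ_left.1 (hn ▸ h.right x le_rfl)).2
      have hread := hb (s + 1) x s s.lt_succ_self hpos
      have hdown : b s = false := by
        rw [hread, show odometer o b s x = n + u x by omega]
        exact hlast
      rw [position, hdown, hpos, step_false]
      omega
    · rw [if_neg hpos] at hs
      have := ih (by omega)
      rw [position, step]
      split_ifs <;> omega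

theorem exits_true_lt (h : IsCrossingProfile η o x u d) (ho : o < x) (hb : ∀ t, Follows η o b t)
    {s' : ℕ} (hpos : position o b s = x) (hx : odometer o b s x = u x + d x) (hs : s' < s) :
    exits true o b s' (x - 1) < u (x - 1) := by
  by_contra! hge
  have hodometer : Monotone (odometer o b · x) := odometer_mono o b x
  have hle : odometer o b s' x ≤ u x + d x := (hodometer hs.le).trans_eq hx
  have hd : exits false o b s' x ≤ d x :=
    (exits_mono false o b x hs.le).trans_eq (h.exits_eq (hb s) hx).2
  have hprofile := h.crossing (x - 1)
  have hwalk := exits_true_add_ite_start o b s' (x - 1)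
  rw [sub_add_cancel, if_neg (by omega)] at hprofile hwalk
  rw [if_pos le_rfl] at hprofile
  have hx' : odometer o b s' x = u x + d x :=
    h.odometer_eq_of_exits_false (hb s') le_rfl hle (by split_ifs at hwalk <;> omega)
  have hpos' : position o b s' = x := by
    have := h.position_le_of_odometer_eq ho.le hb hx'
    split_ifs at hwalk <;> omega
  have hstep : odometer o b (s' + 1) x ≤ odometer o b s x := hodometer hs
  rw [odometer_succ, if_pos hpos'] at hstep
  omega

theorem exists_exits_eq (h : IsCrossingProfile η o x u d) (ho : o < x)
    (hb : ∀ t, Follows η o b t) :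
    ∃ s, position o b s = x ∧ (∀ y, exits true o b s y = u y ∧ exits false o b s y = d y) ∧
      ∀ s' < s, exits true o b s' (x - 1) < u (x - 1) := by
  obtain ⟨s, hpos, hx, hle⟩ := h.exists_odometer_eq_at hb
  exact ⟨s, hpos, fun y => h.exits_eq (hb s) (h.odometer_eq (hb s) hpos hx hle y),
    fun s' hs => h.exits_true_lt ho hb hpos hx hs⟩

end IsCrossingProfile

section Join

variable {r v : ℕ → ℕ} {h k t : ℕ} {b : ℕ → Bool}

/-- The downcrossings that number `r n` at `x + n` and `v n` at `x - n`. -/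
def joinDown (x : ℤ) (r v : ℕ → ℕ) (y : ℤ) : ℕ :=
  if x ≤ y then r (y - x).toNat else v (x - y).toNat

/-- The upcrossings that complete `joinDown` to the edge crossings of a walk from `o` to `x`. -/
def joinUp (o x : ℤ) (r v : ℕ → ℕ) (y : ℤ) : ℕ :=
  if x ≤ y then r (y + 1 - x).toNat
  else v (x - (y + 1)).toNat + if o ≤ y then 1 else 0

theorem joinDown_add (n : ℕ) : joinDown x r v (x + n) = r n := by
  rw [joinDown, if_pos (by omega), add_sub_cancel_left, Int.toNat_natCast]

theorem joinDown_sub (hrv : r 0 = v 0) (n : ℕ) : joinDown x r v (x - n) = v n := by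
  rw [joinDown]
  split_ifs with hn
  · obtain rfl : n = 0 := by omega
    simpa using hrv
  · rw [sub_sub_cancel, Int.toNat_natCast]

theorem joinUp_add (n : ℕ) : joinUp o x r v (x + n) = r (n + 1) := by
  rw [joinUp, if_pos (by omega)]
  congr
  omega

theorem joinUp_sub (n : ℕ) :
    joinUp o x r v (x - (n + 1)) = v n + if o + n < x then 1 else 0 := by
  rw [joinUp, if_neg (by omega)]
  congr 2
  · omega
  · exact propext (by omega)

theorem exists_eq_add_or_eq_sub (x y : ℤ) : (∃ n : ℕ, y = x + n) ∨ ∃ n : ℕ, y = x - (n + 1) := by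
  rcases le_or_gt x y with h | h
  · exact Or.inl ⟨(y - x).toNat, by omega⟩
  · exact Or.inr ⟨(x - 1 - y).toNat, by omega⟩

theorem joinUp_add_ite (hrv : r 0 = v 0) (ho : o < x) (y : ℤ) :
    joinUp o x r v y + (if y + 1 ≤ o then 1 else 0) =
      joinDown x r v (y + 1) + (if y + 1 ≤ x then 1 else 0) := by
  rcases exists_eq_add_or_eq_sub x y with ⟨n, rfl⟩ | ⟨n, rfl⟩
  · have := joinDown_add (x := x) (r := r) (v := v) (n + 1)
    push_cast [← add_assoc] at this
    rw [joinUp_add, this, if_neg (by omega), if_neg (by omega)]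
  · rw [joinUp_sub, show x - (n + 1) + 1 = x - n by ring, joinDown_sub hrv]
    split_ifs <;> omega

theorem finite_support_join {M : ℕ} (hrv : r 0 = v 0) (hrM : ∀ n ≥ M, r n = 0)
    (hvM : ∀ n ≥ M, v n = 0) :
    (fun y => joinUp o x r v y + joinDown x r v y).support.Finite := by
  refine (Set.finite_Icc (min o (x - 1 - M)) (x + M)).subset fun y hy => ?_
  by_contra hout
  rw [Set.mem_Icc, not_and_or, not_le, not_le] at hout
  refine hy ?_
  rcases exists_eq_add_or_eq_sub x y with ⟨n, rfl⟩ | ⟨n, rfl⟩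
  · change joinUp _ _ _ _ _ + joinDown _ _ _ _ = 0
    rw [joinUp_add, joinDown_add, hrM _ (by omega), hrM _ (by omega)]
  · have := joinDown_sub (x := x) hrv (n + 1)
    push_cast at this
    change joinUp _ _ _ _ _ + joinDown _ _ _ _ = 0
    rw [joinUp_sub, this, hvM _ (by omega), hvM _ (by omega), if_neg (by omega)]

theorem isCrossingProfile_join {M : ℕ} (ho : o < x) (hrv : r 0 = v 0) (h₀ : 1 ≤ r 0)
    (hrM : ∀ n ≥ M, r n = 0) (hvM : ∀ n ≥ M, v n = 0)
    (hr : ∀ n : ℕ, FailuresUntil false (stack η (x + n)) (r n) (r (n + 1)))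
    (hv : ∀ n : ℕ, FailuresUntil true (stack η (x - (n + 1)))
      (v n + if o + n < x then 1 else 0) (v (n + 1))) :
    IsCrossingProfile η o x (joinUp o x r v) (joinDown x r v) where
  crossing := joinUp_add_ite hrv ho
  finite_support := finite_support_join hrv hrM hvM
  right y hy := by
    obtain ⟨n, rfl⟩ := Int.le.dest hy
    rw [joinDown_add, joinUp_add]
    exact hr n
  left y hy := by
    obtain ⟨n, rfl⟩ := (exists_eq_add_or_eq_sub x y).resolve_left (by rintro ⟨n, rfl⟩; omega)
    have := joinDown_sub (x := x) hrv (n + 1)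
    push_cast at this
    rw [joinUp_sub, this]
    exact hv n
  one_le := by simpa [joinDown] using h₀

/-- At time `t`, the `k + 1`-st crossing from `x - 1` to `x` has just taken place, and the triple at
`x` is favorite with local time `h`. -/
def IsUpcrossingTriple (x : ℤ) (h k t : ℕ) (b : ℕ → Bool) : Prop :=
  IsFavoriteTriple 0 0 h b t x ∧ exits true 0 b t (x - 1) = k + 1 ∧
    ∀ s < t, exits true 0 b s (x - 1) < k + 1

theorem isFavoriteTriple_of_exits_eq_join (ho : o < x) (hrv : r 0 = v 0)
    (hb : ∀ y, exits true o b t y = joinUp o x r v y ∧ exits false o b t y = joinDown x r v y)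
    (hpos : position o b t = x) (h₀ : r 0 + 1 + r 1 = h) (h₁ : r 1 + r 2 = h) (h₂ : r 2 + r 3 = h)
    (hr : ∀ n ≥ 3, r n + r (n + 1) < h) (hv : ∀ n, v n + v (n + 1) + 1 < h) :
    IsFavoriteTriple o 0 h b t x := by
  have hlocal : ∀ y, localTime o b t y = joinUp o x r v (y - 1) + joinDown x r v (y + 1) :=
    fun y => by rw [localTime_eq_exits, (hb _).1, (hb _).2]
  have hx : localTime o b t x = r 0 + 1 + r 1 := by
    have hup := joinUp_sub (o := o) (x := x) (r := r) (v := v) 0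
    have hdown := joinDown_add (x := x) (r := r) (v := v) 1
    push_cast [zero_add, add_zero] at hup hdown
    rw [hlocal, hup, hdown, if_pos ho, hrv]
  have hright : ∀ n : ℕ, localTime o b t (x + (n + 1)) = r (n + 1) + r (n + 2) := fun n => by
    have hdown := joinDown_add (x := x) (r := r) (v := v) (n + 2)
    push_cast at hdown
    rw [hlocal, show x + (n + 1) - 1 = x + (n : ℤ) by ring,
      show x + (n + 1) + 1 = x + ((n : ℤ) + 2) by ring, joinUp_add, hdown]
  have hleft : ∀ n : ℕ, localTime o b t (x - (n + 1)) ≤ v n + v (n + 1) + 1 := fun n => by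
    have hup := joinUp_sub (o := o) (x := x) (r := r) (v := v) (n + 1)
    push_cast at hup
    rw [hlocal, show x - (n + 1) - 1 = x - ((n : ℤ) + 1 + 1) by ring,
      show x - (n + 1) + 1 = x - (n : ℤ) by ring, hup, joinDown_sub hrv]
    split_ifs <;> omega
  simp only [IsFavoriteTriple, Pi.zero_apply, zero_add, mem_triple, hpos, true_or, true_and]
  constructor
  · rintro y (rfl | rfl | rfl)
    · rw [hx, h₀]
    · simpa using (hright 0).trans h₁
    · simpa [one_add_one_eq_two] using (hright 1).trans h₂
  · intro y hy
    rcases exists_eq_add_or_eq_sub x y with ⟨n, rfl⟩ | ⟨n, rfl⟩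
    · obtain ⟨n, rfl⟩ : ∃ m, n = m + 3 := ⟨n - 3, by omega⟩
      have := (hright (n + 2)).trans_lt (hr (n + 3) (by omega))
      rwa [show x + ((n + 2 : ℕ) + 1 : ℤ) = x + (n + 3 : ℕ) by push_cast; ring] at this
    · exact (hleft n).trans_lt (hv n)

theorem exists_isUpcrossingTriple {M : ℕ} (hx : 0 < x) (hrk : r 0 = k) (hvk : v 0 = k)
    (hk : 1 ≤ k) (h₀ : k + 1 + r 1 = h) (h₁ : r 1 + r 2 = h) (h₂ : r 2 + r 3 = h)
    (hr : ∀ n ≥ 3, r n + r (n + 1) < h) (hv : ∀ n, v n + v (n + 1) + 1 < h)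
    (hrM : ∀ n ≥ M, r n = 0) (hvM : ∀ n ≥ M, v n = 0)
    (hrη : ∀ n : ℕ, FailuresUntil false (stack η (x + n)) (r n) (r (n + 1)))
    (hvη : ∀ n : ℕ, FailuresUntil true (stack η (x - (n + 1)))
      (v n + if (n : ℤ) < x then 1 else 0) (v (n + 1))) :
    ∃ t, IsUpcrossingTriple x h k t (stackWalk η 0) := by
  have hprofile : IsCrossingProfile η 0 x (joinUp 0 x r v) (joinDown x r v) :=
    isCrossingProfile_join hx (hrk.trans hvk.symm) (hk.trans_eq hrk.symm) hrM hvM hrη (by simpa)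
  obtain ⟨t, hpos, hexits, hfirst⟩ := hprofile.exists_exits_eq hx (follows_stackWalk η 0)
  have hup : joinUp 0 x r v (x - 1) = k + 1 := by
    simpa [hx, hvk] using joinUp_sub (o := 0) (x := x) (r := r) (v := v) 0
  refine ⟨t, ?_, (hexits _).1.trans hup, fun s hs => (hfirst s hs).trans_eq hup⟩
  exact isFavoriteTriple_of_exits_eq_join hx (hrk.trans hvk.symm) hexits hpos (by omega) h₁ h₂ hr hv

end Join

end Profile

/-! ### The branching chain of edge crossings -/

section Chain

variable {η : ℤ × ℕ → Bool} {z : ℤ} {c : Bool} {n j d b X M h k : ℕ} {L : List (ℕ × Finset ℕ)}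

/-- The probability that the `n`-th head of a fair coin is preceded by exactly `j` tails. -/
noncomputable def negBinomial (n j : ℕ) : ℝ := n.multichoose j / 2 ^ (n + j)

theorem negBinomial_nonneg (n j : ℕ) : 0 ≤ negBinomial n j := by
  unfold negBinomial
  positivity

theorem negBinomial_zero_left (j : ℕ) : negBinomial 0 j = if j = 0 then 1 else 0 := by
  cases j <;> simp [negBinomial]

theorem negBinomial_succ_left (n j : ℕ) : negBinomial (n + 1) j = fairBinomial (n + j) n / 2 := by
  rw [negBinomial, fairBinomial, Nat.multichoose_eq, Nat.add_right_comm, Nat.add_sub_cancel,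
    Nat.choose_symm_add, pow_succ, div_div]

theorem dependsOn_failuresUntil (c : Bool) (n j : ℕ) :
    DependsOn (· ∈ {f | FailuresUntil c f n j}) (Set.Iio (n + j)) :=
  dependsOn_mem_of_imp fun _ _ hff' hf =>
    ⟨(tally_congr hff').symm.trans hf.1, fun m hm =>
      (tally_congr fun k hk => hff' k (lt_trans hk hm)).symm.trans_lt (hf.2 m hm)⟩

theorem measurableSet_failuresUntil (c : Bool) (n j : ℕ) :
    MeasurableSet {f | FailuresUntil c f n j} :=
  measurableSet_of_dependsOn_Iio (dependsOn_failuresUntil c n j)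

theorem fairBits_real_failuresUntil (c : Bool) (n j : ℕ) :
    (fairBits ℕ).real {f | FailuresUntil c f n j} = negBinomial n j := by
  cases n with
  | zero =>
    simp only [failuresUntil_zero_left, negBinomial_zero_left]
    split_ifs with hj <;> simp [hj, fairBits]
  | succ n =>
    rw [negBinomial_succ_left, ← fairBits_real_tally_eq c (n + j) n,
      ← fairBits_real_inter_eval c (dependsOn_tally_eq c (n + j) n)]
    simp only [failuresUntil_succ_left, Set.ofPred_and]

/-- The event that the stacks at `z`, `z - step c`, … carry a branching chain started from `d` and
extinct at the end of the list: if a site is left `n` times in direction `c`, then the number of its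
departures in the other direction, plus the immigration at the next site, is the number of
departures from the next site in direction `c`. The list gives the immigration at the sites and the
values to which the chain is restricted. -/
def chainEvent (c : Bool) : List (ℕ × Finset ℕ) → ℤ → ℕ → Set (ℤ × ℕ → Bool)
  | [], _, d => {_η | d = 0}
  | (e, D) :: L, z, d =>
    ⋃ d' ∈ D, {η | FailuresUntil c (stack η z) (d + e) d'} ∩ chainEvent c L (z - step c) d'

/-- The probability of `chainEvent`. -/
noncomputable def chainProb : List (ℕ × Finset ℕ) → ℕ → ℝ
  | [], d => if d = 0 then 1 else 0
  | (e, D) :: L, d => ∑ d' ∈ D, negBinomial (d + e) d' * chainProb L d'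

theorem chainProb_nonneg (L : List (ℕ × Finset ℕ)) (d : ℕ) : 0 ≤ chainProb L d := by
  induction L generalizing d with
  | nil => rw [chainProb]; positivity
  | cons a L ih => exact Finset.sum_nonneg fun d' _ => mul_nonneg (negBinomial_nonneg _ _) (ih d')

theorem step_mul_step (c : Bool) : step c * step c = 1 := by cases c <;> rfl

theorem dependsOn_chainEvent (c : Bool) (L : List (ℕ × Finset ℕ)) (z : ℤ) (d : ℕ) :
    DependsOn (· ∈ chainEvent c L z d) {p | step c * p.1 ≤ step c * z} := by
  induction L generalizing z d with
  | nil => exact dependsOn_mem_of_imp fun _ _ _ h => h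
  | cons a L ih =>
    refine dependsOn_mem_of_imp fun η η' hη h => ?_
    simp only [chainEvent, Set.mem_iUnion, exists_prop] at h ⊢
    obtain ⟨d', hd', hz, hL⟩ := h
    have hz' := (dependsOn_stack_mem z {f | FailuresUntil c f (d + a.1) d'}) (x := η) (y := η')
      fun p hp => hη p (by rw [Set.mem_ofPred_eq, show p.1 = z from hp])
    have hL' := ih (z - step c) d' (x := η) (y := η') fun p hp => hη p ?_
    · exact ⟨d', hd', hz'.mp hz, hL'.mp hL⟩
    · have := step_mul_step c
      simp only [Set.mem_ofPred_eq, mul_sub] at hp ⊢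
      omega

theorem measurableSet_stack_failuresUntil (c : Bool) (z : ℤ) (n j : ℕ) :
    MeasurableSet {η : ℤ × ℕ → Bool | FailuresUntil c (stack η z) n j} :=
  (measurePreserving_stack z).measurable (measurableSet_failuresUntil c n j)

theorem measurableSet_chainEvent (c : Bool) (L : List (ℕ × Finset ℕ)) (z : ℤ) (d : ℕ) :
    MeasurableSet (chainEvent c L z d) := by
  induction L generalizing z d with
  | nil => exact MeasurableSet.const _
  | cons a L ih =>
    exact Finset.measurableSet_biUnion _ fun d' _ =>
      (measurableSet_stack_failuresUntil c z _ _).inter (ih _ _)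

theorem fairBits_real_chainEvent (c : Bool) (L : List (ℕ × Finset ℕ)) (z : ℤ) (d : ℕ) :
    (fairBits (ℤ × ℕ)).real (chainEvent c L z d) = chainProb L d := by
  induction L generalizing z d with
  | nil => by_cases h : d = 0 <;> simp [chainEvent, chainProb, fairBits, h]
  | cons a L ih =>
    rw [chainEvent, measureReal_biUnion_finset, chainProb]
    · refine Finset.sum_congr rfl fun d' _ => ?_
      rw [← ih (z - step c), ← fairBits_real_failuresUntil c]
      refine fairBits_real_stack_inter (measurableSet_failuresUntil c _ _)
        (measurableSet_chainEvent c L _ d') (dependsOn_chainEvent c L _ d') fun p hp hpz => ?_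
      have := step_mul_step c
      simp only [Set.mem_ofPred_eq, mul_sub, hpz] at hp
      omega
    · exact fun d₁ _ d₂ _ hne => Set.disjoint_left.2 fun η h₁ h₂ => hne (h₁.1.unique h₂.1)
    · exact fun d' _ => (measurableSet_stack_failuresUntil c z _ _).inter
        (measurableSet_chainEvent c L _ d')

theorem exists_sequence_of_mem_chainEvent (h : η ∈ chainEvent c L z d) :
    ∃ v : ℕ → ℕ, v 0 = d ∧ (∀ j ≥ L.length, v j = 0) ∧
      ∀ j : ℕ, v (j + 1) ∈ (L.getD j (0, {0})).2 ∧
        FailuresUntil c (stack η (z - step c * j)) (v j + (L.getD j (0, {0})).1) (v (j + 1)) := by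
  induction L generalizing z d with
  | nil =>
    obtain rfl : d = 0 := h
    exact ⟨0, rfl, fun _ _ => rfl, fun j => ⟨by simp, failuresUntil_zero_left.2 rfl⟩⟩
  | cons a L ih =>
    simp only [chainEvent, Set.mem_iUnion, exists_prop] at h
    obtain ⟨d', hd', hz, hL⟩ := h
    obtain ⟨v, rfl, hv₀, hv⟩ := ih hL
    refine ⟨fun j => j.casesOn d v, rfl, fun j hj => ?_, fun j => ?_⟩
    · cases j with
      | zero => simp at hj
      | succ j => exact hv₀ j (Nat.le_of_succ_le_succ hj)
    · cases j with
      | zero => simpa using ⟨hd', hz⟩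
      | succ j =>
        have := hv j
        rw [sub_sub] at this
        simpa [mul_add, add_comm] using this

/-- `X` generations with one immigrant each followed by `M` without immigration, all restricted to
values below `b`. -/
def immigrationSchedule (b X M : ℕ) : List (ℕ × Finset ℕ) :=
  List.replicate X (1, Finset.range b) ++ List.replicate M (0, Finset.range b)

theorem immigrationSchedule_succ (b X M : ℕ) :
    immigrationSchedule b (X + 1) M = (1, Finset.range b) :: immigrationSchedule b X M := rfl

theorem immigrationSchedule_zero_succ (b M : ℕ) :
    immigrationSchedule b 0 (M + 1) = (0, Finset.range b) :: immigrationSchedule b 0 M := rfl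

theorem length_immigrationSchedule (b X M : ℕ) : (immigrationSchedule b X M).length = X + M := by
  simp [immigrationSchedule]

theorem immigrationSchedule_getElem?_getD_fst (b X M j : ℕ) :
    ((immigrationSchedule b X M)[j]?.getD (0, {0})).1 = if j < X then 1 else 0 := by
  rw [immigrationSchedule, List.getElem?_append]
  simp only [List.length_replicate, List.getElem?_replicate]
  split_ifs <;> rfl

theorem lt_of_mem_immigrationSchedule (hb : 0 < b)
    (hn : n ∈ ((immigrationSchedule b X M).getD j (0, {0})).2) : n < b := by
  rw [immigrationSchedule, List.getD_eq_getElem?_getD, List.getElem?_append] at hn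
  simp only [List.length_replicate, List.getElem?_replicate] at hn
  split_ifs at hn <;> simp_all

theorem dependsOn_isUpcrossingTriple (x : ℤ) (h k t : ℕ) :
    DependsOn (IsUpcrossingTriple x h k t) (Set.Iio t) :=
  dependsOn_mem_of_imp fun _ _ hbb' hb =>
    ⟨(dependsOn_isFavoriteTriple 0 0 h t x hbb').mp hb.1,
      (exits_congr hbb').symm.trans hb.2.1, fun s hs =>
        (exits_congr fun r hr => hbb' r (lt_trans hr hs)).symm.trans_lt (hb.2.2 s hs)⟩

theorem measurableSet_exists_isUpcrossingTriple (x : ℤ) (h k : ℕ) :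
    MeasurableSet {b | ∃ t, IsUpcrossingTriple x h k t b} :=
  measurableSet_exists_of_dependsOn (dependsOn_isUpcrossingTriple x h k)

theorem exists_isUpcrossingTriple_of_mem_chainEvent {x : ℤ} {D X M h k b : ℕ} {Ds : Finset ℕ}
    (hx : x = X + 1) (hk : 1 ≤ k) (hD : k + 1 + D = h) (hb : 0 < b) (hDb : D + b ≤ h)
    (h2b : 2 * b ≤ h) (hDs : ∀ V ∈ Ds, V < b ∧ k + V + 1 < h)
    (hright : η ∈ chainEvent false
      ((0, {D}) :: (0, {k + 1}) :: (0, {D}) :: immigrationSchedule b 0 M) x k)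
    (hleft : η ∈ chainEvent true ((1, Ds) :: immigrationSchedule b X M) (x - 1) k) :
    ∃ t, IsUpcrossingTriple x h k t (stackWalk η 0) := by
  obtain ⟨r, hr₀, hrM, hr⟩ := exists_sequence_of_mem_chainEvent hright
  obtain ⟨v, hv₀, hvM, hv⟩ := exists_sequence_of_mem_chainEvent hleft
  simp only [List.length_cons, length_immigrationSchedule] at hrM hvM
  have hr₁ : r 1 = D := by simpa using (hr 0).1
  have hr₂ : r 2 = k + 1 := by simpa using (hr 1).1
  have hr₃ : r 3 = D := by simpa using (hr 2).1
  have hr₄ : ∀ n ≥ 4, r n < b := fun n hn => by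
    obtain ⟨n, rfl⟩ := Nat.exists_eq_add_of_le' hn
    exact lt_of_mem_immigrationSchedule hb (hr (n + 3)).1
  have hv₁ := hDs (v 1) (hv 0).1
  have hv₂ : ∀ n ≥ 1, v n < b := fun n hn => by
    obtain rfl | hn := hn.eq_or_lt'
    · exact hv₁.1
    obtain ⟨n, rfl⟩ := Nat.exists_eq_add_of_le' hn
    exact lt_of_mem_immigrationSchedule hb (hv (n + 1)).1
  refine exists_isUpcrossingTriple (r := r) (v := v) (M := X + M + 4) (by omega) hr₀ hv₀ hk
    (by omega) (by omega) (by omega) (fun n hn => ?_) (fun n => ?_)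
    (fun n hn => hrM n (by omega)) (fun n hn => hvM n (by omega)) (fun n => ?_) fun n => ?_
  · have := hr₄ (n + 1) (by omega)
    obtain rfl | hn := hn.eq_or_lt'
    · omega
    · have := hr₄ n hn
      omega
  · have := hv₂ (n + 1) (by omega)
    obtain rfl | hn := n.eq_zero_or_pos
    · have : v (0 + 1) = v 1 := rfl
      omega
    · have := hv₂ n hn
      omega
  · convert (hr n).2 using 2
    · simp [step]
    · rcases n with _ | _ | _ | n <;>
        simp [immigrationSchedule_getElem?_getD_fst]
  · convert (hv n).2 using 2
    · simp only [step, if_true]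
      ring
    · rcases n with _ | n
      · simp [hx]
      · simp [immigrationSchedule_getElem?_getD_fst, hx]

theorem chainProb_le_fairBits_real_exists_isUpcrossingTriple {x : ℤ} {D X M h k b : ℕ}
    {Ds : Finset ℕ} (hx : x = X + 1) (hk : 1 ≤ k) (hD : k + 1 + D = h) (hb : 0 < b)
    (hDb : D + b ≤ h) (h2b : 2 * b ≤ h) (hDs : ∀ V ∈ Ds, V < b ∧ k + V + 1 < h) :
    chainProb ((0, {D}) :: (0, {k + 1}) :: (0, {D}) :: immigrationSchedule b 0 M) k *
        chainProb ((1, Ds) :: immigrationSchedule b X M) k ≤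
      (fairBits ℕ).real {b | ∃ t, IsUpcrossingTriple x h k t b} := by
  rw [← fairBits_real_chainEvent false _ x, ← fairBits_real_chainEvent true _ (x - 1),
    ← fairBits_real_inter _ (dependsOn_chainEvent false _ x k) (dependsOn_chainEvent true _ _ k)
      (measurableSet_chainEvent _ _ _ _) (measurableSet_chainEvent _ _ _ _),
    ← (measurePreserving_stackWalk 0).measureReal_preimage
      (measurableSet_exists_isUpcrossingTriple x h k).nullMeasurableSet]
  · exact measureReal_mono fun η hη => exists_isUpcrossingTriple_of_mem_chainEvent hx hk hD hb hDb
      h2b hDs hη.1 hη.2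
  · refine Set.disjoint_left.2 fun p hp hp' => ?_
    simp only [Set.mem_ofPred_eq, step] at hp hp'
    simp at hp hp'
    omega

end Chain

/-! ### Survival estimates for the branching chain -/

section Potential

variable {b d j l n v M X : ℕ}

theorem hasSum_negBinomial (n : ℕ) : HasSum (negBinomial n) 1 := by
  cases n with
  | zero => exact (hasSum_ite_eq 0 1).congr_fun negBinomial_zero_left
  | succ n =>
    have hgeom := (hasSum_choose_mul_geometric_of_norm_lt_one (𝕜 := ℝ) n
      (r := 1 / 2) (by norm_num)).mul_right ((1 / 2) ^ (n + 1))
    rw [show (1 - 1 / 2 : ℝ) = 1 / 2 by norm_num, one_div_mul_cancel (by positivity)] at hgeom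
    refine hgeom.congr_fun fun j => ?_
    rw [negBinomial_succ_left, fairBinomial, add_comm n j, div_div, ← pow_succ, mul_assoc,
      ← pow_add, one_div_pow, mul_one_div, add_assoc]

theorem choose_mul_multichoose_add (n j l : ℕ) :
    (j + l).choose l * n.multichoose (j + l) = n.multichoose l * (n + l).multichoose j := by
  have := Nat.choose_mul (n := n + (j + l) - 1) (k := j + l) (s := j) (by omega)
  rw [show n + (j + l) - 1 - j = n + l - 1 by omega, Nat.add_sub_cancel_left,
    Nat.choose_symm_add] at this
  rw [Nat.multichoose_eq, Nat.multichoose_eq, Nat.multichoose_eq, mul_comm, this, mul_comm,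
    add_assoc, add_comm l j]

theorem hasSum_choose_mul_negBinomial (n l : ℕ) :
    HasSum (fun j => j.choose l * negBinomial n j) (n.multichoose l) := by
  have hshift : HasSum (fun j => ((j + l).choose l : ℝ) * negBinomial n (j + l))
      (n.multichoose l) := by
    have h := (hasSum_negBinomial (n + l)).mul_left (n.multichoose l : ℝ)
    rw [mul_one] at h
    refine h.congr_fun fun j => ?_
    rw [negBinomial, negBinomial, ← mul_div_assoc, ← mul_div_assoc, add_assoc, add_comm l j]
    exact_mod_cast congrArg (fun i : ℕ => (i : ℝ) / 2 ^ (n + (j + l)))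
      (choose_mul_multichoose_add n j l)
  have h := (hasSum_nat_add_iff (f := fun j => (j.choose l : ℝ) * negBinomial n j) l).1 hshift
  rwa [Finset.sum_eq_zero fun i hi => by simp [Nat.choose_eq_zero_of_lt (Finset.mem_range.1 hi)],
    add_zero] at h

theorem cast_choose_three (j : ℕ) : (j.choose 3 : ℝ) = j * (j - 1) * (j - 2) / 6 := by
  induction j with
  | zero => simp
  | succ j ih =>
    rw [Nat.choose_succ_succ' j 2, Nat.cast_add, ih, Nat.cast_choose_two]
    push_cast
    ring

theorem hasSum_negBinomial_mul_cubic (n : ℕ) (a₀ a₁ a₂ a₃ : ℝ) :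
    HasSum (fun j : ℕ => negBinomial n j * (a₀ + a₁ * j + a₂ * j ^ 2 + a₃ * j ^ 3))
      (a₀ + a₁ * n + a₂ * (n ^ 2 + 2 * n) + a₃ * (n ^ 3 + 6 * n ^ 2 + 6 * n)) := by
  have h := (((hasSum_choose_mul_negBinomial n 0).mul_left a₀).add
    ((hasSum_choose_mul_negBinomial n 1).mul_left (a₁ + a₂ + a₃))).add
    (((hasSum_choose_mul_negBinomial n 2).mul_left (2 * a₂ + 6 * a₃)).add
    ((hasSum_choose_mul_negBinomial n 3).mul_left (6 * a₃)))
  have hval : ((n.multichoose 2 : ℕ) : ℝ) = n * (n + 1) / 2 ∧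
      ((n.multichoose 3 : ℕ) : ℝ) = n * (n + 1) * (n + 2) / 6 := by
    simp only [Nat.multichoose_eq, Nat.add_succ_sub_one, cast_choose_three, Nat.cast_choose_two]
    push_cast
    constructor <;> ring
  rw [Nat.multichoose_zero_right, Nat.multichoose_one_right, hval.1, hval.2] at h
  refine Eq.mp (congrArg (HasSum _) ?_) (h.congr_fun fun j => ?_)
  · push_cast
    ring
  · rw [cast_choose_three, Nat.cast_choose_two, Nat.choose_one_right, Nat.choose_zero_right]
    push_cast
    ring

theorem le_sum_range_of_hasSum {f : ℕ → ℝ} {s : ℝ} (h : HasSum f s) (hf : ∀ j ≥ b, f j ≤ 0) :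
    s ≤ ∑ j ∈ Finset.range b, f j := by
  have := sum_le_hasSum (Finset.range b)
    (fun j hj => neg_nonneg.2 (hf j (not_lt.1 (Finset.mem_range.not.1 hj)))) h.neg
  rwa [Finset.sum_neg_distrib, neg_le_neg_iff] at this

theorem sum_range_negBinomial_le (n b : ℕ) :
    ∑ j ∈ Finset.range b, negBinomial n j ≤ 1 - negBinomial n b := by
  have := sum_le_hasSum (Finset.range (b + 1)) (fun j _ => negBinomial_nonneg n j)
    (hasSum_negBinomial n)
  rw [Finset.sum_range_succ] at this
  linarith

theorem sub_le_sum_range_negBinomial_mul_sub (n b : ℕ) :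
    (b - n : ℝ) ≤ ∑ j ∈ Finset.range b, negBinomial n j * (b - j) := by
  have h := (hasSum_negBinomial_mul_cubic n b (-1) 0 0).congr_fun
    (g := fun j : ℕ => negBinomial n j * (b - j)) fun j => by ring
  refine Eq.trans_le (by ring) (le_sum_range_of_hasSum h fun j hj => ?_)
  exact mul_nonpos_of_nonneg_of_nonpos (negBinomial_nonneg n j)
    (sub_nonpos.2 (Nat.cast_le.2 hj))

theorem negBinomial_zero_right (n : ℕ) : negBinomial n 0 = (1 / 2) ^ n := by
  simp [negBinomial]

theorem sum_range_erase_zero_negBinomial_le (hnb : n < b) :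
    ∑ j ∈ (Finset.range b).erase 0, negBinomial n j ≤ 1 - (1 / 2) ^ b := by
  rw [Finset.sum_erase_eq_sub (Finset.mem_range.2 (n.zero_le.trans_lt hnb)),
    negBinomial_zero_right]
  have hle := sum_range_negBinomial_le n b
  have hnonneg := negBinomial_nonneg n b
  have hpow : (1 / 2 : ℝ) ^ b ≤ (1 / 2) ^ n :=
    pow_le_pow_of_le_one (by norm_num) (by norm_num) hnb.le
  linarith

theorem chainProb_immigrationSchedule_zero_zero (hb : 0 < b) (M : ℕ) :
    chainProb (immigrationSchedule b 0 M) 0 = 1 := by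
  induction M with
  | zero => simp [immigrationSchedule, chainProb]
  | succ M ih =>
    rw [immigrationSchedule_zero_succ, chainProb,
      Finset.sum_eq_single_of_mem 0 (Finset.mem_range.2 hb), ih]
    · simp [negBinomial_zero_left]
    · intro j _ hj
      simp [negBinomial_zero_left, hj]

theorem one_sub_one_div_pow_nonneg {a : ℝ} (ha : 1 ≤ a) (b : ℕ) : 0 ≤ 1 - (1 / a) ^ b :=
  sub_nonneg.2 (pow_le_one₀ (by positivity) (by rwa [div_le_one (by positivity)]))

theorem sub_div_le_chainProb_add (hd : d < b) (M : ℕ) :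
    (b - d : ℝ) / b ≤ chainProb (immigrationSchedule b 0 M) d + (1 - (1 / 2) ^ b) ^ M := by
  have hb : (0 : ℝ) < b := Nat.cast_pos.2 (d.zero_le.trans_lt hd)
  have hρ := one_sub_one_div_pow_nonneg one_le_two b
  induction M generalizing d with
  | zero =>
    have hle : (b - d : ℝ) / b ≤ 1 := (div_le_one hb).2 (sub_le_self _ d.cast_nonneg)
    have := chainProb_nonneg (immigrationSchedule b 0 0) d
    rw [pow_zero]
    linarith
  | succ M ih =>
    have h₀ : 0 ∈ Finset.range b := Finset.mem_range.2 (d.zero_le.trans_lt hd)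
    calc (b - d : ℝ) / b
      _ ≤ ∑ j ∈ Finset.range b, negBinomial d j * ((b - j : ℝ) / b) := by
          simp only [← mul_div_assoc, ← Finset.sum_div]
          gcongr
          exact sub_le_sum_range_negBinomial_mul_sub d b
      _ ≤ negBinomial d 0 * chainProb (immigrationSchedule b 0 M) 0 +
            ∑ j ∈ (Finset.range b).erase 0,
              (negBinomial d j * chainProb (immigrationSchedule b 0 M) j +
                negBinomial d j * (1 - (1 / 2) ^ b) ^ M) := by
          rw [← Finset.add_sum_erase _ _ h₀, chainProb_immigrationSchedule_zero_zero (by omega),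
            Nat.cast_zero, sub_zero, div_self hb.ne']
          refine add_le_add_right (Finset.sum_le_sum fun j hj => ?_) _
          rw [← mul_add]
          exact mul_le_mul_of_nonneg_left (ih (Finset.mem_range.1 (Finset.mem_of_mem_erase hj)))
            (negBinomial_nonneg d j)
      _ = chainProb (immigrationSchedule b 0 (M + 1)) d +
            (∑ j ∈ (Finset.range b).erase 0, negBinomial d j) * (1 - (1 / 2) ^ b) ^ M := by
          rw [immigrationSchedule_zero_succ, chainProb, Finset.sum_add_distrib, Finset.sum_mul,
            ← add_assoc, add_zero,
            Finset.add_sum_erase _ (fun j => negBinomial d j * _) h₀]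
      _ ≤ _ := by
          rw [pow_succ']
          gcongr
          exact sum_range_erase_zero_negBinomial_le hd

/-- A cubic function which the chain with immigration, killed at `b`, decreases on average by at
most a multiple of `(b - v) / b`, the order of the probability of extinction before `b` without
immigration. -/
noncomputable def survivalPotential (b v : ℝ) : ℝ :=
  (b - v) + (b - v) ^ 2 / (2 * b) + (b - v) ^ 3 / (8 * b ^ 2)

theorem survivalPotential_eq {b v : ℝ} (hb : 0 < b) :
    survivalPotential b v = (b - v) * (1 + (b - v) / b / 2 + ((b - v) / b) ^ 2 / 8) := by
  unfold survivalPotential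
  field_simp

theorem survivalPotential_nonpos {b v : ℝ} (hb : 0 < b) (hv : b ≤ v) :
    survivalPotential b v ≤ 0 := by
  rw [survivalPotential_eq hb]
  refine mul_nonpos_of_nonpos_of_nonneg (sub_nonpos.2 hv) ?_
  nlinarith [sq_nonneg ((b - v) / b + 2)]

theorem survivalPotential_le {b v : ℝ} (hv : 0 ≤ v) (hvb : v < b) :
    survivalPotential b v ≤ 2 * b := by
  have hb : 0 < b := hv.trans_lt hvb
  have h₀ : 0 ≤ (b - v) / b := div_nonneg (sub_nonneg.2 hvb.le) hb.le
  have h₁ : (b - v) / b ≤ 1 := (div_le_one hb).2 (sub_le_self b hv)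
  rw [survivalPotential_eq hb, mul_comm]
  gcongr
  · linarith [pow_le_one₀ (n := 2) h₀ h₁]
  · linarith

theorem le_survivalPotential {b v : ℝ} (hb : 0 < b) (hv : v ≤ b) :
    b - v ≤ survivalPotential b v := by
  have : 0 ≤ b - v := sub_nonneg.2 hv
  have : 0 ≤ (b - v) ^ 2 / (2 * b) + (b - v) ^ 3 / (8 * b ^ 2) := by
    positivity
  rw [survivalPotential, add_assoc]
  linarith

theorem survivalPotential_le_sum_add (hv : v < b) :
    survivalPotential b v ≤
      ∑ j ∈ Finset.range b, negBinomial (v + 1) j * survivalPotential b j + 5 * ((b - v) / b) := by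
  have hb : (0 : ℝ) < b := Nat.cast_pos.2 (v.zero_le.trans_lt hv)
  have hsum := (hasSum_negBinomial_mul_cubic (v + 1) (b + b / 2 + b / 8) (-1 - 1 - 3 / 8)
    (1 / (2 * b) + 3 / (8 * b)) (-1 / (8 * b ^ 2))).congr_fun
    (g := fun j : ℕ => negBinomial (v + 1) j * survivalPotential b j) fun j => by
      unfold survivalPotential
      field_simp
      ring
  have hle := le_sum_range_of_hasSum hsum fun j hj => mul_nonpos_of_nonneg_of_nonpos
    (negBinomial_nonneg _ _) (survivalPotential_nonpos hb (Nat.cast_le.2 hj))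
  refine le_trans ?_ (add_le_add_left hle _)
  obtain ⟨w, hw⟩ : ∃ w : ℝ, v = b - w := ⟨b - v, by ring⟩
  have hw₁ : 1 ≤ w := by
    have : (v : ℝ) + 1 ≤ b := mod_cast hv
    linarith
  have : w ≤ b := by
    have := v.cast_nonneg (α := ℝ)
    linarith
  have hgap : 0 ≤ (30 * b * w - 9 * w ^ 2 + 21 * w - 13) / (8 * b ^ 2) :=
    div_nonneg (by nlinarith) (by positivity)
  rw [← sub_nonneg]
  refine hgap.trans_eq ?_
  unfold survivalPotential
  push_cast
  rw [hw]
  field_simp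
  ring

theorem one_div_four_pow_le_negBinomial (hv : v < b) : (1 / 4) ^ b ≤ negBinomial (v + 1) b := by
  have hchoose : (1 : ℝ) ≤ (v + 1).multichoose b := by
    rw [Nat.multichoose_eq]
    exact_mod_cast Nat.choose_pos (by omega)
  have hpow : (2 : ℝ) ^ (v + 1 + b) ≤ 4 ^ b := by
    rw [show (4 : ℝ) = 2 ^ 2 by norm_num, ← pow_mul]
    exact pow_le_pow_right₀ one_le_two (by omega)
  rw [negBinomial, one_div_pow]
  gcongr

theorem survivalPotential_le_sum_chainProb
    (hM : ∀ d < b, (b - d : ℝ) / (2 * b) ≤ chainProb (immigrationSchedule b 0 M) d)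
    (X : ℕ) (hv : v < b) :
    survivalPotential b v ≤ 2 * b * (1 - (1 / 4) ^ b) ^ X +
      10 * ∑ n ∈ Finset.range X, chainProb (immigrationSchedule b n M) v := by
  have hρ := one_sub_one_div_pow_nonneg (show (1 : ℝ) ≤ 4 by norm_num) b
  induction X generalizing v with
  | zero => simpa using survivalPotential_le v.cast_nonneg (Nat.cast_lt.2 hv)
  | succ X ih =>
    have hmass : ∑ j ∈ Finset.range b, negBinomial (v + 1) j ≤ 1 - (1 / 4) ^ b := by
      linarith [sum_range_negBinomial_le (v + 1) b, one_div_four_pow_le_negBinomial hv]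
    have hstep : ∑ j ∈ Finset.range b, negBinomial (v + 1) j * survivalPotential b j ≤
        (∑ j ∈ Finset.range b, negBinomial (v + 1) j) * (2 * b * (1 - (1 / 4) ^ b) ^ X) +
          10 * ∑ n ∈ Finset.range X, chainProb (immigrationSchedule b (n + 1) M) v := by
      simp only [immigrationSchedule_succ, chainProb]
      rw [Finset.sum_comm, Finset.sum_mul, Finset.mul_sum, ← Finset.sum_add_distrib]
      refine Finset.sum_le_sum fun j hj => ?_
      refine (mul_le_mul_of_nonneg_left (ih (Finset.mem_range.1 hj))
        (negBinomial_nonneg _ _)).trans_eq ?_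
      rw [← Finset.mul_sum]
      ring
    calc survivalPotential b v
      _ ≤ ∑ j ∈ Finset.range b, negBinomial (v + 1) j * survivalPotential b j +
            5 * ((b - v) / b) := survivalPotential_le_sum_add hv
      _ ≤ (1 - (1 / 4) ^ b) * (2 * b * (1 - (1 / 4) ^ b) ^ X) +
            10 * ∑ n ∈ Finset.range X, chainProb (immigrationSchedule b (n + 1) M) v +
            10 * chainProb (immigrationSchedule b 0 M) v := by
          have h₁ := mul_le_mul_of_nonneg_right hmass
            (show 0 ≤ 2 * b * (1 - (1 / 4) ^ b : ℝ) ^ X by positivity)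
          have h₂ : 5 * ((b - v : ℝ) / b) = 10 * ((b - v) / (2 * b)) := by
            field_simp
            ring
          linarith [hM v hv]
      _ = _ := by
          rw [Finset.sum_range_succ', pow_succ']
          ring

theorem exists_chainProb_lower_bounds (hb : 0 < b) :
    ∃ M X : ℕ, (∀ d < b, (b - d : ℝ) / (2 * b) ≤ chainProb (immigrationSchedule b 0 M) d) ∧
      ∀ v < b, (b - v : ℝ) / 20 ≤
        ∑ n ∈ Finset.range X, chainProb (immigrationSchedule b n M) v := by
  have hb' : (0 : ℝ) < b := Nat.cast_pos.2 hb
  obtain ⟨M, hM⟩ := exists_pow_lt_of_lt_one (show (0 : ℝ) < 1 / (2 * b) by positivity)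
    (sub_lt_self 1 (show (0 : ℝ) < (1 / 2) ^ b by positivity))
  obtain ⟨X, hX⟩ := exists_pow_lt_of_lt_one (show (0 : ℝ) < 1 / (4 * b) by positivity)
    (sub_lt_self 1 (show (0 : ℝ) < (1 / 4) ^ b by positivity))
  have hR : ∀ d < b, (b - d : ℝ) / (2 * b) ≤ chainProb (immigrationSchedule b 0 M) d := by
    intro d hd
    have hd' : (1 : ℝ) ≤ b - d := le_sub_iff_add_le'.2 (mod_cast hd)
    have h₁ : 1 / (2 * b) ≤ (b - d : ℝ) / (2 * b) := by gcongr
    have h₂ : (b - d : ℝ) / b = 2 * ((b - d) / (2 * b)) := by field_simp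
    linarith [sub_div_le_chainProb_add hd M]
  refine ⟨M, X, hR, fun v hv => ?_⟩
  have hX' : 2 * b * (1 - (1 / 4) ^ b : ℝ) ^ X ≤ 1 / 2 := by
    calc 2 * b * (1 - (1 / 4) ^ b : ℝ) ^ X ≤ 2 * b * (1 / (4 * b)) := by gcongr
      _ = 1 / 2 := by
        field_simp
        norm_num
  have hv' : (1 : ℝ) ≤ b - v := le_sub_iff_add_le'.2 (mod_cast hv)
  linarith [le_survivalPotential hb' (Nat.cast_le.2 hv.le),
    survivalPotential_le_sum_chainProb hR X hv]

end Potential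

/-! ### Lower bound for triples at a given level -/

theorem fairBinomial_add_right_symm (i j : ℕ) :
    fairBinomial (i + j) i = fairBinomial (j + i) j := by
  rw [fairBinomial, fairBinomial, Nat.choose_symm_add, add_comm]

theorem fairBinomial_div_two_le_succ (n i : ℕ) : fairBinomial n i / 2 ≤ fairBinomial (n + 1) i := by
  rw [fairBinomial, fairBinomial, pow_succ, div_div]
  gcongr
  exact n.le_succ

theorem fairBinomial_eq_succ_mul {m j : ℕ} (hj : j < m) :
    fairBinomial (2 * m) (m + j) =
      fairBinomial (2 * m) (m + (j + 1)) * ((m + j + 1) / (m - j)) := by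
  have hpos : (0 : ℝ) < m - j := sub_pos.2 (Nat.cast_lt.2 hj)
  have hchoose : ((2 * m).choose (m + j + 1) : ℝ) * (m + j + 1) =
      (2 * m).choose (m + j) * (m - j) := by
    rw [← Nat.cast_sub hj.le, show m - j = 2 * m - (m + j) by lia]
    exact_mod_cast Nat.choose_succ_right_eq (2 * m) (m + j)
  rw [fairBinomial, fairBinomial, ← add_assoc]
  field_simp
  linarith

theorem fairBinomial_central_le_mul_pow {m J j : ℕ} (hJ : J < m) (hj : j ≤ J) :
    fairBinomial (2 * m) m ≤ fairBinomial (2 * m) (m + j) * ((m + J : ℝ) / (m - J)) ^ j := by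
  have hJm : (0 : ℝ) < m - J := sub_pos.2 (Nat.cast_lt.2 hJ)
  induction j with
  | zero => simp
  | succ j ih =>
    have hjJ : (j : ℝ) + 1 ≤ J := by exact_mod_cast hj
    have hratio : ((m : ℝ) + j + 1) / (m - j) ≤ (m + J) / (m - J) :=
      div_le_div₀ (by linarith) (by linarith) hJm (by linarith)
    have hnonneg := fairBinomial_nonneg (2 * m) (m + (j + 1))
    calc fairBinomial (2 * m) m
        ≤ fairBinomial (2 * m) (m + j) * ((m + J : ℝ) / (m - J)) ^ j := ih (by lia)
      _ ≤ fairBinomial (2 * m) (m + (j + 1)) * ((m + J) / (m - J)) *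
          ((m + J : ℝ) / (m - J)) ^ j := by
        rw [fairBinomial_eq_succ_mul (by lia)]
        gcongr
      _ = _ := by ring

theorem one_div_two_mul_sqrt_le_fairBinomial_central {m : ℕ} (hm : 1 ≤ m) :
    1 / (2 * √m) ≤ fairBinomial (2 * m) m := by
  have : 0 < √(m : ℝ) := Real.sqrt_pos.2 (Nat.cast_pos.2 hm)
  rw [div_le_iff₀ (by positivity)]
  refine one_le_sq_iff₀ (mul_nonneg (fairBinomial_nonneg _ _) (by positivity)) |>.1 ?_
  rw [mul_pow, mul_pow, Real.sq_sqrt m.cast_nonneg]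
  linarith [one_le_fairBinomial_central_sq_mul hm]

theorem exp_neg_div_le_fairBinomial_even {m j : ℕ} {K : ℝ} (hj : j < m)
    (hK : 2 * (j : ℝ) ^ 2 ≤ K * (m - j)) :
    Real.exp (-K) / (2 * √m) ≤ fairBinomial (2 * m) (m + j) := by
  have hpos : (0 : ℝ) < m - j := sub_pos.2 (Nat.cast_lt.2 hj)
  have hratio : ((m : ℝ) + j) / (m - j) ≤ Real.exp (2 * j / (m - j)) := by
    refine Eq.trans_le ?_ (Real.add_one_le_exp _)
    field_simp
    ring
  have hpow : (((m : ℝ) + j) / (m - j)) ^ j ≤ Real.exp K := by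
    calc (((m : ℝ) + j) / (m - j)) ^ j ≤ Real.exp (2 * j / (m - j)) ^ j := by gcongr
      _ = Real.exp (2 * j ^ 2 / (m - j)) := by
        rw [← Real.exp_nat_mul]
        ring_nf
      _ ≤ Real.exp K := Real.exp_le_exp.2 ((div_le_iff₀ hpos).2 hK)
  have hnonneg := fairBinomial_nonneg (2 * m) (m + j)
  have hcentral : 1 / (2 * √m) ≤ fairBinomial (2 * m) (m + j) * Real.exp K :=
    calc 1 / (2 * √m) ≤ fairBinomial (2 * m) m :=
          one_div_two_mul_sqrt_le_fairBinomial_central (by lia)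
      _ ≤ fairBinomial (2 * m) (m + j) * ((m + j : ℝ) / (m - j)) ^ j :=
          fairBinomial_central_le_mul_pow hj le_rfl
      _ ≤ _ := by gcongr
  calc Real.exp (-K) / (2 * √m) = 1 / (2 * √m) / Real.exp K := by
        rw [Real.exp_neg]
        ring
    _ ≤ fairBinomial (2 * m) (m + j) := (div_le_iff₀ (Real.exp_pos K)).2 hcentral

theorem exp_neg_div_le_fairBinomial_even_of_sq {m j : ℕ} {s : ℝ} (hs : 32 ≤ s)
    (hm : s ^ 2 ≤ 4 * m + 2) (hm' : 2 * m ≤ s ^ 2) (hj : j ≤ 3 * s) :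
    Real.exp (-144) / (2 * s) ≤ fairBinomial (2 * m) (m + j) := by
  have : s ^ 2 / 8 ≤ m - j := by nlinarith
  have hjm : j < m := by
    have : (j : ℝ) < m := by nlinarith
    exact_mod_cast this
  have hm0 : (0 : ℝ) < m := Nat.cast_pos.2 (by lia)
  have hsqrt : √(m : ℝ) ≤ s := (Real.sqrt_le_left (by linarith)).2 (by linarith)
  have : 0 < √(m : ℝ) := Real.sqrt_pos.2 hm0
  refine le_trans ?_ (exp_neg_div_le_fairBinomial_even (K := 144) hjm (by nlinarith))
  gcongr

theorem exp_neg_div_le_fairBinomial {i j : ℕ} {s : ℝ} (hs : 32 ≤ s)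
    (hle : s ^ 2 ≤ 2 * (i + j)) (hge : i + j ≤ s ^ 2) (hij : |(i : ℝ) - j| ≤ 4 * s) :
    Real.exp (-144) / (4 * s) ≤ fairBinomial (i + j) i := by
  wlog hji : j ≤ i generalizing i j
  · rw [fairBinomial_add_right_symm]
    exact this (by linarith) (by linarith) (by rwa [abs_sub_comm]) (by lia)
  have hdiff := (abs_le.1 hij).2
  have := Real.exp_pos (-144)
  have hquarter : Real.exp (-144) / (4 * s) = Real.exp (-144) / (2 * s) / 2 := by ring
  rcases Nat.even_or_odd' (i + j) with ⟨m, hm | hm⟩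
  all_goals
    obtain ⟨r, rfl⟩ : ∃ r, i = m + r := Nat.exists_eq_add_of_le (by lia)
    have hmr : ((m + r + j : ℕ) : ℝ) = _ := congrArg Nat.cast hm
    push_cast at hmr hle hge hdiff
    have heven : Real.exp (-144) / (2 * s) ≤ fairBinomial (2 * m) (m + r) :=
      exp_neg_div_le_fairBinomial_even_of_sq hs (by linarith) (by linarith) (by linarith)
    have hnonneg : 0 ≤ Real.exp (-144) / (2 * s) := by positivity
    rw [hm]
  · linarith
  · linarith [fairBinomial_div_two_le_succ (2 * m) (m + r)]

/-- The constant in the lower bound `localLimitConst_div_le_negBinomial` for negative binomial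
weights within four standard deviations of their mean. -/
noncomputable def localLimitConst : ℝ :=
  Real.exp (-144) / 8

theorem localLimitConst_pos : 0 < localLimitConst := by
  unfold localLimitConst
  positivity

theorem localLimitConst_div_le_negBinomial {n j : ℕ} {s : ℝ} (hs : 32 ≤ s) (hn : 1 ≤ n)
    (hle : s ^ 2 ≤ 2 * (n + j - 1)) (hge : n + j - 1 ≤ s ^ 2) (hnj : |(n : ℝ) - 1 - j| ≤ 4 * s) :
    localLimitConst / s ≤ negBinomial n j := by
  obtain ⟨n, rfl⟩ := Nat.exists_eq_add_of_le' hn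
  push_cast at hle hge hnj
  rw [add_sub_cancel_right] at hnj
  rw [negBinomial_succ_left]
  calc localLimitConst / s = Real.exp (-144) / (4 * s) / 2 := by
        unfold localLimitConst
        ring
    _ ≤ fairBinomial (n + j) n / 2 := by
        gcongr
        exact exp_neg_div_le_fairBinomial hs (by linarith) (by linarith) hnj

theorem sub_sub_one_le_card_Icc_ceil_floor {a : ℝ} (ha : 0 ≤ a) (c : ℝ) :
    c - a - 1 ≤ (Finset.Icc ⌈a⌉₊ ⌊c⌋₊).card := by
  have hceil := Nat.ceil_lt_add_one ha
  have hfloor := Nat.lt_floor_add_one c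
  have hcard : ((⌊c⌋₊ + 1 : ℕ) : ℝ) ≤ (⌊c⌋₊ + 1 - ⌈a⌉₊ : ℕ) + ⌈a⌉₊ := by
    exact_mod_cast le_tsub_add
  rw [Nat.card_Icc]
  push_cast at hcard
  linarith

/-- The integers in the window `I_h = ((h + √h) / 2, (h + 2√h) / 2)`. -/
def upcrossingWindow (h : ℕ) : Set ℕ :=
  {k | (h + √h) / 2 < k ∧ (k : ℝ) < (h + 2 * √h) / 2}

theorem chain_mul_sum_le_sum_fairBits_real {D M h k b : ℕ} {Ds : Finset ℕ} (hk : 1 ≤ k)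
    (hD : k + 1 + D = h) (hb : 0 < b) (hDb : D + b ≤ h) (h2b : 2 * b ≤ h)
    (hDs : ∀ V ∈ Ds, V < b ∧ k + V + 1 < h) (X : ℕ) :
    negBinomial k D * negBinomial D (k + 1) * negBinomial (k + 1) D *
        chainProb (immigrationSchedule b 0 M) D *
        ∑ V ∈ Ds, negBinomial (k + 1) V *
          ∑ n ∈ Finset.range X, chainProb (immigrationSchedule b n M) V ≤
      ∑ n ∈ Finset.range X,
        (fairBits ℕ).real {b | ∃ t, IsUpcrossingTriple (n + 1) h k t b} := by
  simp only [Finset.mul_sum]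
  rw [Finset.sum_comm]
  refine Finset.sum_le_sum fun n _ => ?_
  refine Eq.trans_le ?_ (chainProb_le_fairBits_real_exists_isUpcrossingTriple
    (X := n) (M := M) rfl hk hD hb hDb h2b hDs)
  simp only [chainProb, Finset.sum_singleton, Finset.mul_sum, add_zero]
  exact Finset.sum_congr rfl fun V _ => by ring

section Window

variable {h k D : ℕ} {s : ℝ} (hs : 32 ≤ s) (hsh : s ^ 2 = h) (hk₁ : (h + s) / 2 < k)
  (hk₂ : (k : ℝ) < (h + 2 * s) / 2)

include hs hsh hk₁ hk₂

theorem window_complement_bounds (hD : k + 1 + D = h) :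
    (D : ℝ) = h - 1 - k ∧ 1 ≤ k ∧ 1 ≤ D := by
  have hDr : (D : ℝ) = h - 1 - k := by
    rw [← hD]
    push_cast
    ring
  refine ⟨hDr, ?_, ?_⟩ <;> rw [← Nat.cast_le (α := ℝ), Nat.cast_one] <;> nlinarith

theorem localLimitConst_div_pow_three_le (hD : k + 1 + D = h) :
    (localLimitConst / s) ^ 3 ≤
      negBinomial k D * negBinomial D (k + 1) * negBinomial (k + 1) D := by
  obtain ⟨hDr, hk, hD⟩ := window_complement_bounds hs hsh hk₁ hk₂ hD
  have : 4 ≤ s ^ 2 := by nlinarith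
  have hc : 0 ≤ localLimitConst / s := div_nonneg localLimitConst_pos.le (by linarith)
  have h₁ : localLimitConst / s ≤ negBinomial k D := by
    refine localLimitConst_div_le_negBinomial hs hk (by linarith) (by linarith) ?_
    rw [abs_le]
    constructor <;> linarith
  have h₂ : localLimitConst / s ≤ negBinomial D (k + 1) := by
    refine localLimitConst_div_le_negBinomial hs hD ?_ ?_ ?_ <;> push_cast
    · linarith
    · linarith
    · rw [abs_le]
      constructor <;> linarith
  have h₃ : localLimitConst / s ≤ negBinomial (k + 1) D := by
    refine localLimitConst_div_le_negBinomial hs (by lia) ?_ ?_ ?_ <;> push_cast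
    · linarith
    · linarith
    · rw [abs_le]
      constructor <;> linarith
  calc (localLimitConst / s) ^ 3
      = localLimitConst / s * (localLimitConst / s) * (localLimitConst / s) := by ring
    _ ≤ _ := mul_le_mul (mul_le_mul h₁ h₂ hc (hc.trans h₁)) h₃ hc
        (mul_nonneg (hc.trans h₁) (hc.trans h₂))

theorem exists_finset_le_sum_negBinomial_mul {b : ℕ} {f : ℕ → ℝ} (hb : (h : ℝ) ≤ 2 * b + 1)
    (hf : ∀ v < b, (b - v : ℝ) / 20 ≤ f v) :
    ∃ Ds : Finset ℕ, (∀ V ∈ Ds, V < b ∧ k + V + 1 < h) ∧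
      localLimitConst * s / 40 ≤ ∑ V ∈ Ds, negBinomial (k + 1) V * f V := by
  have hc := localLimitConst_pos
  refine ⟨Finset.Icc ⌈h / 2 - 2 * s⌉₊ ⌊h / 2 - s - 1⌋₊, ?_, ?_⟩
  all_goals have hV : ∀ V ∈ Finset.Icc ⌈h / 2 - 2 * s⌉₊ ⌊h / 2 - s - 1⌋₊,
      h / 2 - 2 * s ≤ V ∧ (V : ℝ) ≤ h / 2 - s - 1 := fun V hV =>
    ⟨Nat.ceil_le.1 (Finset.mem_Icc.1 hV).1,
      (Nat.le_floor_iff (by nlinarith)).1 (Finset.mem_Icc.1 hV).2⟩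
  · intro V hVmem
    obtain ⟨-, hV⟩ := hV V hVmem
    constructor <;> rw [← Nat.cast_lt (α := ℝ)] <;> push_cast <;> linarith
  have hcard := sub_sub_one_le_card_Icc_ceil_floor (show 0 ≤ h / 2 - 2 * s by nlinarith)
    (h / 2 - s - 1)
  have hterm : ∀ V ∈ Finset.Icc ⌈h / 2 - 2 * s⌉₊ ⌊h / 2 - s - 1⌋₊,
      localLimitConst / 20 ≤ negBinomial (k + 1) V * f V := by
    intro V hVmem
    obtain ⟨hV₁, hV₂⟩ := hV V hVmem
    have hVb : V < b := by
      rw [← Nat.cast_lt (α := ℝ)]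
      linarith
    have hnb : localLimitConst / s ≤ negBinomial (k + 1) V := by
      refine localLimitConst_div_le_negBinomial hs (by lia) ?_ ?_ ?_ <;> push_cast
      · nlinarith
      · linarith
      · rw [abs_le]
        constructor <;> linarith
    calc localLimitConst / 20 = localLimitConst / s * (s / 20) := by field_simp
      _ ≤ _ := mul_le_mul hnb ((hf V hVb).trans' (by linarith)) (by linarith)
        (negBinomial_nonneg _ _)
  refine le_trans ?_ (Finset.card_nsmul_le_sum _ _ _ hterm)
  rw [nsmul_eq_mul]
  nlinarith

end Window

theorem exists_div_pow_three_le_sum_fairBits_real {h : ℕ} (hh : 1024 ≤ h) :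
    ∃ X : ℕ, ∀ k ∈ upcrossingWindow h, localLimitConst ^ 4 / (80 * √h ^ 3) ≤
      ∑ n ∈ Finset.range X,
        (fairBits ℕ).real {b | ∃ t, IsUpcrossingTriple (n + 1) h k t b} := by
  have hs : 32 ≤ √(h : ℝ) := Real.le_sqrt_of_sq_le (by exact_mod_cast (by lia : 32 ^ 2 ≤ h))
  have hsh : √(h : ℝ) ^ 2 = h := Real.sq_sqrt h.cast_nonneg
  set s := √(h : ℝ)
  have hb : (h : ℝ) ≤ 2 * (h / 2 : ℕ) + 1 := by exact_mod_cast (by lia : h ≤ 2 * (h / 2) + 1)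
  have : 2 * ((h / 2 : ℕ) : ℝ) ≤ h := by exact_mod_cast Nat.mul_div_le h 2
  obtain ⟨M, X, hM, hX⟩ := exists_chainProb_lower_bounds (b := h / 2) (by lia)
  refine ⟨X, fun k ⟨hk₁, hk₂⟩ => ?_⟩
  have hkh : k + 1 ≤ h := by
    rw [← Nat.cast_le (α := ℝ)]
    push_cast
    nlinarith
  obtain ⟨D, hD⟩ := Nat.exists_eq_add_of_le hkh
  obtain ⟨hDr, hk, -⟩ := window_complement_bounds hs hsh hk₁ hk₂ hD.symm
  obtain ⟨Ds, hDs, hsum⟩ := exists_finset_le_sum_negBinomial_mul hs hsh hk₁ hk₂ hb hX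
  have hDb : D < h / 2 := by
    rw [← Nat.cast_lt (α := ℝ)]
    linarith
  have hdie : 1 / (2 * s) ≤ chainProb (immigrationSchedule (h / 2) 0 M) D := by
    refine le_trans ?_ (hM D hDb)
    rw [div_le_div_iff₀ (by positivity) (by linarith)]
    nlinarith
  have hspine := localLimitConst_div_pow_three_le hs hsh hk₁ hk₂ hD.symm
  have hc := localLimitConst_pos
  refine le_trans ?_ (chain_mul_sum_le_sum_fairBits_real (M := M) hk hD.symm (by lia) (by lia)
    (by lia) hDs X)
  calc localLimitConst ^ 4 / (80 * s ^ 3)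
      = (localLimitConst / s) ^ 3 * (1 / (2 * s)) * (localLimitConst * s / 40) := by
        field_simp
        norm_num
    _ ≤ _ := by
        have hspine_nonneg := (by positivity : 0 ≤ (localLimitConst / s) ^ 3).trans hspine
        exact mul_le_mul (mul_le_mul hspine hdie (by positivity) hspine_nonneg) hsum
          (by positivity) (mul_nonneg hspine_nonneg (chainProb_nonneg _ _))

/-! ### Decorrelation of levels -/

theorem fairBits_prefix_inter_le {c : ℝ} {t : ℕ} {w : ℕ → Bool} {F G : Set (ℕ → Bool)}
    (mF : MeasurableSet F) (hFc : (fairBits ℕ).real F ≤ c)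
    (hF : ∀ b ∈ G, (∀ s < t, b s = w s) → (fun i => b (t + i)) ∈ F) :
    fairBits ℕ (bitCylinder (Finset.range t) w ∩ G) ≤
      fairBits ℕ (bitCylinder (Finset.range t) w) * ENNReal.ofReal c := by
  calc fairBits ℕ (bitCylinder (Finset.range t) w ∩ G)
      ≤ fairBits ℕ (bitCylinder (Finset.range t) w ∩ {b | (fun i => b (t + i)) ∈ F}) :=
        measure_mono fun b ⟨hbw, hbG⟩ =>
          ⟨hbw, hF b hbG fun s hs => hbw s (Finset.mem_range.2 hs)⟩
    _ = fairBits ℕ (bitCylinder (Finset.range t) w) * ENNReal.ofReal ((fairBits ℕ).real F) := by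
        rw [← ofReal_measureReal, fairBits_real_prefix_inter_shift t w mF,
          ENNReal.ofReal_mul measureReal_nonneg, ofReal_measureReal]
    _ ≤ _ := by gcongr

/-- The finite word `p`, given by its length and its letters, continued by `false`. -/
def extendWord (p : Σ t, Fin t → Bool) (s : ℕ) : Bool :=
  if hs : s < p.1 then p.2 ⟨s, hs⟩ else false

/-- The finite words of bits along which `P` holds at the last letter. -/
def stoppingWords (P : ℕ → (ℕ → Bool) → Prop) : Set (Σ t, Fin t → Bool) :=
  {p | P p.1 (extendWord p)}

/-- The bit sequences that start with the word `p`. -/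
def wordCylinder (p : Σ t, Fin t → Bool) : Set (ℕ → Bool) :=
  bitCylinder (Finset.range p.1) (extendWord p)

theorem extendWord_apply (p : Σ t, Fin t → Bool) (s : Fin p.1) : extendWord p s = p.2 s :=
  dif_pos s.2

theorem mem_wordCylinder {p : Σ t, Fin t → Bool} {b : ℕ → Bool} :
    b ∈ wordCylinder p ↔ ∀ s : Fin p.1, b s = p.2 s :=
  ⟨fun hb s => (hb s (Finset.mem_range.2 s.2)).trans (extendWord_apply p s), fun hb s hs =>
    (hb ⟨s, Finset.mem_range.1 hs⟩).trans (extendWord_apply p ⟨s, Finset.mem_range.1 hs⟩).symm⟩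

theorem apply_of_mem_stoppingWords {P : ℕ → (ℕ → Bool) → Prop} {p : Σ t, Fin t → Bool}
    {b : ℕ → Bool} (hP : ∀ t, DependsOn (P t) (Set.Iio t)) (hp : p ∈ stoppingWords P)
    (hb : b ∈ wordCylinder p) : P p.1 b :=
  (hP p.1 fun s hs => hb s (Finset.mem_range.2 hs)).mpr hp

theorem iUnion_wordCylinder_stoppingWords {P : ℕ → (ℕ → Bool) → Prop}
    (hP : ∀ t, DependsOn (P t) (Set.Iio t)) :
    ⋃ p : stoppingWords P, wordCylinder p = {b | ∃ t, P t b} := by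
  ext b
  simp only [Set.mem_iUnion, Set.mem_ofPred_eq]
  refine ⟨fun ⟨p, hb⟩ => ⟨p.1.1, apply_of_mem_stoppingWords hP p.2 hb⟩, fun ⟨t, ht⟩ => ?_⟩
  let p : Σ t, Fin t → Bool := ⟨t, fun s => b s⟩
  have hp : p ∈ stoppingWords P :=
    (hP t fun s (hs : s < t) => (extendWord_apply p ⟨s, hs⟩).symm).mp ht
  exact ⟨⟨p, hp⟩, mem_wordCylinder.2 fun _ => rfl⟩

theorem pairwise_disjoint_wordCylinder_stoppingWords {P : ℕ → (ℕ → Bool) → Prop}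
    (hP : ∀ t, DependsOn (P t) (Set.Iio t)) (hunique : ∀ b t t', P t b → P t' b → t = t') :
    Pairwise (Function.onFun Disjoint fun p : stoppingWords P => wordCylinder p) := by
  rintro ⟨⟨t, v⟩, hp⟩ ⟨⟨t', v'⟩, hp'⟩ hne
  refine Set.disjoint_left.2 fun b hb hb' => hne ?_
  obtain rfl : t = t' := hunique b t t' (apply_of_mem_stoppingWords hP hp hb)
    (apply_of_mem_stoppingWords hP hp' hb')
  obtain rfl : v = v' := funext fun s =>
    (mem_wordCylinder.1 hb s).symm.trans (mem_wordCylinder.1 hb' s)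
  rfl

theorem fairBits_real_exists_inter_le {P : ℕ → (ℕ → Bool) → Prop} {G : Set (ℕ → Bool)} {c : ℝ}
    (hP : ∀ t, DependsOn (P t) (Set.Iio t)) (hunique : ∀ b t t', P t b → P t' b → t = t')
    (hc : 0 ≤ c)
    (hF : ∀ t w, P t w → ∃ F, MeasurableSet F ∧ (fairBits ℕ).real F ≤ c ∧
      ∀ b ∈ G, (∀ s < t, b s = w s) → (fun i => b (t + i)) ∈ F) :
    (fairBits ℕ).real ({b | ∃ t, P t b} ∩ G) ≤ (fairBits ℕ).real {b | ∃ t, P t b} * c := by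
  have hle : fairBits ℕ ({b | ∃ t, P t b} ∩ G) ≤
      fairBits ℕ {b | ∃ t, P t b} * ENNReal.ofReal c := by
    rw [← iUnion_wordCylinder_stoppingWords hP, Set.iUnion_inter]
    calc fairBits ℕ (⋃ p : stoppingWords P, wordCylinder p ∩ G)
        ≤ ∑' p : stoppingWords P, fairBits ℕ (wordCylinder p ∩ G) := measure_iUnion_le _
      _ ≤ ∑' p : stoppingWords P, fairBits ℕ (wordCylinder p) * ENNReal.ofReal c :=
          ENNReal.tsum_le_tsum fun p => by
            obtain ⟨F, mF, hFc, hFG⟩ := hF _ _ p.2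
            exact fairBits_prefix_inter_le mF hFc hFG
      _ = _ := by
          rw [ENNReal.tsum_mul_right,
            measure_iUnion (pairwise_disjoint_wordCylinder_stoppingWords hP hunique)
              fun p => measurableSet_bitCylinder _ _]
  simpa only [measureReal_def, ENNReal.toReal_mul, ENNReal.toReal_ofReal hc] using
    ENNReal.toReal_mono (ENNReal.mul_ne_top (measure_ne_top _ _) ENNReal.ofReal_ne_top) hle

theorem position_add (x : ℤ) (b : ℕ → Bool) (t i : ℕ) :
    position x b (t + i) = position (position x b t) (fun j => b (t + j)) i := by
  induction i with
  | zero => rfl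
  | succ i ih => rw [← add_assoc, position, position, ih]

theorem localTime_add (x : ℤ) (b : ℕ → Bool) (t i : ℕ) (y : ℤ) :
    localTime x b (t + i) y =
      localTime x b t y + localTime (position x b t) (fun j => b (t + j)) i y := by
  simp only [localTime, Nat.count_add, ← position_add, add_assoc]

theorem IsFavoriteTriple.unique {x : ℤ} {l : ℤ → ℕ} {h : ℕ} {b : ℕ → Bool} {t t' : ℕ} {a a' : ℤ}
    (ht : IsFavoriteTriple x l h b t a) (ht' : IsFavoriteTriple x l h b t' a') :
    t = t' ∧ a = a' := by
  wlog htt' : t ≤ t' generalizing t t' a a'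
  · exact (this ht' ht (by lia)).imp Eq.symm Eq.symm
  have hsub : triple a ⊆ triple a' := fun y hy => by
    by_contra hy'
    have := localTime_mono x b y htt'
    have := ht.2.1 y hy
    have := ht'.2.2 y hy'
    lia
  obtain rfl : a = a' := by
    have h₁ := mem_triple.1 (hsub (mem_triple.2 (Or.inl rfl)))
    have h₂ := mem_triple.1 (hsub (mem_triple.2 (Or.inr (Or.inr rfl))))
    lia
  refine ⟨htt'.antisymm (not_lt.1 fun hlt => ?_), rfl⟩
  obtain ⟨r, rfl⟩ := Nat.exists_eq_add_of_lt hlt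
  have hr := localTime_succ x b (t + r) (position x b (t + r + 1))
  rw [if_pos rfl] at hr
  have := localTime_mono x b (position x b (t + r + 1)) (Nat.le_add_right t r)
  have := ht.2.1 _ ht'.1
  have := ht'.2.1 _ ht'.1
  lia

/-- At time `t` some `x ≥ 1` realizes the event `A_{x,h}^{(k)}` with `k` in the window `I_h`. -/
def IsWindowTriple (h t : ℕ) (b : ℕ → Bool) : Prop :=
  ∃ x k : ℕ, 1 ≤ x ∧ k ∈ upcrossingWindow h ∧ IsUpcrossingTriple x h k t b

/-- The event that level `h` contributes to the count `N`. -/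
def windowTripleEvent (h : ℕ) : Set (ℕ → Bool) :=
  {b | ∃ t, IsWindowTriple h t b}

theorem dependsOn_isWindowTriple (h t : ℕ) : DependsOn (IsWindowTriple h t) (Set.Iio t) :=
  dependsOn_mem_of_imp fun _ _ hbb' ⟨x, k, hx, hk, hb⟩ =>
    ⟨x, k, hx, hk, (dependsOn_isUpcrossingTriple x h k t hbb').mp hb⟩

theorem measurableSet_windowTripleEvent (h : ℕ) : MeasurableSet (windowTripleEvent h) :=
  measurableSet_exists_of_dependsOn (dependsOn_isWindowTriple h)

theorem measurableSet_exists_isFavoriteTriple (x : ℤ) (l : ℤ → ℕ) (h : ℕ) :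
    MeasurableSet {b | ∃ t a, IsFavoriteTriple x l h b t a} :=
  measurableSet_exists_of_dependsOn fun t => dependsOn_mem_of_imp fun _ _ hbb' ⟨a, hb⟩ =>
    ⟨a, (dependsOn_isFavoriteTriple x l h t a hbb').mp hb⟩

theorem IsFavoriteTriple.localTime_le {h : ℕ} {b : ℕ → Bool} {t : ℕ} {x a : ℤ}
    (ht : IsFavoriteTriple x 0 h b t a) (y : ℤ) : localTime x b t y ≤ h := by
  by_cases hy : y ∈ triple a
  · simpa using (ht.2.1 y hy).le
  · simpa using (ht.2.2 y hy).le

theorem IsFavoriteTriple.shift {h h' : ℕ} {b w : ℕ → Bool} {t t' : ℕ} {x a a' : ℤ} (hh : h < h')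
    (ht : IsFavoriteTriple x 0 h w t a) (ht' : IsFavoriteTriple x 0 h' b t' a')
    (hbw : ∀ s < t, b s = w s) :
    ∃ s, IsFavoriteTriple (position x w t) (localTime x w t) h' (fun i => b (t + i)) s a' := by
  have htt' : t ≤ t' := by
    by_contra! hlt
    have hle := ht.localTime_le a'
    have hmono := localTime_mono x b a' hlt.le
    have heq := ht'.2.1 a' (mem_triple.2 (Or.inl rfl))
    rw [← localTime_congr hbw] at hle
    simp only [Pi.zero_apply] at heq
    lia
  obtain ⟨s, rfl⟩ := Nat.exists_eq_add_of_le htt'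
  refine ⟨s, ?_⟩
  have hl : localTime x w t = localTime x b t := funext fun _ => (localTime_congr hbw).symm
  rw [← position_congr hbw, hl]
  simpa only [IsFavoriteTriple, ← position_add, localTime_add, Pi.zero_apply, zero_add] using ht'

theorem fairBits_real_windowTripleEvent_inter_le {h h' : ℕ} (hh : h < h') :
    (fairBits ℕ).real (windowTripleEvent h ∩ windowTripleEvent h') ≤
      (fairBits ℕ).real (windowTripleEvent h) * (4608 / (h' - h : ℕ)) := by
  refine fairBits_real_exists_inter_le (dependsOn_isWindowTriple h) ?_ (by positivity) ?_
  · rintro b t t' ⟨x, k, -, -, ht⟩ ⟨x', k', -, -, ht'⟩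
    exact (ht.1.unique ht'.1).1
  · rintro t w ⟨x, k, -, -, hw⟩
    refine ⟨_, measurableSet_exists_isFavoriteTriple (position 0 w t) (localTime 0 w t) h',
      fairBits_real_exists_favoriteTriple_le (by lia) fun y => ?_, ?_⟩
    · have := hw.1.localTime_le y
      lia
    · rintro b ⟨t', x', k', -, -, hb⟩ hbw
      obtain ⟨s, hs⟩ := hw.1.shift hh hb.1 hbw
      exact ⟨s, x', hs⟩

/-! ### Second moment method -/

section SecondMoment

variable {α : Type*} [MeasurableSpace α] {ν : Measure α}

theorem sq_sum_measureReal_le [IsFiniteMeasure ν] {ι : Type*} {B : ι → Set α}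
    (hB : ∀ h, MeasurableSet (B h)) (I : Finset ι) :
    (∑ h ∈ I, ν.real (B h)) ^ 2 ≤
      ν.real (⋃ h ∈ I, B h) * ∑ h ∈ I, ∑ h' ∈ I, ν.real (B h ∩ B h') := by
  have mU : MeasurableSet (⋃ h ∈ I, B h) := I.measurableSet_biUnion fun h _ => hB h
  have hU : ν (⋃ h ∈ I, B h) ≠ ∞ := measure_ne_top ν _
  let u : Lp ℝ 2 ν := indicatorConstLp 2 mU hU 1
  let v : ι → Lp ℝ 2 ν := fun h => indicatorConstLp 2 (hB h) (measure_ne_top ν _) 1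
  have huv : inner ℝ u (∑ h ∈ I, v h) = ∑ h ∈ I, ν.real (B h) := by
    rw [inner_sum]
    refine Finset.sum_congr rfl fun h hh => ?_
    have hsub : B h ⊆ ⋃ h ∈ I, B h := Set.subset_biUnion_of_mem (u := B) (Finset.mem_coe.2 hh)
    rw [L2.real_inner_indicatorConstLp_one_indicatorConstLp_one, Set.inter_eq_right.2 hsub]
  have hvv : inner ℝ (∑ h ∈ I, v h) (∑ h ∈ I, v h) =
      ∑ h ∈ I, ∑ h' ∈ I, ν.real (B h ∩ B h') := by
    simp only [v, sum_inner, inner_sum, L2.real_inner_indicatorConstLp_one_indicatorConstLp_one,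
      Set.inter_comm]
  calc (∑ h ∈ I, ν.real (B h)) ^ 2 = inner ℝ u (∑ h ∈ I, v h) * inner ℝ u (∑ h ∈ I, v h) := by
        rw [huv, sq]
    _ ≤ inner ℝ u u * inner ℝ (∑ h ∈ I, v h) (∑ h ∈ I, v h) := real_inner_mul_inner_self_le _ _
    _ = _ := by
        rw [L2.real_inner_indicatorConstLp_one_indicatorConstLp_one, Set.inter_self, hvv]

theorem one_div_le_measure_limsup [IsFiniteMeasure ν] {B : ℕ → Set α} {M : ℝ}
    (hB : ∀ h, MeasurableSet (B h)) (hM : 0 < M)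
    (hI : ∀ n, ∃ I : Finset ℕ, (∀ h ∈ I, n ≤ h) ∧ 0 < ∑ h ∈ I, ν.real (B h) ∧
      ∑ h ∈ I, ∑ h' ∈ I, ν.real (B h ∩ B h') ≤ M * (∑ h ∈ I, ν.real (B h)) ^ 2) :
    ENNReal.ofReal (1 / M) ≤ ν (Filter.limsup B Filter.atTop) := by
  rw [Filter.limsup_eq_iInf_iSup_of_nat]
  simp only [Set.iInf_eq_iInter, Set.iSup_eq_iUnion]
  have hlim : Filter.Tendsto (fun n => ν (⋃ h ≥ n, B h)) Filter.atTop
      (nhds (ν (⋂ n, ⋃ h ≥ n, B h))) :=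
    tendsto_measure_iInter_atTop
      (fun n => (MeasurableSet.iUnion fun h => .iUnion fun _ => hB h).nullMeasurableSet)
      (fun n n' hnn => Set.biUnion_mono (fun h hh => hnn.trans hh) fun _ _ => subset_rfl)
      ⟨0, measure_ne_top _ _⟩
  refine ge_of_tendsto' hlim fun n => ?_
  obtain ⟨I, hIn, hpos, hsum⟩ := hI n
  have hU : ν.real (⋃ h ∈ I, B h) ≤ ν.real (⋃ h ≥ n, B h) :=
    measureReal_mono (Set.biUnion_mono hIn fun _ _ => subset_rfl) (measure_ne_top _ _)
  rw [← ofReal_measureReal (measure_ne_top ν _)]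
  refine ENNReal.ofReal_le_ofReal (le_trans ?_ hU)
  rw [div_le_iff₀ hM]
  have hsq := (sq_sum_measureReal_le hB I).trans (mul_le_mul_of_nonneg_left hsum measureReal_nonneg)
  rw [← mul_assoc, le_mul_iff_one_le_left (pow_pos hpos 2)] at hsq
  exact hsq

theorem sum_Ico_sum_Ico_of_symm {g : ℕ → ℕ → ℝ} (hg : ∀ i j, g i j = g j i) (m n : ℕ) :
    ∑ i ∈ Finset.Ico m n, ∑ j ∈ Finset.Ico m n, g i j =
      ∑ i ∈ Finset.Ico m n, g i i +
        2 * ∑ i ∈ Finset.Ico m n, ∑ j ∈ Finset.Ico (i + 1) n, g i j := by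
  have hrow : ∀ i ∈ Finset.Ico m n, ∑ j ∈ Finset.Ico m n, g i j =
      ∑ j ∈ Finset.Ico m i, g j i + (g i i + ∑ j ∈ Finset.Ico (i + 1) n, g i j) := fun i hi => by
    obtain ⟨hmi, hin⟩ := Finset.mem_Ico.1 hi
    rw [← Finset.sum_eq_sum_Ico_succ_bot hin, Finset.sum_congr rfl fun j _ => hg j i,
      Finset.sum_Ico_consecutive _ hmi hin.le]
  rw [Finset.sum_congr rfl hrow, Finset.sum_add_distrib, Finset.sum_add_distrib,
    ← Finset.sum_Ico_Ico_comm']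
  ring

theorem sum_Ico_div_sub_le {C : ℝ} (hC : 0 ≤ C) (h H : ℕ) :
    ∑ h' ∈ Finset.Ico (h + 1) H, C / (h' - h : ℕ) ≤
      C * ∑ i ∈ Finset.range H, 1 / ((i : ℝ) + 1) := by
  calc ∑ h' ∈ Finset.Ico (h + 1) H, C / (h' - h : ℕ)
      = ∑ i ∈ Finset.range (H - (h + 1)), C * (1 / ((i : ℝ) + 1)) := by
        rw [Finset.sum_Ico_eq_sum_range]
        refine Finset.sum_congr rfl fun i _ => ?_
        rw [show h + 1 + i - h = i + 1 by lia, Nat.cast_succ, mul_one_div]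
    _ ≤ ∑ i ∈ Finset.range H, C * (1 / ((i : ℝ) + 1)) :=
        Finset.sum_le_sum_of_subset_of_nonneg (Finset.range_mono (Nat.sub_le _ _))
          fun i _ _ => by positivity
    _ = _ := (Finset.mul_sum _ _ _).symm

theorem sum_Ico_sum_Ico_measureReal_inter_le {B : ℕ → Set α} {C : ℝ} (hC : 0 ≤ C)
    (hinter : ∀ h h', h < h' → ν.real (B h ∩ B h') ≤ ν.real (B h) * (C / (h' - h : ℕ)))
    (n H : ℕ) :
    ∑ h ∈ Finset.Ico n H, ∑ h' ∈ Finset.Ico n H, ν.real (B h ∩ B h') ≤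
      (1 + 2 * C * ∑ i ∈ Finset.range H, 1 / ((i : ℝ) + 1)) *
        ∑ h ∈ Finset.Ico n H, ν.real (B h) := by
  set K := ∑ i ∈ Finset.range H, 1 / ((i : ℝ) + 1)
  have hrow : ∀ h, ∑ h' ∈ Finset.Ico (h + 1) H, ν.real (B h ∩ B h') ≤ C * K * ν.real (B h) :=
    fun h => by
      calc ∑ h' ∈ Finset.Ico (h + 1) H, ν.real (B h ∩ B h')
          ≤ ∑ h' ∈ Finset.Ico (h + 1) H, ν.real (B h) * (C / (h' - h : ℕ)) :=
            Finset.sum_le_sum fun h' hh' => hinter h h' (Finset.mem_Ico.1 hh').1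
        _ ≤ ν.real (B h) * (C * K) := by
            rw [← Finset.mul_sum]
            exact mul_le_mul_of_nonneg_left (sum_Ico_div_sub_le hC h H) measureReal_nonneg
        _ = _ := mul_comm _ _
  have hupper := Finset.sum_le_sum fun h (_ : h ∈ Finset.Ico n H) => hrow h
  rw [← Finset.mul_sum] at hupper
  rw [sum_Ico_sum_Ico_of_symm fun i j => by rw [Set.inter_comm]]
  simp only [Set.inter_self]
  linarith

theorem exists_harmonic_le_sum_Ico {p : ℕ → ℝ} {c : ℝ} (hc : 0 < c) {n : ℕ} (hn : 1 ≤ n)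
    (hp : ∀ h ≥ n, c / h ≤ p h) :
    ∃ H, 1 ≤ ∑ i ∈ Finset.range H, 1 / ((i : ℝ) + 1) ∧
      c / 2 * ∑ i ∈ Finset.range H, 1 / ((i : ℝ) + 1) ≤ ∑ h ∈ Finset.Ico n H, p h := by
  set K : ℕ → ℝ := fun H => ∑ i ∈ Finset.range H, 1 / ((i : ℝ) + 1)
  obtain ⟨H, hnH, hH⟩ := ((Filter.eventually_ge_atTop n).and
    (Real.tendsto_sum_range_one_div_nat_succ_atTop.eventually_ge_atTop
      (max 1 (2 * K n)))).exists
  change _ ≤ K H at hH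
  obtain ⟨hH1, hH2⟩ := max_le_iff.1 hH
  refine ⟨H, hH1, ?_⟩
  calc c / 2 * K H ≤ c * (K H - K n) := by nlinarith
    _ = ∑ h ∈ Finset.Ico n H, c * (1 / ((h : ℝ) + 1)) := by
        rw [← Finset.mul_sum, Finset.sum_Ico_eq_sub _ hnH]
    _ ≤ ∑ h ∈ Finset.Ico n H, p h := Finset.sum_le_sum fun h hh => by
        have hnh := (Finset.mem_Ico.1 hh).1
        have : (0 : ℝ) < h := by exact_mod_cast hn.trans hnh
        refine le_trans ?_ (hp h hnh)
        rw [mul_one_div]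
        gcongr
        linarith

theorem exists_pos_le_measure_limsup [IsFiniteMeasure ν] {B : ℕ → Set α} {c C : ℝ} {n₀ : ℕ}
    (hB : ∀ h, MeasurableSet (B h)) (hc : 0 < c) (hC : 0 ≤ C)
    (hlower : ∀ h ≥ n₀, c / h ≤ ν.real (B h))
    (hinter : ∀ h h', h < h' → ν.real (B h ∩ B h') ≤ ν.real (B h) * (C / (h' - h : ℕ))) :
    ∃ δ : ℝ, 0 < δ ∧ ENNReal.ofReal δ ≤ ν (Filter.limsup B Filter.atTop) := by
  have hM : 0 < 2 / c * (1 + 2 * C) := by positivity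
  refine ⟨_, one_div_pos.2 hM, one_div_le_measure_limsup hB hM fun n => ?_⟩
  obtain ⟨H, hK, hs⟩ := exists_harmonic_le_sum_Ico hc (le_max_left 1 (max n n₀)) fun h hh =>
    hlower h (by lia)
  set n' := max 1 (max n n₀)
  set K := ∑ i ∈ Finset.range H, 1 / ((i : ℝ) + 1)
  set s := ∑ h ∈ Finset.Ico n' H, ν.real (B h)
  have hs0 : 0 < s := lt_of_lt_of_le (by positivity) hs
  refine ⟨Finset.Ico n' H, fun h hh => by have := (Finset.mem_Ico.1 hh).1; lia, hs0, ?_⟩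
  have hKs : K ≤ 2 / c * s := by
    rw [div_mul_eq_mul_div, le_div_iff₀ hc]
    linarith
  calc ∑ h ∈ Finset.Ico n' H, ∑ h' ∈ Finset.Ico n' H, ν.real (B h ∩ B h')
      ≤ (1 + 2 * C * K) * s := sum_Ico_sum_Ico_measureReal_inter_le hC hinter n' H
    _ ≤ (K * (1 + 2 * C)) * s := by gcongr; linarith
    _ ≤ (2 / c * s * (1 + 2 * C)) * s := by gcongr
    _ = 2 / c * (1 + 2 * C) * s ^ 2 := by ring

end SecondMoment

/-! ### The count of triples -/

theorem exists_finset_subset_upcrossingWindow {h : ℕ} (hh : 1024 ≤ h) :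
    ∃ W : Finset ℕ, ↑W ⊆ upcrossingWindow h ∧ √h / 4 ≤ W.card := by
  have hs : 32 ≤ √(h : ℝ) := Real.le_sqrt_of_sq_le (by norm_num; exact_mod_cast hh)
  refine ⟨Finset.Icc ⌈((h : ℝ) + √h) / 2 + 1 / 8⌉₊ ⌊((h : ℝ) + 2 * √h) / 2 - 1 / 8⌋₊,
    fun k hk => ?_, ?_⟩
  · obtain ⟨hlo, hhi⟩ := Finset.mem_Icc.1 (Finset.mem_coe.1 hk)
    have hlo' := Nat.ceil_le.1 hlo
    have hhi' := (Nat.le_floor_iff (by linarith [Nat.cast_nonneg (α := ℝ) h])).1 hhi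
    exact ⟨by linarith, by linarith⟩
  · refine le_trans ?_ (sub_sub_one_le_card_Icc_ceil_floor (by positivity) _)
    linarith

theorem pairwise_disjoint_isUpcrossingTriple (h : ℕ) :
    Pairwise (Function.onFun Disjoint fun p : ℕ × ℕ =>
      {b | ∃ t, IsUpcrossingTriple (p.2 + 1) h p.1 t b}) := by
  rintro ⟨k, n⟩ ⟨k', n'⟩ hne
  refine Set.disjoint_left.2 fun b ⟨t, ht⟩ ⟨t', ht'⟩ => hne ?_
  obtain ⟨rfl, hn⟩ := ht.1.unique ht'.1
  have hk := ht.2.1.symm.trans (hn ▸ ht'.2.1)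
  exact Prod.ext (by simpa using hk) (by simpa using hn)

theorem div_le_fairBits_real_windowTripleEvent {h : ℕ} (hh : 1024 ≤ h) :
    localLimitConst ^ 4 / 320 / h ≤ (fairBits ℕ).real (windowTripleEvent h) := by
  obtain ⟨X, hX⟩ := exists_div_pow_three_le_sum_fairBits_real hh
  obtain ⟨W, hWsub, hWcard⟩ := exists_finset_subset_upcrossingWindow hh
  have : 0 < √(h : ℝ) := Real.sqrt_pos.2 (by exact_mod_cast (by lia : 0 < h))
  calc localLimitConst ^ 4 / 320 / h
      = √h / 4 * (localLimitConst ^ 4 / (80 * √h ^ 3)) := by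
        nth_rw 1 [← Real.sq_sqrt (Nat.cast_nonneg (α := ℝ) h)]
        field_simp
        ring
    _ ≤ W.card * (localLimitConst ^ 4 / (80 * √h ^ 3)) := by
        have := localLimitConst_pos
        gcongr
    _ ≤ ∑ k ∈ W, ∑ n ∈ Finset.range X,
          (fairBits ℕ).real {b | ∃ t, IsUpcrossingTriple (n + 1) h k t b} := by
        rw [← nsmul_eq_mul]
        exact W.card_nsmul_le_sum _ _ fun k hk => hX k (hWsub hk)
    _ = (fairBits ℕ).real (⋃ p ∈ W ×ˢ Finset.range X,
          {b | ∃ t, IsUpcrossingTriple (p.2 + 1) h p.1 t b}) := by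
        rw [measureReal_biUnion_finset ((pairwise_disjoint_isUpcrossingTriple h).set_pairwise _)
          fun p _ => measurableSet_exists_of_dependsOn (dependsOn_isUpcrossingTriple _ h p.1),
          Finset.sum_product]
    _ ≤ (fairBits ℕ).real (windowTripleEvent h) := by
        refine measureReal_mono (Set.iUnion₂_subset fun p hp => ?_) (measure_ne_top _ _)
        rintro b ⟨t, ht⟩
        exact ⟨t, p.2 + 1, p.1, by lia, hWsub (Finset.mem_product.1 hp).1, by exact_mod_cast ht⟩

theorem exists_pos_le_fairBits_limsup_windowTripleEvent :
    ∃ δ : ℝ, 0 < δ ∧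
      ENNReal.ofReal δ ≤ fairBits ℕ (Filter.limsup windowTripleEvent Filter.atTop) :=
  exists_pos_le_measure_limsup measurableSet_windowTripleEvent
    (div_pos (pow_pos localLimitConst_pos 4) (by norm_num)) (by norm_num)
    (fun _ => div_le_fairBits_real_windowTripleEvent)
    fun _ _ => fairBits_real_windowTripleEvent_inter_le

/-! ### Simple random walk -/

section SimpleRandomWalk

/-- The bits that encode the steps `ξ` of a simple random walk. -/
def upBits {Ω : Type*} (ξ : ℕ → Ω → ℤ) (ω : Ω) (i : ℕ) : Bool := decide (ξ i ω = 1)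

variable {Ω : Type*} [MeasurableSpace Ω] {μ : Measure Ω} {ξ : ℕ → Ω → ℤ}

theorem measurable_decide_eq_one : Measurable fun z : ℤ => decide (z = 1) :=
  measurable_of_countable _

theorem measurable_upBits (hξ : ∀ i, Measurable (ξ i)) : Measurable (upBits ξ) :=
  measurable_pi_lambda _ fun i => measurable_decide_eq_one.comp (hξ i)

theorem eq_fairCoin_of_singleton_true {ν : Measure Bool} [IsProbabilityMeasure ν]
    (h : ν {true} = 2⁻¹) : ν = fairCoin := by
  refine Measure.ext_of_singleton fun c => ?_
  cases c
  · rw [fairCoin_singleton, show ({false} : Set Bool) = {true}ᶜ by ext c; cases c <;> simp,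
      prob_compl_eq_one_sub (measurableSet_singleton _), h, ENNReal.one_sub_inv_two]
  · rw [fairCoin_singleton, h]

theorem map_upBits_eq_fairBits [IsProbabilityMeasure μ] (hξ : ∀ i, Measurable (ξ i))
    (hindep : iIndepFun ξ μ) (hup : ∀ i, μ {ω | ξ i ω = 1} = 1 / 2) :
    μ.map (upBits ξ) = fairBits ℕ := by
  have hbit : ∀ i, Measurable fun ω => upBits ξ ω i := fun i =>
    measurable_decide_eq_one.comp (hξ i)
  have hlaw : ∀ i, μ.map (fun ω => upBits ξ ω i) = fairCoin := fun i => by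
    have := Measure.isProbabilityMeasure_map (μ := μ) (hbit i).aemeasurable
    refine eq_fairCoin_of_singleton_true ?_
    rw [Measure.map_apply (hbit i) (measurableSet_singleton _), ← one_div, ← hup i]
    congr 1
    ext ω
    simp [upBits]
  have hbits : iIndepFun (fun i ω => upBits ξ ω i) μ :=
    hindep.comp (fun _ z => decide (z = 1)) fun _ => measurable_decide_eq_one
  rw [fairBits, ← funext hlaw]
  exact hbits.map_fun_eq_infinitePi_map₀ (measurable_upBits hξ).aemeasurable

theorem ae_eq_one_or_eq_neg_one [IsProbabilityMeasure μ] {X : Ω → ℤ} (hX : Measurable X)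
    (hup : μ {ω | X ω = 1} = 1 / 2) (hdown : μ {ω | X ω = -1} = 1 / 2) :
    ∀ᵐ ω ∂μ, X ω = 1 ∨ X ω = -1 := by
  have hsing : ∀ z, MeasurableSet {ω | X ω = z} := fun z => hX (measurableSet_singleton z)
  have hdisj : Disjoint {ω | X ω = 1} {ω | X ω = -1} :=
    Set.disjoint_left.2 fun ω (h₁ : X ω = 1) (h₂ : X ω = -1) => by lia
  refine (prob_compl_eq_zero_iff ((hsing 1).union (hsing (-1)))).2 ?_
  rw [measure_union hdisj (hsing _), hup, hdown, ENNReal.add_halves]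

theorem ae_eq_step_upBits [IsProbabilityMeasure μ] (hξ : ∀ i, Measurable (ξ i))
    (hup : ∀ i, μ {ω | ξ i ω = 1} = 1 / 2) (hdown : ∀ i, μ {ω | ξ i ω = -1} = 1 / 2) :
    ∀ᵐ ω ∂μ, ∀ i, ξ i ω = step (upBits ξ ω i) := by
  refine ae_all_iff.2 fun i => ?_
  filter_upwards [ae_eq_one_or_eq_neg_one (hξ i) (hup i) (hdown i)] with ω hω
  rcases hω with h | h <;> simp [upBits, step, h]

theorem exists_pos_le_measure_frequently_windowTripleEvent [IsProbabilityMeasure μ]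
    (hξ : ∀ i, Measurable (ξ i)) (hindep : iIndepFun ξ μ) (hup : ∀ i, μ {ω | ξ i ω = 1} = 1 / 2) :
    ∃ δ : ℝ, 0 < δ ∧ ENNReal.ofReal δ ≤
      μ {ω | ∃ᶠ h in Filter.atTop, upBits ξ ω ∈ windowTripleEvent h} := by
  obtain ⟨δ, hδ, hle⟩ := exists_pos_le_fairBits_limsup_windowTripleEvent
  refine ⟨δ, hδ, hle.trans_eq ?_⟩
  rw [← map_upBits_eq_fairBits hξ hindep hup, Measure.map_apply (measurable_upBits hξ)
    (MeasurableSet.measurableSet_limsup measurableSet_windowTripleEvent)]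
  congr 1
  ext ω
  exact Filter.mem_limsup_iff_frequently_mem

end SimpleRandomWalk

section Dictionary

variable {b : ℕ → Bool} {x : ℤ} {h k t : ℕ}

theorem sum_range_step (b : ℕ → Bool) (t : ℕ) :
    ∑ i ∈ Finset.range t, step (b i) = position 0 b t := by
  induction t with
  | zero => rfl
  | succ t ih => rw [Finset.sum_range_succ, ih, position]

theorem card_filter_Icc_one (p : ℕ → Prop) [DecidablePred p] (t : ℕ) :
    ((Finset.Icc 1 t).filter p).card = Nat.count (fun s => p (s + 1)) t := by
  rw [Nat.count_eq_card_filter_range]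
  refine Finset.card_nbij' (· - 1) (· + 1) ?_ ?_ ?_ ?_ <;>
    grind [Set.MapsTo, Set.LeftInvOn]

theorem card_upcrossings_eq_exits (x : ℤ) (b : ℕ → Bool) (t : ℕ) (y : ℤ) :
    ((Finset.Icc 1 t).filter fun s => position x b s = y ∧ position x b (s - 1) = y - 1).card =
      exits true x b t (y - 1) := by
  rw [card_filter_Icc_one, exits]
  congr 1
  ext s
  simp only [position, Nat.add_sub_cancel]
  cases b s <;> simp [step] <;> lia

theorem IsFavoriteTriple.setOf_favorite (ht : IsFavoriteTriple 0 0 h b t x) :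
    {y | ∀ z, localTime 0 b t z ≤ localTime 0 b t y} = {x, x + 1, x + 2} := by
  have heq : ∀ y ∈ triple x, localTime 0 b t y = h := by simpa using ht.2.1
  ext y
  refine ⟨fun hy => ?_, fun hy z => (ht.localTime_le z).trans (heq y hy).ge⟩
  by_contra hne
  have hlt : localTime 0 b t y < h := by simpa using ht.2.2 y hne
  have hx := heq x (mem_triple.2 (Or.inl rfl))
  exact hlt.not_ge (hx ▸ hy x)

theorem IsUpcrossingTriple.isLeast (ht : IsUpcrossingTriple x h k t b) :
    IsLeast {s | 1 ≤ s ∧ exits true 0 b s (x - 1) = k + 1} t := by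
  obtain ⟨-, hk, hmin⟩ := ht
  refine ⟨⟨Nat.one_le_iff_ne_zero.2 ?_, hk⟩, fun s hs => ?_⟩
  · rintro rfl
    exact Nat.succ_ne_zero k hk.symm
  · by_contra! hlt
    exact (hmin s hlt).ne hs.2

theorem tsum_eq_top_of_frequently_one_le {f : ℕ → ℝ≥0∞} (hf : ∃ᶠ n in Filter.atTop, 1 ≤ f n) :
    ∑' n, f n = ∞ := by
  by_contra hne
  exact Nat.frequently_atTop_iff_infinite.1 hf
    (ENNReal.finite_const_le_of_tsum_ne_top hne one_ne_zero)

end Dictionary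

end FavoriteSites

/-- There is a constant `δ > 0` such that `P(N = ∞) ≥ δ`, where
`N = lim_{H→∞} N_H = Σ_{h=1}^∞ Σ_{k ∈ I_h ∩ ℤ} Σ_{x=1}^∞ 1_{A_{x,h}^{(k)}}`. -/
theorem N_infinite_with_positive_probability
    {Ω : Type*} [MeasurableSpace Ω] (μ : Measure Ω) [IsProbabilityMeasure μ]
    -- i.i.d. steps, each uniform on {−1, 1}
    (ξ : ℕ → Ω → ℤ) (hξmeas : ∀ i, Measurable (ξ i))
    (hξindep : iIndepFun ξ μ)
    (hξ1 : ∀ i, μ {ω | ξ i ω = 1} = 1 / 2)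
    (hξ2 : ∀ i, μ {ω | ξ i ω = -1} = 1 / 2)
    -- the simple random walk
    (S : ℕ → Ω → ℤ) (hS : ∀ t ω, S t ω = ∑ i ∈ Finset.range t, ξ i ω)
    -- local times
    (L : ℕ → ℤ → Ω → ℕ)
    (hL : ∀ t x ω, L t x ω = ((Finset.Icc 1 t).filter fun k => S k ω = x).card)
    -- favorite (most visited) sites
    (Fav : ℕ → Ω → Set ℤ)
    (hFav : ∀ t ω, Fav t ω = {y : ℤ | ∀ z : ℤ, L t z ω ≤ L t y ω})
    -- upcrossing counts
    (U : ℕ → ℤ → Ω → ℕ)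
    (hU : ∀ t x ω, U t x ω =
      ((Finset.Icc 1 t).filter fun k => S k ω = x ∧ S (k - 1) ω = x - 1).card)
    -- inverse upcrossing local times
    (TU : ℕ → ℤ → Ω → ℕ)
    (hTU : ∀ k x ω, TU k x ω = sInf {t : ℕ | 1 ≤ t ∧ U t x ω = k})
    -- the event of three consecutive favorite sites x, x+1, x+2, with local time h at x,
    -- at the inverse upcrossing time T_U(k+1, x)
    (A : ℕ → ℕ → ℕ → Set Ω)
    (hA : ∀ x h k, A x h k = {ω |
      Fav (TU (k + 1) (x : ℤ) ω) ω = {(x : ℤ), (x : ℤ) + 1, (x : ℤ) + 2} ∧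
      L (TU (k + 1) (x : ℤ) ω) (x : ℤ) ω = h})
    -- membership of k in the window I_h = ((h+√h)/2, (h+2√h)/2)
    (inI : ℕ → ℕ → Prop)
    (hinI : ∀ h k, inI h k ↔
      ((h : ℝ) + Real.sqrt h) / 2 < (k : ℝ) ∧ (k : ℝ) < ((h : ℝ) + 2 * Real.sqrt h) / 2)
    -- the count N of instances of three consecutive favorite sites
    (N : Ω → ℝ≥0∞)
    (hN : ∀ ω, N ω = ∑' (h : ℕ) (k : ℕ) (x : ℕ),
      if 1 ≤ h ∧ 1 ≤ x ∧ inI h k ∧ ω ∈ A x h k then (1 : ℝ≥0∞) else 0) :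
    ∃ δ : ℝ, 0 < δ ∧ ENNReal.ofReal δ ≤ μ {ω | N ω = ∞} := by
  obtain ⟨δ, hδ, hle⟩ :=
    FavoriteSites.exists_pos_le_measure_frequently_windowTripleEvent hξmeas hξindep hξ1
  refine ⟨δ, hδ, hle.trans (measure_mono_ae ?_)⟩
  filter_upwards [FavoriteSites.ae_eq_step_upBits hξmeas hξ1 hξ2] with ω hstep hfreq
  set b := FavoriteSites.upBits ξ ω
  have hSω : ∀ t, S t ω = FavoriteSites.position 0 b t := by
    simp only [hS, hstep, FavoriteSites.sum_range_step, implies_true]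
  have hLω : ∀ t y, L t y ω = FavoriteSites.localTime 0 b t y := fun t y => by
    rw [hL, FavoriteSites.card_filter_Icc_one]
    simp only [hSω, FavoriteSites.localTime]
  have hUω : ∀ t y, U t y ω = FavoriteSites.exits true 0 b t (y - 1) := by
    simp only [hU, hSω, FavoriteSites.card_upcrossings_eq_exits, implies_true]
  refine (hN ω).trans (FavoriteSites.tsum_eq_top_of_frequently_one_le
    ((hfreq.and_eventually (Filter.eventually_ge_atTop 1)).mono ?_))
  rintro h ⟨⟨t, x, k, hx, hk, ht⟩, hh⟩
  have hTUω : TU (k + 1) x ω = t := by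
    simp only [hTU, hUω]
    exact ht.isLeast.csInf_eq
  have hAω : ω ∈ A x h k := by
    simp only [hA, hFav, hLω, Set.mem_ofPred_eq, hTUω]
    exact ⟨ht.1.setOf_favorite, by simpa using ht.1.2.1 x (Or.inl rfl)⟩
  refine le_trans ?_ ((ENNReal.le_tsum x).trans (ENNReal.le_tsum k))
  exact (if_pos ⟨hh, hx, (hinI h k).2 hk, hAω⟩).ge
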